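/- Let ν, δ ∈ ℕ with δ > 0 and let P ∈ ℤ[x₀, x₁, …, x_ν] have total degree at most δ. Then there exists a polynomial Q̃ ∈ ℤ[x₀, x₁, …, x₁₁] in eleven unknowns with total degree at most η(ν, δ) = 15616 + 233856·δ + 233952·δ·(2δ+1)^(ν+1) + 467712·δ²·(2δ+1)^(ν+1), such that for every a ∈ ℕ: there exist z₁, …, z_ν ∈ ℕ with P(a, z₁, …, z_ν) = 0 if and only if there exist z̃₁, …, z̃₁₁ ∈ ℤ with Q̃(a, z̃₁, …, z̃₁₁) = 0. -/

import Mathlib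

/-! Eleven integer unknowns suffice for every Diophantine condition on a natural number `a`.

The proof follows the method of Matiyasevich and Robinson.

*Coding.* Fix a square `b = (1 + 3 (2 a + 1) f)²`, which exceeds `a` when `f ≠ 0` and represents
arbitrarily large powers of four, put `h = 2^t b^δ` and let `β = 2 h` be the base of a positional
system. A tuple `z` with entries below `b` is stored in the single number
`g = ∑ z_i β^((δ+1)^(i+1))`. In the product of `(1 + a β + g)^δ` with a suitable polynomial `cdD` in
`β` whose coefficients are weighted coefficients of `P`, the power `β^((δ+1)^(ν+1))` has coefficient
`δ! P(a, z)`. If `b` is a power of two, then the condition that `g` is a code with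
`P(a, z) = 0` becomes the statement that two numbers `S` and `T`, polynomial in `a`, `f`, `g`, have no common binary one (`coding`). By
Kummer's theorem this means that `N²` divides `(2X).choose X` for an explicit `X`, where `N` is a
power of `β` larger than `S` and `T` (`dvd_central_iff_land`).

*Lucas sequences.* The two conditions, that `b` is a power of two and that `Y = N²` divides
`(2X).choose X`, are expressed through solutions of Pell equations. For `2 a' = U (V + 1)` and `2 c = U² V` the
quotient `y_{2X+1}(a') / y_{X+1}(c)` is close to `(V + 1)^(2X) / V^X`, whose polynomial part is
congruent to `(2X).choose X` modulo `V`; and a congruence modulo `4 a' - 5` recognises `2^(2X+1)`.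
The result (`bridge_backward`, `bridge_forward`) is a system of two conditions of being a square, one
divisibility and one inequality in the further unknowns `l`, `w`, `v`, `k`, `x`, `y`. That a single
number is the Lucas number of a given index is encoded in one square by `eq_yn_of_isSquare` and
`exists_isSquare_pDFI`.

*Combination.* All inequalities, including `0 ≤ g < β^cdN0` and `f, l, x ≠ 0`, are packed into the
positivity of one number (`mPos`), and `combine_iff` turns two squares, a divisibility and a
positivity into one equation with one new natural unknown `n`. Every natural number has the form
`u² + u + v² + v + w²` (`exists_three_of_nat`, a form of the three-squares theorem), and this form
takes only nonnegative values, so `n` costs three integer unknowns: with `f, g, v, k, l, w, x, y`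
there are eleven. The degree is bounded by following the construction (`deg_master`). -/

open MvPolynomial

/-- The degree bound `η(ν, δ)`. -/
def eta (ν δ : ℕ) : ℕ :=
  15616 + 233856 * δ + 233952 * δ * (2 * δ + 1) ^ (ν + 1)
    + 467712 * δ ^ 2 * (2 * δ + 1) ^ (ν + 1)

/-! ### Sums of three squares -/

/-- Centred residues: a multiple of `a` can be added to `t` to bring it into `[-a/2, a/2]`. -/
lemma exists_translate {a : ℤ} (ha : 0 < a) (t : ℤ) : ∃ k : ℤ, 4 * (t + a * k) ^ 2 ≤ a ^ 2 := by
  refine ⟨-((2 * t + a) / (2 * a)), ?_⟩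
  have h1 := Int.ediv_mul_le (2 * t + a) (b := 2 * a) (by omega)
  have h2 := Int.lt_ediv_add_one_mul_self (2 * t + a) (b := 2 * a) (by omega)
  have h3 : -a ≤ 2 * (t + a * -((2 * t + a) / (2 * a))) := by nlinarith
  have h4 : 2 * (t + a * -((2 * t + a) / (2 * a))) ≤ a := by nlinarith
  nlinarith

/-- Gauss reduction of a positive definite binary form `α y² + 2 β y z + γ z²`: a unimodular
change of variables makes the leading coefficient `g` at most `√(4 Δ / 3)`, where `Δ = α γ - β²`. -/
lemma binary_reduction (n : ℕ) : ∀ α β γ : ℤ, α = n → 0 < α → 0 < α * γ - β ^ 2 →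
    ∃ p q r s : ℤ, p * s - q * r = 1 ∧ 0 < α * p ^ 2 + 2 * β * p * q + γ * q ^ 2 ∧
      3 * (α * p ^ 2 + 2 * β * p * q + γ * q ^ 2) ^ 2 ≤ 4 * (α * γ - β ^ 2) := by
  induction n using Nat.strong_induction_on with
  | _ n ih =>
  intro α β γ hn hα hΔ
  -- translate `y` by a multiple of `z` so that the middle coefficient satisfies `2 |β'| ≤ α`
  obtain ⟨k, hβ2⟩ := exists_translate hα β
  set β' := β + α * k with hβ'
  set γ' := γ + 2 * β * k + α * k ^ 2 with hγ'
  have hΔ' : α * γ' - β' ^ 2 = α * γ - β ^ 2 := by rw [hβ', hγ']; ring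
  have hγpos : 0 < γ' := by
    by_contra h
    nlinarith [sq_nonneg β']
  by_cases hlt : γ' < α
  · -- the swapped form has the smaller leading coefficient `γ'`
    obtain ⟨p, q, r, s, h1, h2, h3⟩ := ih γ'.toNat (by omega) γ' (-β') α (by omega) hγpos
      (by nlinarith)
    have e : α * (-q + k * p) ^ 2 + 2 * β * (-q + k * p) * p + γ * p ^ 2
        = γ' * p ^ 2 + 2 * (-β') * p * q + α * q ^ 2 := by rw [hβ', hγ']; ring
    refine ⟨-q + k * p, p, -s + k * r, r, by linarith, ?_, ?_⟩
    · rw [e]; exact h2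
    · rw [e]; refine h3.trans (by linarith)
  · refine ⟨1, 0, 0, 1, by ring, by nlinarith, ?_⟩
    have : α * α ≤ α * γ' := mul_le_mul_of_nonneg_left (not_lt.mp hlt) hα.le
    nlinarith

/-- A positive definite integral binary form of determinant one takes only sums of two squares. -/
lemma binary_unimodular {α β γ : ℤ} (hα : 0 < α) (hΔ : α * γ - β ^ 2 = 1) (y z : ℤ) :
    ∃ u v : ℤ, α * y ^ 2 + 2 * β * y * z + γ * z ^ 2 = u ^ 2 + v ^ 2 := by
  obtain ⟨p, q, r, s, h1, h2, h3⟩ := binary_reduction α.toNat α β γ (by omega) hα (by omega)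
  rw [hΔ] at h3
  set g := α * p ^ 2 + 2 * β * p * q + γ * q ^ 2 with hg
  have hg1 : g = 1 := by nlinarith
  set m := α * p * r + β * (p * s + q * r) + γ * q * s with hm
  set c := α * r ^ 2 + 2 * β * r * s + γ * s ^ 2 with hc
  have hdet : g * c - m ^ 2 = 1 := by
    have : g * c - m ^ 2 = (α * γ - β ^ 2) * (p * s - q * r) ^ 2 := by rw [hg, hc, hm]; ring
    rw [this, hΔ, h1]; norm_num
  -- the new coordinates of `(y, z)` are `(s y - r z, p z - q y)`
  refine ⟨(s * y - r * z) + m * (p * z - q * y), p * z - q * y, ?_⟩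
  have e1 : α * y ^ 2 + 2 * β * y * z + γ * z ^ 2 =
      g * (s * y - r * z) ^ 2 + 2 * m * (s * y - r * z) * (p * z - q * y)
        + c * (p * z - q * y) ^ 2 := by
    have hy : y = p * (s * y - r * z) + r * (p * z - q * y) := by linear_combination (-y) * h1
    have hz : z = q * (s * y - r * z) + s * (p * z - q * y) := by linear_combination (-z) * h1
    set y' := s * y - r * z
    set z' := p * z - q * y
    rw [hy, hz, hg, hc, hm]; ring
  rw [hg1] at e1 hdet
  have : c = 1 + m ^ 2 := by linarith
  rw [e1, this]; ring

/-- Hermite reduction: a positive definite integral ternary form of determinant one takes only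
sums of three squares. The induction is on the leading coefficient `a`, which can be decreased
as long as `a ≥ 2`; for `a = 1` one completes the square. -/
lemma ternary_unimodular (n : ℕ) : ∀ a b c r s t : ℤ, a = n → 0 < a → 0 < a * b - t ^ 2 →
    a * b * c + 2 * r * s * t - a * r ^ 2 - b * s ^ 2 - c * t ^ 2 = 1 → ∀ x y z : ℤ,
    ∃ u v w : ℤ, a * x ^ 2 + b * y ^ 2 + c * z ^ 2 + 2 * r * y * z + 2 * s * x * z + 2 * t * x * y
      = u ^ 2 + v ^ 2 + w ^ 2 := by
  induction n using Nat.strong_induction_on with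
  | _ n ih =>
  intro a b c r s t hn ha hab hdet x y z
  have hG : (a * b - t ^ 2) * (a * c - s ^ 2) - (a * r - s * t) ^ 2 = a := by
    linear_combination a * hdet
  by_cases ha1 : a = 1
  · subst ha1
    obtain ⟨v, w, h⟩ := binary_unimodular (α := 1 * b - t ^ 2) (β := 1 * r - s * t)
      (γ := 1 * c - s ^ 2) hab hG y z
    exact ⟨x + t * y + s * z, v, w, by linear_combination h⟩
  obtain ⟨p, q, p', q', h1, h2, h3⟩ := binary_reduction (a * b - t ^ 2).toNat (a * b - t ^ 2)
    (a * r - s * t) (a * c - s ^ 2) (by omega) hab (by omega)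
  rw [hG] at h3
  obtain ⟨g, hg⟩ : ∃ v, v = (a * b - t ^ 2) * p ^ 2 + 2 * (a * r - s * t) * p * q + (a * c - s ^ 2) * q ^ 2 := ⟨_, rfl⟩
  rw [← hg] at h2 h3
  -- the coefficients after substituting `y = p y' + p' z'`, `z = q y' + q' z'`
  obtain ⟨t₁, ht₁⟩ : ∃ v, v = t * p + s * q := ⟨_, rfl⟩
  obtain ⟨s₁, hs₁⟩ : ∃ v, v = t * p' + s * q' := ⟨_, rfl⟩
  obtain ⟨b₁, hb₁⟩ : ∃ v, v = b * p ^ 2 + 2 * r * p * q + c * q ^ 2 := ⟨_, rfl⟩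
  obtain ⟨c₁, hc₁⟩ : ∃ v, v = b * p' ^ 2 + 2 * r * p' * q' + c * q' ^ 2 := ⟨_, rfl⟩
  obtain ⟨r₁, hr₁⟩ : ∃ v, v = b * p * p' + r * (p * q' + q * p') + c * q * q' := ⟨_, rfl⟩
  have hg' : a * b₁ - t₁ ^ 2 = g := by rw [hb₁, ht₁, hg]; ring
  have hdet₁ : a * b₁ * c₁ + 2 * r₁ * s₁ * t₁ - a * r₁ ^ 2 - b₁ * s₁ ^ 2 - c₁ * t₁ ^ 2 = 1 := by
    have : a * b₁ * c₁ + 2 * r₁ * s₁ * t₁ - a * r₁ ^ 2 - b₁ * s₁ ^ 2 - c₁ * t₁ ^ 2 =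
        (a * b * c + 2 * r * s * t - a * r ^ 2 - b * s ^ 2 - c * t ^ 2)
          * (p * q' - q * p') ^ 2 := by
      rw [ht₁, hs₁, hb₁, hc₁, hr₁]; ring
    rw [this, hdet, h1]; norm_num
  -- translate `x` so that `2 |t₂| ≤ a`
  obtain ⟨k, ht2⟩ := exists_translate ha t₁
  obtain ⟨t₂, ht₂⟩ : ∃ v, v = t₁ + a * k := ⟨_, rfl⟩
  obtain ⟨b₂, hb₂⟩ : ∃ v, v = b₁ + 2 * t₁ * k + a * k ^ 2 := ⟨_, rfl⟩
  obtain ⟨r₂, hr₂⟩ : ∃ v, v = r₁ + s₁ * k := ⟨_, rfl⟩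
  rw [← ht₂] at ht2
  have hg₂ : a * b₂ - t₂ ^ 2 = g := by rw [hb₂, ht₂, ← hg']; ring
  have hdet₂ : a * b₂ * c₁ + 2 * r₂ * s₁ * t₂ - a * r₂ ^ 2 - b₂ * s₁ ^ 2 - c₁ * t₂ ^ 2 = 1 := by
    rw [← hdet₁, hb₂, ht₂, hr₂]; ring
  have hb₂pos : 0 < b₂ := by
    by_contra h
    have := mul_nonpos_of_nonneg_of_nonpos ha.le (not_lt.mp h)
    linarith [sq_nonneg t₂]
  have hb₂lt : b₂ < a := by
    by_contra h
    have h5 : a * a ≤ a * b₂ := mul_le_mul_of_nonneg_left (not_lt.mp h) ha.le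
    have h6 : 3 * a ^ 2 ≤ 4 * g := by linarith [pow_two a]
    have h7 : 2 * a ≤ a ^ 2 := by rw [pow_two]; exact mul_le_mul_of_nonneg_right (by omega) ha.le
    have h8 : 3 * a ≤ 2 * g := by linarith
    have h9 : 3 ≤ g := by omega
    have h10 : 3 * g ≤ g * g := mul_le_mul_of_nonneg_right h9 h2.le
    rw [pow_two] at h3
    linarith
  -- swap `x` and `y`, making `b₂` the leading coefficient
  obtain ⟨u, v, w, h⟩ := ih b₂.toNat (by omega) b₂ a c₁ s₁ r₂ t₂ (by omega) hb₂pos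
    (by rw [mul_comm, hg₂]; exact h2) (by rw [← hdet₂]; ring) (q' * y - p' * z) (x - k * (q' * y - p' * z)) (p * z - q * y)
  refine ⟨u, v, w, ?_⟩
  rw [← h]
  have hy : y = p * (q' * y - p' * z) + p' * (p * z - q * y) := by linear_combination (-y) * h1
  have hz : z = q * (q' * y - p' * z) + q' * (p * z - q * y) := by linear_combination (-z) * h1
  set y' := q' * y - p' * z
  set z' := p * z - q * y
  rw [hy, hz, hb₂, hr₂, ht₂, hb₁, hc₁, hr₁, ht₁, hs₁]; ring

/-- Every `m ≡ 2 mod 4` is a sum of three squares. By Dirichlet's theorem there is a prime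
`p = d m - 1` with `d ≡ 1 mod 4`; then `-d` is a square modulo `p` by quadratic reciprocity, and
`m` is a value of a positive definite ternary form of determinant one. -/
lemma three_squares_of_mod_four {m : ℕ} (hm : m % 4 = 2) :
    ∃ u v w : ℤ, (m : ℤ) = u ^ 2 + v ^ 2 + w ^ 2 := by
  obtain ⟨p, hpgt, hp, hpm⟩ := Nat.forall_exists_prime_gt_and_modEq (4 * m) (q := 4 * m)
    (a := m - 1) (by omega) (by
      have h1 : Nat.Coprime (m - 1) m :=
        (Nat.coprime_self_sub_left (by omega : 1 ≤ m)).2 (Nat.coprime_one_left m)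
      have h2 : Nat.Coprime (m - 1) 4 :=
        Nat.Coprime.pow_right 2 (Nat.coprime_two_right.2 (by rw [Nat.odd_iff]; omega))
      exact Nat.Coprime.mul_right h2 h1)
  have := Fact.mk hp
  obtain ⟨j, hj⟩ : ∃ j, p = (m - 1) + 4 * m * j := by
    have : 4 * m ∣ p - (m - 1) := (Nat.modEq_iff_dvd' (by omega)).1 hpm.symm
    obtain ⟨j, hj⟩ := this
    exact ⟨j, by omega⟩
  set d := 4 * j + 1 with hd
  have hpd : p + 1 = d * m := by
    rw [hj, hd]; zify [(by omega : 1 ≤ m)]; ring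
  have hp4 : p % 4 = 1 := by
    rw [hj, mul_assoc, Nat.add_mul_mod_self_left]; omega
  have hd4 : d % 4 = 1 := by omega
  have hdodd : Odd d := by rw [Nat.odd_iff]; omega
  have hpodd : Odd p := by rw [Nat.odd_iff]; omega
  have hpmod : (p : ℤ) % d = (-1) % d := by
    refine Int.ModEq.symm ((Int.modEq_iff_dvd).2 ⟨m, ?_⟩)
    have : (p : ℤ) + 1 = d * m := by exact_mod_cast hpd
    linarith
  have hJ : jacobiSym (-(d : ℤ)) p = 1 := by
    rw [jacobiSym.neg _ hpodd, ZMod.χ₄_nat_one_mod_four hp4, one_mul,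
      ← jacobiSym.quadratic_reciprocity_one_mod_four hp4 hdodd, jacobiSym.mod_left,
      hpmod, ← jacobiSym.mod_left, jacobiSym.at_neg_one hdodd,
      ZMod.χ₄_nat_one_mod_four hd4]
  rw [← jacobiSym.legendreSym.to_jacobiSym] at hJ
  have hne : ((-(d : ℤ) : ℤ) : ZMod p) ≠ 0 := by
    intro h
    rw [(legendreSym.eq_zero_iff p _).2 h] at hJ
    exact zero_ne_one hJ
  obtain ⟨s', hs'⟩ := (legendreSym.eq_one_iff p hne).1 hJ
  obtain ⟨s, rfl⟩ := ZMod.intCast_surjective s'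
  obtain ⟨e, he⟩ : (p : ℤ) ∣ s ^ 2 + d := by
    rw [← ZMod.intCast_zmod_eq_zero_iff_dvd]
    push_cast at hs' ⊢
    rw [pow_two, ← hs']; ring
  have hppos : (0 : ℤ) < p := by exact_mod_cast hp.pos
  have hdpos : (0 : ℤ) < d := by exact_mod_cast (by omega : 0 < d)
  have hepos : 0 < e := by
    by_contra h
    nlinarith [sq_nonneg s]
  have hpdz : (p : ℤ) + 1 = d * m := by exact_mod_cast hpd
  obtain ⟨u, v, w, h⟩ := ternary_unimodular e.toNat e p m 0 1 s (by omega) hepos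
    (by nlinarith) (by linear_combination (-(m : ℤ)) * he - hpdz) 0 0 1
  exact ⟨u, v, w, by linear_combination h⟩

/-- Every natural number has the form `u² + u + v² + v + w²` with integers `u`, `v`, `w`. -/
lemma exists_three_of_nat (n : ℕ) : ∃ u v w : ℤ, (n : ℤ) = u ^ 2 + u + v ^ 2 + v + w ^ 2 := by
  obtain ⟨x, y, z, h⟩ := three_squares_of_mod_four (m := 4 * n + 2) (by omega)
  push_cast at h
  -- among three squares summing to `2 mod 4`, two are odd and one is even
  have key : ∀ x y z : ℤ, 4 * (n : ℤ) + 2 = x ^ 2 + y ^ 2 + z ^ 2 → x % 2 = 1 → y % 2 = 1 →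
      z % 2 = 0 → ∃ u v w : ℤ, (n : ℤ) = u ^ 2 + u + v ^ 2 + v + w ^ 2 := by
    intro x y z h hx hy hz
    refine ⟨x / 2, y / 2, z / 2, ?_⟩
    obtain ⟨x', rfl⟩ : ∃ x', x = 2 * x' + 1 := ⟨x / 2, by omega⟩
    obtain ⟨y', rfl⟩ : ∃ x', y = 2 * x' + 1 := ⟨y / 2, by omega⟩
    obtain ⟨z', rfl⟩ : ∃ x', z = 2 * x' := ⟨z / 2, by omega⟩
    rw [show (2 * x' + 1) / 2 = x' by omega, show (2 * y' + 1) / 2 = y' by omega,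
      show (2 * z') / 2 = z' by omega]
    linarith
  have sq : ∀ t : ℤ, (t % 2 = 0 ∧ t ^ 2 % 4 = 0) ∨ (t % 2 = 1 ∧ t ^ 2 % 4 = 1) := by
    intro t
    rcases Int.even_or_odd' t with ⟨k, rfl | rfl⟩
    · left; ring_nf; omega
    · right; ring_nf; omega
  rcases sq x with ⟨hx, hx2⟩ | ⟨hx, hx2⟩ <;> rcases sq y with ⟨hy, hy2⟩ | ⟨hy, hy2⟩ <;>
    rcases sq z with ⟨hz, hz2⟩ | ⟨hz, hz2⟩ <;> first
      | exact key x y z h hx hy hz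
      | exact key x z y (by linarith) hx hz hy
      | exact key y z x (by linarith) hy hz hx
      | omega

/-! ### Combining two squares, a divisibility and an inequality into one equation -/

/-- The relation-combining polynomial. With `X = 1 + A₁² + A₂²` and `m = S² (2 P - 1)` it is the
product of the four factors `S² n + T² - m (T² + X² ± √A₁ ± √A₂ X)`, written out without roots. -/
def combine {R : Type*} [CommRing R] (A₁ A₂ S T P n : R) : R :=
  (S ^ 2 * n + T ^ 2 - S ^ 2 * (2 * P - 1) * (T ^ 2 + (1 + A₁ ^ 2 + A₂ ^ 2) ^ 2)) ^ 4
    - 2 * ((S ^ 2 * (2 * P - 1)) ^ 2 * A₁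
        + (S ^ 2 * (2 * P - 1)) ^ 2 * A₂ * (1 + A₁ ^ 2 + A₂ ^ 2) ^ 2)
      * (S ^ 2 * n + T ^ 2 - S ^ 2 * (2 * P - 1) * (T ^ 2 + (1 + A₁ ^ 2 + A₂ ^ 2) ^ 2)) ^ 2
    + ((S ^ 2 * (2 * P - 1)) ^ 2 * A₁
        - (S ^ 2 * (2 * P - 1)) ^ 2 * A₂ * (1 + A₁ ^ 2 + A₂ ^ 2) ^ 2) ^ 2

lemma isSquare_of_sq_mul {m u A : ℤ} (hm : m ≠ 0) (h : m ^ 2 * A = u ^ 2) : IsSquare A := by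
  obtain ⟨v, rfl⟩ : m ∣ u := (Int.pow_dvd_pow_iff two_ne_zero).1 ⟨A, h.symm⟩
  refine ⟨v, ?_⟩
  have hm2 : m ^ 2 ≠ 0 := pow_ne_zero 2 hm
  apply mul_left_cancel₀ hm2
  rw [h]; ring

/-- If the product of the factors `t ± m √A ± m √B X` vanishes, then `A` and `B` are squares.
For `t = 0` the size of `X` forces `A = B = 0`. -/
lemma isSquare_of_norm_eq_zero {t m A B X : ℤ} (hm : m ≠ 0) (hX : X = 1 + A ^ 2 + B ^ 2)
    (h : t ^ 4 - 2 * (m ^ 2 * A + m ^ 2 * B * X ^ 2) * t ^ 2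
      + (m ^ 2 * A - m ^ 2 * B * X ^ 2) ^ 2 = 0) : IsSquare A ∧ IsSquare B := by
  have hXpos : 1 ≤ X := by nlinarith [sq_nonneg A, sq_nonneg B]
  by_cases ht : t = 0
  · subst ht
    have hm2 : m ^ 2 ≠ 0 := pow_ne_zero 2 hm
    have h1 : (m ^ 2 * (A - B * X ^ 2)) ^ 2 = 0 := by linear_combination h
    have h2 : A = B * X ^ 2 := by
      have := (mul_eq_zero.1 (pow_eq_zero_iff two_ne_zero |>.1 h1)).resolve_left hm2
      linarith
    have hB : B = 0 := by
      by_contra hB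
      have hB1 : 1 ≤ B ^ 2 := by have := sq_nonneg B; have := pow_ne_zero 2 hB; omega
      have hA : A ^ 2 = B ^ 2 * X ^ 2 * X ^ 2 := by rw [h2]; ring
      have h3 : X ≤ X ^ 2 := by nlinarith
      have h4 : X ^ 2 ≤ X ^ 2 * X ^ 2 := by nlinarith
      have h5 : X ^ 2 * X ^ 2 ≤ B ^ 2 * (X ^ 2 * X ^ 2) := by nlinarith [sq_nonneg (X ^ 2)]
      nlinarith
    subst hB
    exact ⟨⟨0, by rw [h2]; ring⟩, ⟨0, by ring⟩⟩
  · have h2tm : 2 * t * m ≠ 0 := by positivity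
    constructor
    · exact isSquare_of_sq_mul (u := t ^ 2 + m ^ 2 * A - m ^ 2 * B * X ^ 2) h2tm
        (by linear_combination -h)
    · exact isSquare_of_sq_mul (m := 2 * t * m * X)
        (u := t ^ 2 - m ^ 2 * A + m ^ 2 * B * X ^ 2) (by positivity) (by linear_combination -h)

lemma norm_factorization (t m r s X : ℤ) :
    t ^ 4 - 2 * (m ^ 2 * (r * r) + m ^ 2 * (s * s) * X ^ 2) * t ^ 2
      + (m ^ 2 * (r * r) - m ^ 2 * (s * s) * X ^ 2) ^ 2
    = (t - m * r - m * s * X) * (t - m * r + m * s * X) *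
          ((t + m * r - m * s * X) * (t + m * r + m * s * X)) := by ring

/-- Relation combining. One of the four factors vanishes exactly when
`n = (2 P - 1) (T² + X² ± √A₁ ± √A₂ X) - (T / S)²`, which forces `S ∣ T`; the size of `X` keeps the
second bracket positive, so `n ≥ 0` forces `P > 0`. Conversely the choice of both signs positive
gives a natural `n`. -/
lemma combine_iff {A₁ A₂ S T P : ℤ} (hS : S ≠ 0) :
    (∃ n : ℕ, combine A₁ A₂ S T P (n : ℤ) = 0) ↔
      IsSquare A₁ ∧ IsSquare A₂ ∧ S ∣ T ∧ 0 < P := by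
  have hS2 : S ^ 2 ≠ 0 := pow_ne_zero 2 hS
  have hS2pos : 0 < S ^ 2 := by positivity
  have hm : S ^ 2 * (2 * P - 1) ≠ 0 := mul_ne_zero hS2 (by omega)
  constructor
  · rintro ⟨n, hn⟩
    obtain ⟨⟨r, hr⟩, ⟨s, hs⟩⟩ := isSquare_of_norm_eq_zero hm rfl hn
    refine ⟨⟨r, hr⟩, ⟨s, hs⟩, ?_⟩
    -- one of the four factors vanishes
    obtain ⟨r', s', hr', hs', h0⟩ : ∃ r' s' : ℤ, A₁ = r' * r' ∧ A₂ = s' * s' ∧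
        S ^ 2 * n + T ^ 2 = S ^ 2 * (2 * P - 1) *
          (T ^ 2 + (1 + A₁ ^ 2 + A₂ ^ 2) ^ 2 + r' + s' * (1 + A₁ ^ 2 + A₂ ^ 2)) := by
      unfold combine at hn
      generalize hX : 1 + A₁ ^ 2 + A₂ ^ 2 = X at hn ⊢
      rw [hr, hs, norm_factorization] at hn
      rcases mul_eq_zero.1 hn with h | h <;> rcases mul_eq_zero.1 h with h | h
      · exact ⟨r, s, hr, hs, by linarith⟩
      · exact ⟨r, -s, hr, by rw [hs]; ring, by linarith⟩
      · exact ⟨-r, s, by rw [hr]; ring, hs, by linarith⟩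
      · exact ⟨-r, -s, by rw [hr]; ring, by rw [hs]; ring, by linarith⟩
    constructor
    · refine (Int.pow_dvd_pow_iff two_ne_zero).1 ⟨(2 * P - 1) *
          (T ^ 2 + (1 + A₁ ^ 2 + A₂ ^ 2) ^ 2 + r' + s' * (1 + A₁ ^ 2 + A₂ ^ 2)) - n, ?_⟩
      linear_combination h0
    · by_contra hP
      have hfac : 0 < T ^ 2 + (1 + A₁ ^ 2 + A₂ ^ 2) ^ 2 + r' + s' * (1 + A₁ ^ 2 + A₂ ^ 2) := by
        have hr1 : -r' ≤ A₁ ^ 2 := by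
          rw [hr']
          rcases le_or_gt 0 r' with h | h
          · have := sq_nonneg (r' * r'); omega
          · nlinarith [mul_pos_of_neg_of_neg h h]
        have hs1 : -s' ≤ A₂ ^ 2 := by
          rw [hs']
          rcases le_or_gt 0 s' with h | h
          · have := sq_nonneg (s' * s'); omega
          · nlinarith [mul_pos_of_neg_of_neg h h]
        have hX1 : 1 ≤ 1 + A₁ ^ 2 + A₂ ^ 2 := by nlinarith [sq_nonneg A₁, sq_nonneg A₂]
        have hX2 : 1 + A₁ ^ 2 ≤ 1 + A₁ ^ 2 + A₂ ^ 2 + s' := by linarith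
        have hX3 : (1 + A₁ ^ 2) * 1 ≤ (1 + A₁ ^ 2 + A₂ ^ 2 + s') * (1 + A₁ ^ 2 + A₂ ^ 2) :=
          mul_le_mul hX2 hX1 zero_le_one (by nlinarith [sq_nonneg A₁])
        nlinarith [sq_nonneg T]
      have h1 : 0 ≤ S ^ 2 * (n : ℤ) + T ^ 2 := by positivity
      rw [h0] at h1
      have h2 : S ^ 2 * (2 * P - 1) < 0 := mul_neg_of_pos_of_neg hS2pos (by omega)
      nlinarith
  · rintro ⟨⟨r, hr⟩, ⟨s, hs⟩, ⟨d, hd⟩, hP⟩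
    -- the factor with both signs positive vanishes for this `n`
    obtain ⟨n, hn⟩ : ∃ n : ℕ, (n : ℤ) = (2 * P - 1) * (T ^ 2 + (1 + A₁ ^ 2 + A₂ ^ 2) ^ 2
        + |r| + |s| * (1 + A₁ ^ 2 + A₂ ^ 2)) - d ^ 2 := by
      refine ⟨_, (Int.toNat_of_nonneg ?_)⟩
      have h1 : d ^ 2 ≤ T ^ 2 := by
        rw [hd, mul_pow]; nlinarith [sq_nonneg d]
      have h2 : 0 ≤ (1 + A₁ ^ 2 + A₂ ^ 2) ^ 2 + |r| + |s| * (1 + A₁ ^ 2 + A₂ ^ 2) := by positivity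
      nlinarith [sq_nonneg T]
    refine ⟨n, ?_⟩
    have hr' : A₁ = |r| * |r| := by rw [hr, abs_mul_abs_self]
    have hs' : A₂ = |s| * |s| := by rw [hs, abs_mul_abs_self]
    unfold combine
    rw [hn]
    generalize 1 + A₁ ^ 2 + A₂ ^ 2 = X
    generalize 2 * P - 1 = m
    have e : S ^ 2 * (m * (T ^ 2 + X ^ 2 + |r| + |s| * X) - d ^ 2) + T ^ 2
        - S ^ 2 * m * (T ^ 2 + X ^ 2) = S ^ 2 * m * (|r| + |s| * X) := by rw [hd]; ring
    rw [e, hr', hs', norm_factorization]; ring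

/-! ### The Pell equation and Lucas sequences -/

open Pell in
lemma xn_sq {a : ℕ} (a1 : 1 < a) (n : ℕ) :
    ((xn a1 n : ℕ) : ℤ) ^ 2 = ((a : ℤ) ^ 2 - 1) * (yn a1 n : ℤ) ^ 2 + 1 := by
  have h := pell_eqz a1 n
  rw [dz_val] at h
  simp only [az, xz, yz] at h
  linear_combination h

open Pell in
/-- The integers `y` for which `(a² - 1) y² + 1` is a square are, up to sign, the values of the
sequence `yn`. -/
lemma pell_of_isSquare {a : ℕ} (a1 : 1 < a) {y : ℤ} (h : IsSquare (((a : ℤ) ^ 2 - 1) * y ^ 2 + 1)) :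
    ∃ n, y.natAbs = yn a1 n := by
  obtain ⟨r, hr⟩ := h
  have : ∃ d', d' = a * a - 1 ∧ ∀ x y : ℕ, x * x - d' * y * y = 1 →
      ∃ n, x = xn a1 n ∧ y = yn a1 n := by
    refine ⟨_, ?_, fun x y h => eq_pell a1 h⟩
    have h2 := dz_val a1
    simp only [az] at h2
    zify [(by nlinarith : 1 ≤ a * a)]
    exact h2
  obtain ⟨d', hd', key⟩ := this
  obtain ⟨n, -, hn⟩ := key r.natAbs y.natAbs (by
    have h1 : (1 : ℕ) ≤ a * a := by nlinarith
    have h2 : r.natAbs * r.natAbs = d' * y.natAbs * y.natAbs + 1 := by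
      rw [hd']
      zify [h1]
      rw [← abs_mul, mul_assoc, ← abs_mul, abs_of_nonneg (mul_self_nonneg r),
        abs_of_nonneg (mul_self_nonneg y)]
      linear_combination -hr
    omega)
  exact ⟨n, hn⟩

open Pell in
lemma yn_modEq_sub_one {a : ℕ} (a1 : 1 < a) (n : ℕ) : (a : ℤ) - 1 ∣ (yn a1 n : ℤ) - n := by
  have h := (yn_modEq_a_sub_one a1 n).symm
  have h2 := (Nat.modEq_iff_dvd).1 h
  rwa [Nat.cast_sub a1.le, Nat.cast_one] at h2

open Pell in
/-- Two solutions of the Pell equation whose `y`-values have equal squares modulo `x_m` have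
indices that agree up to sign modulo `2 m`. -/
lemma index_of_sq_modEq {a : ℕ} (a1 : 1 < a) {n s m : ℕ} (hn : 0 < n) (hnm : 2 * n ≤ m)
    (h : (xn a1 m : ℤ) ∣ (yn a1 s : ℤ) ^ 2 - (yn a1 n : ℤ) ^ 2) :
    (2 * m : ℤ) ∣ s - n ∨ (2 * m : ℤ) ∣ s + n := by
  -- `x_{2k} = 2 x_k² - 1`, so the doubled indices can be compared through the `x`-values
  have hx2 : ∀ k, (xn a1 (2 * k) : ℤ) = 2 * ((a : ℤ) ^ 2 - 1) * (yn a1 k : ℤ) ^ 2 + 1 := by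
    intro k
    have h1 := xn_add a1 k k
    zify at h1
    rw [two_mul, h1, dz_val]
    have := xn_sq a1 k
    simp only [az]
    linear_combination this
  have h1 : xn a1 (2 * s) ≡ xn a1 (2 * n) [MOD xn a1 m] := by
    refine (Nat.modEq_iff_dvd.2 ?_).symm
    rw [hx2, hx2]
    obtain ⟨c, hc⟩ := h
    exact ⟨2 * ((a : ℤ) ^ 2 - 1) * c, by linear_combination 2 * ((a : ℤ) ^ 2 - 1) * hc⟩
  rcases modEq_of_xn_modEq a1 (by omega) hnm h1 with h2 | h2
  · left
    obtain ⟨c, hc⟩ := (Nat.modEq_iff_dvd.1 h2.symm)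
    push_cast at hc
    exact ⟨c, by linarith⟩
  · right
    obtain ⟨c, hc⟩ := (Nat.modEq_zero_iff_dvd.1 h2)
    zify at hc
    exact ⟨c, by linarith⟩

/-! ### One square characterising `C = y_B(a)` -/

section PellPolynomials

variable {R : Type*} [CommRing R]

/-- `D`, a square exactly when `|C|` is a value of the sequence `yn` of parameter `a`. -/
def pD (a C : R) : R := (a ^ 2 - 1) * C ^ 2 + 1

/-- `E`, a multiple of `C²` and of `D`. -/
def pE (a C x : R) : R := 2 * C ^ 2 * pD a C * x

/-- `F`, the square of an `x`-value of parameter `a` when `|E|` is the corresponding `y`-value. -/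
def pF (a C x : R) : R := (a ^ 2 - 1) * pE a C x ^ 2 + 1

/-- `G`, an auxiliary Pell parameter with `G ≡ a mod F` and `G ≡ 1 mod 2 C` and `mod D`. -/
def pG (a C x : R) : R := a + pF a C x * (2 * C ^ 2 * pD a C + 1 - a)

/-- `H`, congruent to `C` modulo `F` and to `B` modulo `2 C`. -/
def pH (a B C x y : R) : R := C + (B + (2 * y - 1) * C) * pF a C x

/-- `I`, a square exactly when `|H|` is a value of the sequence `yn` of parameter `G`. -/
def pI (a B C x y : R) : R := (pG a C x ^ 2 - 1) * pH a B C x y ^ 2 + 1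

/-- The product `D F I` of three pairwise coprime factors. -/
def pDFI (a B C x y : R) : R := pD a C * pF a C x * pI a B C x y

lemma two_mul_dvd_pF_sub_one (a C x : R) : 2 * C ∣ pF a C x - 1 :=
  ⟨(a ^ 2 - 1) * C * pD a C * x * pE a C x, by unfold pF; simp only [pE]; ring⟩

lemma pD_dvd_pF_sub_one (a C x : R) : pD a C ∣ pF a C x - 1 :=
  ⟨(a ^ 2 - 1) * 2 * C ^ 2 * x * pE a C x, by unfold pF; simp only [pE]; ring⟩

lemma pF_dvd_pG_sub (a C x : R) : pF a C x ∣ pG a C x - a :=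
  ⟨2 * C ^ 2 * pD a C + 1 - a, by unfold pG; ring⟩

lemma two_mul_dvd_pG_sub_one (a C x : R) : 2 * C ∣ pG a C x - 1 := by
  obtain ⟨c, hc⟩ := two_mul_dvd_pF_sub_one a C x
  refine ⟨c * (2 * C ^ 2 * pD a C + 1 - a) + C * pD a C, ?_⟩
  unfold pG
  linear_combination (2 * C ^ 2 * pD a C + 1 - a) * hc

lemma pD_dvd_pG_sub_one (a C x : R) : pD a C ∣ pG a C x - 1 := by
  obtain ⟨c, hc⟩ := pD_dvd_pF_sub_one a C x
  refine ⟨c * (2 * C ^ 2 * pD a C + 1 - a) + 2 * C ^ 2, ?_⟩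
  unfold pG
  linear_combination (2 * C ^ 2 * pD a C + 1 - a) * hc

lemma pF_dvd_pH_sub (a B C x y : R) : pF a C x ∣ pH a B C x y - C :=
  ⟨B + (2 * y - 1) * C, by unfold pH; ring⟩

lemma two_mul_dvd_pH_sub (a B C x y : R) : 2 * C ∣ pH a B C x y - B := by
  obtain ⟨c, hc⟩ := two_mul_dvd_pF_sub_one a C x
  refine ⟨c * (B + (2 * y - 1) * C) + y, ?_⟩
  unfold pH
  linear_combination (B + (2 * y - 1) * C) * hc

lemma isCoprime_pD_pF (a C x : R) : IsCoprime (pD a C) (pF a C x) := by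
  obtain ⟨c, hc⟩ := pD_dvd_pF_sub_one a C x
  exact ⟨-c, 1, by linear_combination hc⟩

lemma isCoprime_pD_pI (a B C x y : R) : IsCoprime (pD a C) (pI a B C x y) := by
  obtain ⟨c, hc⟩ := pD_dvd_pG_sub_one a C x
  refine ⟨-(c * (pG a C x + 1) * pH a B C x y ^ 2), 1, ?_⟩
  unfold pI
  linear_combination (pG a C x + 1) * pH a B C x y ^ 2 * hc

/-- Modulo `F` one has `I ≡ D`. -/
lemma isCoprime_pF_pI (a B C x y : R) : IsCoprime (pF a C x) (pI a B C x y) := by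
  obtain ⟨c, hc⟩ := pF_dvd_pG_sub a C x
  obtain ⟨d, hd⟩ := pF_dvd_pH_sub a B C x y
  have h : pI a B C x y = pD a C + pF a C x * (c * (pG a C x + a) * pH a B C x y ^ 2
      + (a ^ 2 - 1) * d * (pH a B C x y + C)) := by
    unfold pI
    rw [show pD a C = (a ^ 2 - 1) * C ^ 2 + 1 from rfl]
    linear_combination (pG a C x + a) * pH a B C x y ^ 2 * hc
      + (a ^ 2 - 1) * (pH a B C x y + C) * hd
  rw [h]
  exact (isCoprime_pD_pF a C x).symm.add_mul_left_right _

end PellPolynomials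

lemma isSquare_of_isCoprime_mul {u v : ℤ} (hu : 0 < u) (hc : IsCoprime u v)
    (h : IsSquare (u * v)) : IsSquare u := by
  obtain ⟨r, hr⟩ := h
  obtain ⟨s, hs | hs⟩ := Int.sq_of_isCoprime hc (by rw [hr]; ring)
  · exact ⟨s, by rw [hs]; ring⟩
  · nlinarith [sq_nonneg s]

lemma lt_pG {a C x : ℤ} (ha : 1 < a) (hC : C ≠ 0) : a < pG a C x := by
  have h2 : 1 ≤ C ^ 2 := by have := sq_nonneg C; have := pow_ne_zero 2 hC; omega
  have ha2 : 0 < a ^ 2 - 1 := by nlinarith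
  have hF : 0 < pF a C x := by unfold pF; positivity
  have h1 : a - 1 < pD a C := by unfold pD; nlinarith
  have h3 : 0 < 2 * C ^ 2 * pD a C + 1 - a := by nlinarith
  have := mul_pos hF h3
  unfold pG; linarith

/-- The three factors `D`, `F`, `I` are positive and pairwise coprime, so if their product is a
square then each of them is one. -/
lemma isSquare_pDFI {a B C x y : ℤ} (ha : 1 < a) (h : IsSquare (pDFI a B C x y)) (hC : C ≠ 0) :
    IsSquare (pD a C) ∧ IsSquare (pF a C x) ∧ IsSquare (pI a B C x y) ∧ a < pG a C x := by
  have ha2 : 0 < a ^ 2 - 1 := by nlinarith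
  have hD : 0 < pD a C := by unfold pD; positivity
  have hF : 0 < pF a C x := by unfold pF; positivity
  have hG : a < pG a C x := lt_pG ha hC
  have hI : 0 < pI a B C x y := by
    have : 0 < pG a C x ^ 2 - 1 := by nlinarith
    unfold pI; positivity
  have c1 := isCoprime_pD_pF a C x
  have c2 := isCoprime_pD_pI a B C x y
  have c3 := isCoprime_pF_pI a B C x y
  unfold pDFI at h
  refine ⟨?_, ?_, ?_, hG⟩
  · exact isSquare_of_isCoprime_mul hD (c1.mul_right c2) (by rwa [← mul_assoc])
  · exact isSquare_of_isCoprime_mul hF (c1.symm.mul_right c3)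
      (by rwa [← mul_assoc, mul_comm (pF a C x)])
  · exact isSquare_of_isCoprime_mul hI (c2.symm.mul_right c3.symm) (by rwa [mul_comm])

lemma eq_or_of_dvd_sub_or_add {B n c : ℤ} (hB : 1 ≤ B) (hBc : B ≤ c) (hn : 1 ≤ n) (hnc : n ≤ c)
    (h : 2 * c ∣ B - n ∨ 2 * c ∣ B + n) : B = n := by
  rcases h with ⟨k, hk⟩ | ⟨k, hk⟩
  · have h1 : k < 1 := by nlinarith
    have h2 : -1 < k := by nlinarith
    have : k = 0 := by omega
    rw [this] at hk; linarith
  · have h1 : k < 2 := by nlinarith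
    have h2 : 0 < k := by nlinarith
    have : k = 1 := by omega
    rw [this] at hk; linarith

open Pell in
/-- If `D F I` is a square then `C = y_B(a)`, where `C` is written as `B + (a - 1) h`. The square
`D` makes `|C|` some `y_n(a)`; the squares `F` and `I` provide a third solution `|H| = y_s(G)`,
which ties `s` to `n` modulo `2 C` through the modulus `F` and to `B` modulo `2 C` through `G ≡ 1`. -/
lemma eq_yn_of_isSquare {a : ℕ} (a1 : 1 < a) {B h x y : ℤ} (hB : 1 ≤ B) (hBa : 2 * B < a - 1)
    (hx : x ≠ 0) (hsq : IsSquare (pDFI (a : ℤ) B (B + (a - 1) * h) x y)) :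
    B + (a - 1) * h = yn a1 B.toNat := by
  set C := B + (a - 1) * h with hC
  have hBC : B ≤ |C| := by
    rcases lt_trichotomy h 0 with h0 | h0 | h0
    · rw [le_abs]; right; nlinarith
    · rw [hC, h0]; simp [le_abs]
    · rw [le_abs]; left; nlinarith
  have hC0 : C ≠ 0 := by intro h0; rw [h0] at hBC; simp at hBC; omega
  have haz : (1 : ℤ) < a := by exact_mod_cast a1
  obtain ⟨hD, hF, hI, hG⟩ := isSquare_pDFI haz hsq hC0
  obtain ⟨g, hg⟩ : ∃ g : ℕ, pG (a : ℤ) C x = g := ⟨_, (Int.toNat_of_nonneg (by omega)).symm⟩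
  have g1 : 1 < g := by zify; rw [← hg]; omega
  obtain ⟨n, hn⟩ := pell_of_isSquare a1 hD
  obtain ⟨m, hm⟩ := pell_of_isSquare a1 hF
  have hI' := hI
  unfold pI at hI'
  rw [hg] at hI'
  obtain ⟨s, hs⟩ := pell_of_isSquare g1 hI'
  have hCn : |C| = yn a1 n := by rw [← hn]; exact (Int.natCast_natAbs C).symm
  have hC2 : C ^ 2 = (yn a1 n : ℤ) ^ 2 := by rw [← hCn, sq_abs]
  have hH2 : pH (a : ℤ) B C x y ^ 2 = (yn g1 s : ℤ) ^ 2 := by rw [← hs, Int.natCast_natAbs, sq_abs]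
  have hFx : pF (a : ℤ) C x = (xn a1 m : ℤ) ^ 2 := by
    rw [xn_sq, ← hm, Int.natCast_natAbs, sq_abs]; rfl
  have hn0 : 0 < n := by
    rcases Nat.eq_zero_or_pos n with h0 | h0
    · rw [h0] at hn; simp at hn; exact absurd hn hC0
    · exact h0
  have hnat : (n : ℤ) ≤ |C| := by rw [hCn]; exact_mod_cast yn_ge_n a1 n
  have hDx : pD (a : ℤ) C = (xn a1 n : ℤ) ^ 2 := by
    rw [xn_sq, ← hC2]; rfl
  -- divisibilities between the indices, coming from `C² ∣ E`
  have hEne : pE (a : ℤ) C x ≠ 0 := by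
    have : pD (a : ℤ) C ≠ 0 := by
      rw [hDx]; exact pow_ne_zero 2 (by exact_mod_cast (x_pos a1 n).ne')
    unfold pE; positivity
  have hm0 : 0 < m := by
    rcases Nat.eq_zero_or_pos m with h0 | h0
    · rw [h0] at hm; simp at hm; exact absurd hm hEne
    · exact h0
  have hyy : yn a1 n * yn a1 n ∣ yn a1 m := by
    rw [← hm, ← hn, ← Int.natAbs_mul, Int.natAbs_dvd_natAbs]
    exact ⟨2 * pD (a : ℤ) C * x, by unfold pE; ring⟩
  have hym : yn a1 n ∣ m := dvd_of_ysq_dvd a1 hyy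
  have hnm : n ∣ m := (y_dvd_iff a1 n m).1 ((dvd_mul_right _ _).trans hyy)
  have hmn : 2 * n ≤ m := by
    obtain ⟨c, rfl⟩ := hnm
    rcases Nat.lt_or_ge c 2 with hc | hc
    · exfalso
      have hc1 : c = 1 := by
        have : c ≠ 0 := by rintro rfl; simp at hm0
        omega
      rw [hc1, mul_one] at hm
      -- `|E| ≥ 2 |C|` contradicts `|E| = y_n = |C|`
      have h1 : 2 * |C| ≤ |pE (a : ℤ) C x| := by
        have h2 : (1 : ℤ) ≤ |C * pD (a : ℤ) C * x| := by
          apply Int.one_le_abs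
          intro h0
          apply hEne
          rw [show pE (a : ℤ) C x = 2 * C * (C * pD (a : ℤ) C * x) by unfold pE; ring, h0, mul_zero]
        rw [show pE (a : ℤ) C x = 2 * C * (C * pD (a : ℤ) C * x) by unfold pE; ring, abs_mul,
          abs_mul 2 C]
        simp only [Nat.abs_ofNat]
        nlinarith [abs_nonneg C]
      have h3 : |pE (a : ℤ) C x| = |C| := by
        rw [hCn, ← hm]; exact (Int.natCast_natAbs _).symm
      omega
    · nlinarith
  -- comparison modulo `F`
  have hys : (xn a1 m : ℤ) ∣ (yn a1 s : ℤ) ^ 2 - (yn a1 n : ℤ) ^ 2 := by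
    have hxF : (xn a1 m : ℤ) ∣ pF (a : ℤ) C x := by rw [hFx]; exact dvd_pow_self _ two_ne_zero
    have h1 : (xn a1 m : ℤ) ∣ (g : ℤ) - a := by rw [← hg]; exact hxF.trans (pF_dvd_pG_sub _ _ _)
    have h2 : (xn a1 m : ℤ) ∣ (yn g1 s : ℤ) - yn a1 s :=
      Nat.modEq_iff_dvd.1 (xy_modEq_of_modEq a1 g1 (Nat.modEq_iff_dvd.2 h1) s).2
    have h3 : (xn a1 m : ℤ) ∣ pH (a : ℤ) B C x y ^ 2 - C ^ 2 := by
      rw [sq_sub_sq]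
      exact (hxF.trans (pF_dvd_pH_sub _ _ _ _ _)).mul_left _
    rw [hH2, hC2] at h3
    have h4 : (xn a1 m : ℤ) ∣ (yn g1 s : ℤ) ^ 2 - (yn a1 s : ℤ) ^ 2 := by
      rw [sq_sub_sq]; exact h2.mul_left _
    have := dvd_sub h3 h4
    rwa [sub_sub_sub_cancel_left] at this
  have h2C : 2 * |C| ∣ 2 * m := by
    rw [hCn]; exact mul_dvd_mul_left 2 (by exact_mod_cast hym)
  have hsn : 2 * |C| ∣ s - n ∨ 2 * |C| ∣ s + n :=
    (index_of_sq_modEq a1 hn0 hmn hys).imp h2C.trans h2C.trans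
  -- comparison modulo `2 C`
  have h2C' : 2 * |C| ∣ 2 * C := mul_dvd_mul_left 2 (abs_dvd_self C)
  have hys2 : 2 * |C| ∣ (yn g1 s : ℤ) - s := by
    have h1 : 2 * |C| ∣ (g : ℤ) - 1 := by
      rw [← hg]; exact h2C'.trans (two_mul_dvd_pG_sub_one _ _ _)
    exact h1.trans (yn_modEq_sub_one g1 s)
  have hHB : 2 * |C| ∣ pH (a : ℤ) B C x y - B := h2C'.trans (two_mul_dvd_pH_sub _ _ _ _ _)
  have hHabs : pH (a : ℤ) B C x y = yn g1 s ∨ pH (a : ℤ) B C x y = -yn g1 s := by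
    rw [← hs]; exact Int.natAbs_eq _
  have hBn : B = n := by
    apply eq_or_of_dvd_sub_or_add hB hBC (by exact_mod_cast hn0) hnat
    rcases hHabs with hH | hH <;> rw [hH] at hHB
    · have h1 : 2 * |C| ∣ s - B := by
        have := dvd_sub hHB hys2
        rwa [sub_sub_sub_cancel_left] at this
      rcases hsn with h2 | h2
      · left
        have := dvd_sub h2 h1
        rwa [sub_sub_sub_cancel_left] at this
      · right
        have := dvd_sub h2 h1
        rwa [show (s : ℤ) + n - (s - B) = B + n by ring] at this
    · have h1 : 2 * |C| ∣ s + B := by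
        have := dvd_add hHB hys2
        rw [← dvd_neg]
        rwa [show -(yn g1 s : ℤ) - B + (yn g1 s - s) = -(s + B) by ring] at this
      rcases hsn with h2 | h2
      · right
        have := dvd_sub h1 h2
        rwa [show (s : ℤ) + B - (s - n) = B + n by ring] at this
      · left
        have := dvd_sub h1 h2
        rwa [show (s : ℤ) + B - (s + n) = B - n by ring] at this
  have hBnat : B.toNat = n := by omega
  rw [hBnat, ← hCn]
  refine (abs_of_pos ?_).symm
  -- the sign of `C` is determined by `C ≡ B mod (a - 1)`
  by_contra hneg
  have hneg' : C < 0 := lt_of_le_of_ne (not_lt.1 hneg) hC0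
  have h1 := yn_modEq_sub_one a1 n
  rw [← hCn, abs_of_neg hneg', ← hBn] at h1
  have h2 : (a : ℤ) - 1 ∣ 2 * B := by
    have h3 : (a : ℤ) - 1 ∣ C - B := ⟨h, by rw [hC]; ring⟩
    have := dvd_add h1 h3
    rw [← dvd_neg]
    rwa [show -C - B + (C - B) = -(2 * B) by ring] at this
  have := Int.le_of_dvd (by omega) h2
  omega

open Pell in
/-- Conversely, for `C = y_B(a)` the unknowns `x ≠ 0` and `y` can be chosen so that `D F I` is a
square: take for `E` a `y`-value whose index is a suitable multiple of `B`, set `H = y_B(G)`, and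
solve for `y` by the Chinese remainder theorem. -/
lemma exists_isSquare_pDFI {a : ℕ} (a1 : 1 < a) {B : ℕ} (hB : 0 < B) :
    ∃ x y : ℤ, x ≠ 0 ∧ IsSquare (pDFI (a : ℤ) B (yn a1 B) x y) := by
  obtain ⟨C, hC⟩ : ∃ C : ℤ, C = yn a1 B := ⟨_, rfl⟩
  rw [← hC]
  have hCpos : 0 < C := by
    rw [hC]; exact_mod_cast hB.trans_le (yn_ge_n a1 B)
  have hDx : pD (a : ℤ) C = (xn a1 B : ℤ) ^ 2 := by
    rw [xn_sq, ← hC]; rfl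
  have hy2 : (yn a1 (2 * B) : ℤ) = 2 * xn a1 B * yn a1 B := by
    have := yn_add a1 B B
    zify at this
    rw [two_mul, this]; ring
  obtain ⟨m, hm⟩ : ∃ m, m = 2 * B * yn a1 (2 * B) := ⟨_, rfl⟩
  have hmpos : 0 < m := by
    rw [hm]
    exact Nat.mul_pos (by omega) ((by omega : 0 < 2 * B).trans_le (yn_ge_n a1 _))
  obtain ⟨x, hx⟩ : ∃ x : ℤ, (yn a1 m : ℤ) = pE (a : ℤ) C x := by
    have h1 := ysq_dvd_yy a1 (2 * B)
    rw [← hm] at h1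
    obtain ⟨e, he⟩ := h1
    zify at he
    refine ⟨2 * e, ?_⟩
    rw [he, hy2, ← hC]
    unfold pE
    rw [hDx]; ring
  have hx0 : x ≠ 0 := by
    rintro rfl
    have h1 : (yn a1 m : ℤ) = 0 := by rw [hx]; unfold pE; ring
    have h2 := hmpos.trans_le (yn_ge_n a1 m)
    have h3 : yn a1 m = 0 := by exact_mod_cast h1
    omega
  have hFx : pF (a : ℤ) C x = (xn a1 m : ℤ) ^ 2 := by
    rw [xn_sq, hx]; rfl
  have hFpos : 0 < pF (a : ℤ) C x := by
    rw [hFx]; have := x_pos a1 m; positivity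
  have hDpos : 0 < pD (a : ℤ) C := by
    rw [hDx]; have := x_pos a1 B; positivity
  have haz : (1 : ℤ) < a := by exact_mod_cast a1
  have hGa : (a : ℤ) < pG (a : ℤ) C x := lt_pG haz hCpos.ne'
  obtain ⟨g, hg⟩ : ∃ g : ℕ, pG (a : ℤ) C x = g := ⟨_, (Int.toNat_of_nonneg (by omega)).symm⟩
  have g1 : 1 < g := by zify; rw [← hg]; omega
  -- `y` exists because the Lucas number satisfies the required congruence
  obtain ⟨y, hy⟩ : ∃ y : ℤ, (yn g1 B : ℤ) = pH (a : ℤ) B C x y := by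
    have h1 : pF (a : ℤ) C x ∣ (yn g1 B : ℤ) - C := by
      have h2 : a ≡ g [MOD (pF (a : ℤ) C x).toNat] := by
        refine Nat.modEq_iff_dvd.2 ?_
        rw [Int.toNat_of_nonneg hFpos.le, ← hg]
        exact pF_dvd_pG_sub _ _ _
      have h3 := Nat.modEq_iff_dvd.1 (xy_modEq_of_modEq a1 g1 h2 B).2
      rwa [Int.toNat_of_nonneg hFpos.le, ← hC] at h3
    have h2 : 2 * C ∣ (yn g1 B : ℤ) - B := by
      have h3 : 2 * C ∣ (g : ℤ) - 1 := by rw [← hg]; exact two_mul_dvd_pG_sub_one _ _ _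
      exact h3.trans (yn_modEq_sub_one g1 B)
    have h0F : pF (a : ℤ) C x ∣ pH (a : ℤ) B C x 0 - C := pF_dvd_pH_sub _ _ _ _ _
    have h0C : 2 * C ∣ pH (a : ℤ) B C x 0 - B := two_mul_dvd_pH_sub _ _ _ _ _
    have h3 : pF (a : ℤ) C x ∣ (yn g1 B : ℤ) - pH (a : ℤ) B C x 0 := by
      have := dvd_sub h1 h0F
      rwa [sub_sub_sub_cancel_right] at this
    have h4 : 2 * C ∣ (yn g1 B : ℤ) - pH (a : ℤ) B C x 0 := by
      have := dvd_sub h2 h0C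
      rwa [sub_sub_sub_cancel_right] at this
    have hcop : IsCoprime (pF (a : ℤ) C x) (2 * C) := by
      obtain ⟨c, hc⟩ := two_mul_dvd_pF_sub_one (a : ℤ) C x
      exact ⟨1, -c, by linear_combination hc⟩
    obtain ⟨y, hy⟩ := hcop.mul_dvd h3 h4
    refine ⟨y, ?_⟩
    have : pH (a : ℤ) B C x y = pH (a : ℤ) B C x 0 + pF (a : ℤ) C x * (2 * C) * y := by
      unfold pH; ring
    linarith
  refine ⟨x, y, hx0, xn a1 B * xn a1 m * xn g1 B, ?_⟩
  have hI : pI (a : ℤ) B C x y = (xn g1 B : ℤ) ^ 2 := by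
    unfold pI
    rw [hg, ← hy, xn_sq]
  unfold pDFI
  rw [hDx, hFx, hI]; ring

/-! ### Growth of Lucas sequences and a congruence for powers of two -/

open Pell in
lemma yn_lower {a : ℕ} (a1 : 1 < a) (n : ℕ) : (2 * (a : ℝ) - 1) ^ n ≤ yn a1 (n + 1) := by
  have ha : (1 : ℝ) < a := by exact_mod_cast a1
  induction n with
  | zero => simp
  | succ n ih =>
    have h1 := yn_succ_succ a1 n
    have h2 : (yn a1 n : ℝ) ≤ yn a1 (n + 1) := by
      exact_mod_cast (strictMono_y a1).monotone n.le_succ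
    have h3 : (yn a1 (n + 1 + 1) : ℝ) + yn a1 n = 2 * a * yn a1 (n + 1) := by exact_mod_cast h1
    rw [pow_succ]
    have h4 := mul_le_mul_of_nonneg_right ih (by linarith : (0 : ℝ) ≤ 2 * a - 1)
    nlinarith

open Pell in
lemma yn_upper {a : ℕ} (a1 : 1 < a) (n : ℕ) : (yn a1 (n + 1) : ℝ) ≤ (2 * (a : ℝ)) ^ n := by
  induction n with
  | zero => simp
  | succ n ih =>
    have h1 := yn_succ_succ a1 n
    have h3 : (yn a1 (n + 1 + 1) : ℝ) + yn a1 n = 2 * a * yn a1 (n + 1) := by exact_mod_cast h1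
    rw [pow_succ]
    have h4 := mul_le_mul_of_nonneg_right ih (by positivity : (0 : ℝ) ≤ 2 * a)
    have h5 : (0 : ℝ) ≤ yn a1 n := by positivity
    linarith

open Pell in
/-- The number `2` is a root of `t² - 2 a t + 1` modulo `4 a - 5`, so `3 · 2ⁿ yₙ(a)` has a closed
form for this modulus. -/
lemma yn_two_pow_congr {a : ℕ} (a1 : 1 < a) (n : ℕ) :
    (4 * a - 5 : ℤ) ∣ 3 * 2 ^ n * yn a1 n - 2 * ((2 ^ n) ^ 2 - 1) ∧
      (4 * a - 5 : ℤ) ∣ 3 * 2 ^ (n + 1) * yn a1 (n + 1) - 2 * ((2 ^ (n + 1)) ^ 2 - 1) := by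
  induction n with
  | zero => simp
  | succ n ih =>
    refine ⟨ih.2, ?_⟩
    obtain ⟨⟨u, hu⟩, ⟨v, hv⟩⟩ := ih
    have h1 : (yn a1 (n + 1 + 1) : ℤ) + yn a1 n = 2 * a * yn a1 (n + 1) := by
      exact_mod_cast yn_succ_succ a1 n
    refine ⟨4 * a * v - 4 * u + 4 * 2 * (2 ^ n) ^ 2 - 2, ?_⟩
    have h2 : (yn a1 (n + 1 + 1) : ℤ) = 2 * a * yn a1 (n + 1) - yn a1 n := by linarith
    rw [h2]
    simp only [pow_succ] at hu hv ⊢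
    linear_combination 4 * a * hv - 4 * hu

/-! ### The quotient `C / K` and the central binomial coefficient -/

/-- The polynomial part of `(V + 1)^(2 X) / V^X`. -/
def binJ (V X : ℕ) : ℕ := ∑ i ∈ Finset.range (X + 1), (2 * X).choose (X + i) * V ^ i

lemma binJ_modEq (V X : ℕ) : binJ V X ≡ (2 * X).choose X [MOD V] := by
  unfold binJ
  rw [Finset.sum_range_succ']
  have : V ∣ ∑ k ∈ Finset.range X, (2 * X).choose (X + (k + 1)) * V ^ (k + 1) :=
    Finset.dvd_sum fun i _ => (dvd_pow_self V i.succ_ne_zero).mul_left _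
  have h := (Nat.modEq_zero_iff_dvd.2 this).add_right ((2 * X).choose (X + 0) * V ^ 0)
  simpa using h

lemma pow_le_binJ (V X : ℕ) : V ^ X ≤ binJ V X := by
  unfold binJ
  have := Finset.single_le_sum (f := fun i => (2 * X).choose (X + i) * V ^ i)
    (fun i _ => Nat.zero_le _) (Finset.self_mem_range_succ X)
  simpa [← two_mul] using this

/-- After multiplication by `V^X`, the polynomial part differs from `(V + 1)^(2 X)` by the terms of
degree below `X`, which contribute at most `4^X V^(X-1)`. -/
lemma binJ_bounds {V X : ℕ} (hV : 0 < V) (hX : 0 < X) :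
    V ^ X * binJ V X ≤ (V + 1) ^ (2 * X) ∧
      V * (V + 1) ^ (2 * X) ≤ V * (V ^ X * binJ V X) + 4 ^ X * V ^ X := by
  have h1 : (V + 1) ^ (2 * X) = (∑ i ∈ Finset.range X, (2 * X).choose i * V ^ i)
      + V ^ X * binJ V X := by
    rw [add_pow, show 2 * X + 1 = X + (X + 1) by ring, Finset.sum_range_add]
    unfold binJ
    rw [Finset.mul_sum]
    congr 1
    · refine Finset.sum_congr rfl fun i _ => ?_
      simp [mul_comm]
    · refine Finset.sum_congr rfl fun i _ => ?_
      rw [pow_add]; simp; ring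
  have h2 : V * (∑ i ∈ Finset.range X, (2 * X).choose i * V ^ i) ≤ 4 ^ X * V ^ X := by
    rw [Finset.mul_sum]
    calc ∑ i ∈ Finset.range X, V * ((2 * X).choose i * V ^ i)
        ≤ ∑ i ∈ Finset.range X, (2 * X).choose i * V ^ X := by
          refine Finset.sum_le_sum fun i hi => ?_
          rw [mul_left_comm, ← pow_succ']
          exact Nat.mul_le_mul_left _ (Nat.pow_le_pow_right hV (Finset.mem_range.1 hi))
      _ = (∑ i ∈ Finset.range X, (2 * X).choose i) * V ^ X := by rw [Finset.sum_mul]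
      _ ≤ (∑ i ∈ Finset.range (2 * X + 1), (2 * X).choose i) * V ^ X := by
          refine Nat.mul_le_mul_right _ (Finset.sum_le_sum_of_subset ?_)
          exact Finset.range_subset_range.2 (by omega)
      _ = 4 ^ X * V ^ X := by rw [Nat.sum_range_choose, pow_mul]; norm_num
  rw [h1]
  constructor
  · omega
  · rw [mul_add]; omega

/-- The ratio `(V + 1)^(2 X) / V^X`. -/
noncomputable def binRho (V X : ℕ) : ℝ := ((V : ℝ) + 1) ^ (2 * X) / (V : ℝ) ^ X

/-- The polynomial part `binJ` of the ratio leaves a remainder of at most `4^X / V`. -/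
lemma binRho_bounds {V X : ℕ} (hV : 0 < V) (hX : 0 < X) :
    (binJ V X : ℝ) ≤ binRho V X ∧ binRho V X ≤ binJ V X + 4 ^ X / V := by
  obtain ⟨h1, h2⟩ := binJ_bounds hV hX
  have hV' : (0 : ℝ) < V := by exact_mod_cast hV
  have hVX : (0 : ℝ) < (V : ℝ) ^ X := by positivity
  have h1' : (V : ℝ) ^ X * binJ V X ≤ ((V : ℝ) + 1) ^ (2 * X) := by exact_mod_cast h1
  have h2' : (V : ℝ) * ((V : ℝ) + 1) ^ (2 * X) ≤ V * ((V : ℝ) ^ X * binJ V X) + 4 ^ X * V ^ X := by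
    exact_mod_cast h2
  unfold binRho
  constructor
  · rw [le_div_iff₀ hVX]; linarith
  · rw [div_le_iff₀ hVX]
    refine le_of_mul_le_mul_left ?_ hV'
    refine h2'.trans (le_of_eq ?_)
    field_simp

open Pell in
/-- The quotient of Lucas numbers `y_{2X+1}(a) / y_{X+1}(c)` is close to `(V + 1)^(2 X) / V^X`
when `2 a = U (V + 1)` and `2 c = U² V` with `U` large. -/
lemma ratio_bound {a c X U V : ℕ} (a1 : 1 < a) (c1 : 1 < c) (ha : 2 * a = U * (V + 1))
    (hc : 2 * c = U ^ 2 * V) (hac : a ≤ c) (hXa : X ≤ a) (hV : 0 < V) :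
    0 < (yn c1 (X + 1) : ℝ) ∧
    |(yn a1 (2 * X + 1) : ℝ) - binRho V X * yn c1 (X + 1)|
      ≤ 2 * (X / a) * (binRho V X * yn c1 (X + 1)) := by
  have hK : 0 < (yn c1 (X + 1) : ℝ) := by
    exact_mod_cast X.succ_pos.trans_le (yn_ge_n c1 (X + 1))
  refine ⟨hK, ?_⟩
  have hV' : (0 : ℝ) < V := by exact_mod_cast hV
  have ha1 : (1 : ℝ) < a := by exact_mod_cast a1
  have hc1 : (1 : ℝ) < c := by exact_mod_cast c1
  have hac' : (a : ℝ) ≤ c := by exact_mod_cast hac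
  have hXa' : (X : ℝ) ≤ a := by exact_mod_cast hXa
  have hX0 : (0 : ℝ) ≤ X := by positivity
  have ha' : (2 * a : ℝ) = U * (V + 1) := by exact_mod_cast ha
  have hc' : (2 * c : ℝ) = U ^ 2 * V := by exact_mod_cast hc
  have hrho : 0 < binRho V X := by unfold binRho; positivity
  obtain ⟨M, hM⟩ : ∃ M : ℝ, M = (2 * (a : ℝ)) ^ (2 * X) := ⟨_, rfl⟩
  have hMpos : 0 < M := by rw [hM]; positivity
  have hMc : M = binRho V X * (2 * (c : ℝ)) ^ X := by
    rw [hM, ha', hc']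
    unfold binRho
    rw [mul_pow, mul_pow, ← pow_mul]
    field_simp
  -- Bernoulli's inequality for both sequences
  have b1 : M * (1 - X / a) ≤ yn a1 (2 * X + 1) := by
    refine le_trans ?_ (yn_lower a1 (2 * X))
    have h := one_add_mul_le_pow (a := -(1 / (2 * (a : ℝ)))) (by
      rw [neg_le_neg_iff, div_le_iff₀ (by positivity)]; linarith) (2 * X)
    have h2 : (2 * (a : ℝ) - 1) ^ (2 * X) = M * (1 + -(1 / (2 * (a : ℝ)))) ^ (2 * X) := by
      rw [hM, ← mul_pow]; congr 1; field_simp; ring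
    rw [h2]
    refine mul_le_mul_of_nonneg_left (le_trans (le_of_eq ?_) h) hMpos.le
    push_cast; field_simp; ring
  have b2 : M * (1 - X / (2 * c)) ≤ binRho V X * yn c1 (X + 1) := by
    refine le_trans ?_ (mul_le_mul_of_nonneg_left (yn_lower c1 X) hrho.le)
    have h := one_add_mul_le_pow (a := -(1 / (2 * (c : ℝ)))) (by
      rw [neg_le_neg_iff, div_le_iff₀ (by positivity)]; linarith) X
    have h2 : binRho V X * (2 * (c : ℝ) - 1) ^ X = M * (1 + -(1 / (2 * (c : ℝ)))) ^ X := by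
      rw [hMc, mul_assoc, ← mul_pow]; congr 2; field_simp; ring
    rw [h2]
    refine mul_le_mul_of_nonneg_left (le_trans (le_of_eq ?_) h) hMpos.le
    field_simp; ring
  have b3 : (yn a1 (2 * X + 1) : ℝ) ≤ M := by rw [hM]; exact yn_upper a1 (2 * X)
  have b4 : binRho V X * yn c1 (X + 1) ≤ M := by
    rw [hMc]; exact mul_le_mul_of_nonneg_left (yn_upper c1 X) hrho.le
  have h1 : (X : ℝ) / (2 * c) ≤ X / (2 * a) := by gcongr
  have h2 : (X : ℝ) / (2 * a) = X / a / 2 := by field_simp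
  have h3 : (X : ℝ) / a ≤ 1 := by rw [div_le_one (by linarith)]; exact hXa'
  have h4 : 0 ≤ (X : ℝ) / a := by positivity
  generalize (X : ℝ) / a = e at *
  generalize binRho V X * yn c1 (X + 1) = r at *
  generalize (X : ℝ) / (2 * c) = e' at *
  have h5 : M * (1 - 1 / 2) ≤ M * (1 - e') := by gcongr; linarith
  have h6 : M * e' ≤ M * e := by gcongr; linarith
  have h7 : M * e ≤ 2 * r * e := by gcongr; linarith
  rw [abs_le]
  constructor <;> linarith

/-- A quotient `C / K` within relative error `2 X / a` of `ρ` and within `1/2` of `l Y` forces `l` to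
be positive and `l Y` to be near `ρ`. The factor `l²` in `a` makes the error `2 (X / a) ρ` small
as soon as `ρ` is comparable with `l Y`. -/
lemma rho_approx {X Y V a : ℕ} {l : ℤ} {C K ρ : ℝ} (hX : 0 < X) (hY : 64 ≤ Y) (hl : l ≠ 0)
    (hV : 512 ≤ V) (ha : (a : ℝ) = l ^ 2 * X * Y * (V + 1)) (hK : 0 < K) (hρ : 1 ≤ ρ)
    (hr : |C - ρ * K| ≤ 2 * (X / a) * (ρ * K)) (h : 2 * |C - l * Y * K| < K) :
    0 < l ∧ |ρ - l * Y| < 5 / 8 := by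
  have hX' : (0 : ℝ) < X := by exact_mod_cast hX
  have hY' : (64 : ℝ) ≤ Y := by exact_mod_cast hY
  have hV' : (512 : ℝ) ≤ V := by exact_mod_cast hV
  have hl' : (l : ℝ) ≠ 0 := by exact_mod_cast hl
  have hl2 : (1 : ℝ) ≤ (l : ℝ) ^ 2 := by
    have h1 : (1 : ℤ) ≤ l ^ 2 := by have := sq_nonneg l; have := pow_ne_zero 2 hl; omega
    exact_mod_cast h1
  obtain ⟨e, he⟩ : ∃ e : ℝ, e = (X : ℝ) / a := ⟨_, rfl⟩
  have he1 : e * ((l : ℝ) ^ 2 * Y * (V + 1)) = 1 := by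
    rw [he, ha]; field_simp
  have he0 : 0 ≤ e := by rw [he]; positivity
  rw [← he] at hr
  have h64 : (64 : ℝ) * 513 ≤ (l : ℝ) ^ 2 * Y * (V + 1) := by
    have h1 : (1 : ℝ) * 64 ≤ (l : ℝ) ^ 2 * Y := by gcongr
    have h2 : (1 : ℝ) * 64 * 513 ≤ (l : ℝ) ^ 2 * Y * (V + 1) := by gcongr; linarith
    linarith
  have he4 : e ≤ 1 / 4 := by
    have := mul_le_mul_of_nonneg_left h64 he0
    linarith
  have hρK : 0 < ρ * K := by positivity
  have h5 : 2 * e * (ρ * K) ≤ 1 / 2 * (ρ * K) := by gcongr; linarith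
  obtain ⟨hr1, hr2⟩ := abs_le.1 hr
  have hh := h
  have hh1 : C - l * Y * K < K / 2 := by have := le_abs_self (C - l * Y * K); linarith
  have h6 : ρ * K * (1 / 2) < (l * Y + 1 / 2) * K := by linarith
  have h7 : ρ * (1 / 2) < l * Y + 1 / 2 := by
    refine lt_of_mul_lt_mul_right ?_ hK.le
    linarith
  have hlpos : 0 < l := by
    by_contra hneg
    have h8 : (l : ℝ) ≤ -1 := by
      have : l ≤ -1 := by omega
      exact_mod_cast this
    have h9 : (l : ℝ) * Y ≤ -1 * Y := by gcongr
    linarith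
  refine ⟨hlpos, ?_⟩
  have hl1 : (1 : ℝ) ≤ l := by exact_mod_cast hlpos
  have h8 : ρ ≤ 3 * (l * Y) := by
    have : (1 : ℝ) * 64 ≤ l * Y := by gcongr
    linarith
  have h9 : e * (l * Y) ≤ 1 / 513 := by
    have h10 : e * (l * Y) * (l * (V + 1)) = 1 := by linear_combination he1
    have h11 : (1 : ℝ) * 513 ≤ l * (V + 1) := by gcongr; linarith
    have h12 : 0 ≤ e * (l * Y) := by positivity
    have := mul_le_mul_of_nonneg_left h11 h12
    linarith
  have h13 : 2 * e * (ρ * K) ≤ 1 / 8 * K := by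
    have h14 : e * ρ ≤ e * (3 * (l * Y)) := by gcongr
    have h15 : (2 * (e * ρ)) * K ≤ 1 / 8 * K := by gcongr; linarith
    linarith
  have h16 : |ρ - l * Y| * K < 5 / 8 * K := by
    have h17 : |ρ - l * Y| * K = |(C - l * Y * K) - (C - ρ * K)| := by
      rw [← abs_of_pos hK, ← abs_mul, abs_of_pos hK]; congr 1; ring
    have := abs_sub (C - l * Y * K) (C - ρ * K)
    rw [h17]; linarith
  exact lt_of_mul_lt_mul_right h16 hK.le

open Pell in
/-- The size of `K` bounds its index, and the congruence `K ≡ X + 1 mod c - 1` then determines it. -/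
lemma eq_yn_of_le {a c X : ℕ} (a1 : 1 < a) (c1 : 1 < c) (hac : 2 * a + 1 ≤ 2 * c)
    (hXc : 3 * X + 3 < c) {C K : ℤ} (hC : C = yn a1 (2 * X + 1)) (hKC : |K| ≤ 2 * C)
    (hsq : IsSquare (((c : ℤ) ^ 2 - 1) * K ^ 2 + 1)) (hk : (c : ℤ) - 1 ∣ K - (X + 1)) :
    K = yn c1 (X + 1) := by
  obtain ⟨j, hj⟩ := pell_of_isSquare c1 hsq
  have hKj : |K| = yn c1 j := by rw [← hj]; exact (Int.natCast_natAbs K).symm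
  have hjX : j ≤ 2 * X + 1 := by
    by_contra! hjX
    obtain ⟨i, rfl⟩ : ∃ i, j = i + 1 := ⟨j - 1, by omega⟩
    have h1 := yn_lower c1 i
    have h2 : ((yn c1 (i + 1) : ℕ) : ℝ) ≤ 2 * yn a1 (2 * X + 1) := by
      rw [hKj, hC] at hKC
      exact_mod_cast hKC
    have h3 := yn_upper a1 (2 * X)
    have ha : (1 : ℝ) < a := by exact_mod_cast a1
    have h4 : (2 * (a : ℝ)) ≤ 2 * c - 1 := by
      have : (2 * (a : ℝ)) + 1 ≤ 2 * c := by exact_mod_cast hac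
      linarith
    have h5 : (2 * (a : ℝ)) ^ i ≤ (2 * (c : ℝ) - 1) ^ i := by gcongr
    have h6 : (2 * (a : ℝ)) ^ (2 * X + 1) ≤ (2 * (a : ℝ)) ^ i :=
      pow_le_pow_right₀ (by linarith) (by omega)
    rw [pow_succ] at h6
    have h7 : 0 < (2 * (a : ℝ)) ^ (2 * X) := by positivity
    nlinarith
  have hmod := yn_modEq_sub_one c1 j
  rw [← hKj] at hmod
  have hcz : (3 : ℤ) * X + 3 < c := by exact_mod_cast hXc
  have hjz : (j : ℤ) ≤ 2 * X + 1 := by exact_mod_cast hjX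
  rcases abs_choice K with hs | hs
  · have h1 := dvd_sub hk hmod
    rw [hs, show K - (X + 1) - (K - j) = (j : ℤ) - (X + 1) by ring] at h1
    have h2 : (j : ℤ) - (X + 1) = 0 := by
      apply Int.eq_zero_of_abs_lt_dvd h1
      rw [abs_lt]; constructor <;> omega
    have h3 : j = X + 1 := by omega
    rw [← hs, hKj, h3]
  · have h1 := dvd_add hk hmod
    rw [hs, show K - (X + 1) + (-K - j) = -((j : ℤ) + (X + 1)) by ring, dvd_neg] at h1
    have := Int.le_of_dvd (by omega) h1
    omega

/-! ### Coding `b ∣ 2^(2X+1)` and `Y ∣ binom (2X) X` -/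

section Bridge

variable {R : Type*} [CommRing R]

/-- The Pell parameter for the index `2 X + 1`; here `8 w² Y` plays the role of `V`. -/
def brA (l w X Y : R) : R := l ^ 2 * X * Y * (8 * w ^ 2 * Y + 1)

/-- The Pell parameter for the index `X + 1`. -/
def brc (l w X Y : R) : R := 2 * l ^ 4 * X ^ 2 * Y ^ 2 * (8 * w ^ 2 * Y)

/-- The candidate for the Lucas number of index `2 X + 1` and parameter `brA`. -/
def brC (l w h X Y : R) : R := (2 * X + 1) + (brA l w X Y - 1) * h

/-- The candidate for the Lucas number of index `X + 1` and parameter `brc`. -/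
def brK (l w k X Y : R) : R := X + 1 + (brc l w X Y - 1) * k

/-- Divisible by `4 brA - 5` when `brC` is the Lucas number of index `2 X + 1` and
`2 b w² = 2^(2 X + 1)`. -/
def brT (b l w h X Y : R) : R :=
  3 * (2 * b * w ^ 2) * brC l w h X Y - 2 * ((2 * b * w ^ 2) ^ 2 - 1)

end Bridge

/-- The Pell parameters `brA` and `brc` are natural numbers with `2 a = U (V + 1)` and
`2 c = U² V`, as `ratio_bound` needs. -/
lemma brA_cast {l w : ℤ} (X Y : ℕ) :
    ∃ L V a c U : ℕ, (l ≠ 0 → 1 ≤ L) ∧ (V : ℤ) = 8 * w ^ 2 * Y ∧ V = 8 * w.natAbs ^ 2 * Y ∧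
      (L : ℤ) ^ 2 = l ^ 2 ∧ a = L ^ 2 * X * Y * (V + 1) ∧
      c = 2 * L ^ 4 * X ^ 2 * Y ^ 2 * V ∧ (a : ℤ) = brA l w X Y ∧ (c : ℤ) = brc l w X Y ∧
      2 * a = U * (V + 1) ∧ 2 * c = U ^ 2 * V ∧ U = 2 * L ^ 2 * X * Y := by
  have hL : ((l.natAbs : ℤ)) ^ 2 = l ^ 2 := by rw [Int.natCast_natAbs, sq_abs]
  have hV : ((8 * w.natAbs ^ 2 * Y : ℕ) : ℤ) = 8 * w ^ 2 * Y := by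
    push_cast; rw [sq_abs]
  refine ⟨l.natAbs, 8 * w.natAbs ^ 2 * Y, _, _, 2 * l.natAbs ^ 2 * X * Y,
    fun h => Int.natAbs_pos.2 h, hV, rfl, hL, rfl, rfl, ?_, ?_, by ring, by ring, rfl⟩
  · unfold brA
    rw [← hV, ← hL]; push_cast; ring
  · unfold brc
    rw [← hV, show l ^ 4 = (l ^ 2) ^ 2 by ring, ← hL]; push_cast; ring

lemma pow_bound {V X : ℕ} (hV : 512 ≤ V) (hX : 3 ≤ X) : 2 * 4 ^ X ≤ V ^ (X - 1) := by
  obtain ⟨i, rfl⟩ : ∃ i, X = i + 3 := ⟨X - 3, by omega⟩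
  calc 2 * 4 ^ (i + 3) ≤ 512 ^ (i + 2) := by
        rw [show (512 : ℕ) = 4 * 128 by norm_num, mul_pow, pow_succ 4 (i + 2)]
        have h1 : 128 ^ 2 ≤ 128 ^ (i + 2) := Nat.pow_le_pow_right (by norm_num) (by omega)
        have h2 : 0 < 4 ^ (i + 2) := by positivity
        nlinarith
    _ ≤ V ^ (i + 3 - 1) := Nat.pow_le_pow_left hV _

/-- A solution `W` of the congruence for `2^(2 X + 1)` that is small compared with the modulus. -/
lemma eq_two_pow_of_dvd {q : ℤ} {W V X : ℕ} (hX : 3 ≤ X) (hV : 512 ≤ V) (hW : 4 * W ≤ V)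
    (hq : 2 * (V : ℤ) ^ (2 * X) < q) {C : ℤ} (h1 : q ∣ 3 * W * C - 2 * ((W : ℤ) ^ 2 - 1))
    (h2 : q ∣ 3 * 2 ^ (2 * X + 1) * C - 2 * ((2 ^ (2 * X + 1)) ^ 2 - 1)) : W = 2 ^ (2 * X + 1) := by
  obtain ⟨W₀, hW₀⟩ : ∃ W₀ : ℕ, W₀ = 2 ^ (2 * X + 1) := ⟨_, rfl⟩
  have hW0 : (2 : ℤ) ^ (2 * X + 1) = W₀ := by rw [hW₀]; push_cast; rfl
  rw [hW0] at h2
  rw [← hW₀]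
  have h3 : q ∣ 2 * ((W : ℤ) - W₀) * (W * W₀ + 1) := by
    obtain ⟨u, hu⟩ := h1
    obtain ⟨v, hv⟩ := h2
    exact ⟨W * v - W₀ * u, by linear_combination W * hv - W₀ * hu⟩
  have hb : W₀ ≤ V ^ (X - 1) := by
    rw [hW₀, pow_succ, pow_mul]; have := pow_bound hV hX; norm_num; linarith
  have hV1 : 1 ≤ V := by omega
  have hVX : V ^ X = V ^ (X - 1) * V := by rw [← pow_succ]; congr 1; omega
  have hP : 1 ≤ V ^ (X - 1) := Nat.one_le_pow _ _ hV1
  have hP1 : V ≤ V ^ (X - 1) := by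
    calc V = V ^ 1 := (pow_one V).symm
      _ ≤ _ := Nat.pow_le_pow_right hV1 (by omega)
  have h4 : 2 * (V ^ (X - 1) * (W * W₀ + 1)) ≤ 2 * V ^ (2 * X) := by
    have h5 : W * W₀ + 1 ≤ V ^ X := by
      rw [hVX]
      have : W * W₀ ≤ W * V ^ (X - 1) := Nat.mul_le_mul_left _ hb
      nlinarith
    have h6 : V ^ (X - 1) ≤ V ^ X := Nat.pow_le_pow_right hV1 (by omega)
    rw [two_mul X, pow_add]
    exact Nat.mul_le_mul_left 2 (Nat.mul_le_mul h6 h5)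
  have h4' : 2 * ((V : ℤ) ^ (X - 1) * (W * W₀ + 1)) ≤ 2 * V ^ (2 * X) := by exact_mod_cast h4
  have h0 : 2 * ((W : ℤ) - W₀) * (W * W₀ + 1) = 0 := by
    apply Int.eq_zero_of_abs_lt_dvd h3
    refine lt_of_le_of_lt ?_ hq
    refine le_trans ?_ h4'
    have h7 : |(W : ℤ) - W₀| ≤ V ^ (X - 1) := by
      have hb' : (W₀ : ℤ) ≤ V ^ (X - 1) := by exact_mod_cast hb
      have hP1' : (V : ℤ) ≤ V ^ (X - 1) := by exact_mod_cast hP1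
      rw [abs_le]; constructor <;> omega
    have h8 : (0 : ℤ) < W * W₀ + 1 := by positivity
    rw [abs_mul, abs_mul, abs_of_pos h8, abs_two, mul_assoc]
    gcongr
  have h8 : (W : ℤ) * W₀ + 1 ≠ 0 := by positivity
  have h9 : (W : ℤ) - W₀ = 0 := by
    rcases mul_eq_zero.1 h0 with h | h
    · linarith
    · exact absurd h h8
  omega

/-- A solution `l Y` close to `V^X` makes the modulus `4 a - 5` larger than `2 V^(2 X)`. -/
lemma modulus_bound {V X L Y a : ℕ} (hL : 1 ≤ L) (hY : 64 ≤ Y) (h : V ^ X ≤ L * Y + 1)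
    (ha : 24 * (L * Y) ^ 2 ≤ a) : 2 * (V : ℤ) ^ (2 * X) < 4 * (a : ℤ) - 5 := by
  have hLY : 1 * 64 ≤ L * Y := by gcongr
  generalize L * Y = t at *
  have h1 : V ^ (2 * X) ≤ (t + 1) ^ 2 := by
    rw [mul_comm, pow_mul]; exact Nat.pow_le_pow_left h 2
  have h2 : 2 * V ^ (2 * X) + 5 < 4 * a := by nlinarith
  have : 2 * (V : ℤ) ^ (2 * X) + 5 < 4 * a := by exact_mod_cast h2
  linarith

open Pell in
/-- The bridge from squares to divisibility. The first square makes `C` the Lucas number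
`y_{2X+1}(a)`, the second and the size condition make `K = y_{X+1}(c)`; then `l Y` is within `5/8`
of `(V + 1)^(2X) / V^X`, hence so large that the congruence modulo `4 a - 5` determines
`2 b w² = 2^(2X+1)`. Thus `V = 8 w² Y` exceeds `8 * 4^X`, the ratio has fractional part at most
`1/8`, and `l Y` equals its polynomial part, which is `(2X).choose X` modulo `V`. -/
lemma bridge_backward {X Y b : ℕ} (hX : 3 ≤ X) (hY : 64 ≤ Y) (hbY : b ≤ Y)
    {l w h k x y : ℤ} (hl : l ≠ 0) (hx : x ≠ 0)
    (h1 : IsSquare (pDFI (brA l w X Y) (2 * X + 1) (brC l w h X Y) x y))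
    (h2 : IsSquare ((brc l w X Y ^ 2 - 1) * brK l w k X Y ^ 2 + 1))
    (h3 : 4 * brA l w X Y - 5 ∣ brT (b : ℤ) l w h X Y)
    (h4 : 2 * |brC l w h X Y - l * Y * brK l w k X Y| < |brK l w k X Y|) :
    b ∣ 2 ^ (2 * X + 1) ∧ Y ∣ (2 * X).choose X := by
  obtain ⟨L, V, a, c, U, hL, hV, hV2, hLl, ha, hc, haA, hcc, hUa, hUc, hU⟩ := brA_cast (l := l)
    (w := w) X Y
  have hL := hL hl
  have hL2 : 1 ≤ L ^ 2 := Nat.one_le_pow _ _ hL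
  have hXY : 192 ≤ L ^ 2 * X * Y := by
    calc 192 = 1 * 3 * 64 := by norm_num
      _ ≤ L ^ 2 * X * Y := by gcongr
  rw [← haA] at h1 h3
  rw [← hcc] at h2
  have hw : w ≠ 0 := by
    rintro rfl
    have hV0 : V = 0 := by rw [hV2]; simp
    have h5 : (4 * (a : ℤ) - 5) ∣ 2 := by
      unfold brT at h3
      simpa using h3
    have h6 : 192 ≤ a := by rw [ha, hV0]; linarith
    have := Int.le_of_dvd (by norm_num) h5
    omega
  have hw1 : 1 ≤ w.natAbs ^ 2 := Nat.one_le_pow _ _ (Int.natAbs_pos.2 hw)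
  have hV512 : 512 ≤ V := by
    rw [hV2]
    calc 512 = 8 * 1 * 64 := by norm_num
      _ ≤ 8 * w.natAbs ^ 2 * Y := by gcongr
  have hVb : 8 * (w.natAbs ^ 2 * b) ≤ V := by
    rw [hV2, mul_assoc]; gcongr
  have haX : 64 * X * (V + 1) ≤ a := by
    rw [ha]
    have : 1 * X * 64 ≤ L ^ 2 * X * Y := by gcongr
    calc 64 * X * (V + 1) = 1 * X * 64 * (V + 1) := by ring
      _ ≤ _ := by gcongr
  have haX2 : 64 * X * 513 ≤ a := le_trans (by gcongr; omega) haX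
  have a1 : 1 < a := by omega
  have hU384 : 384 ≤ U := by rw [hU]; linarith
  have hac : 2 * a + 1 ≤ 2 * c := by
    rw [hUa, hUc, sq, mul_assoc]
    have : 384 * V ≤ U * V := by gcongr
    have h6 : U * (V + 2) ≤ U * (U * V) := by gcongr; omega
    nlinarith
  have c1 : 1 < c := by omega
  have hCy : brC l w h X Y = yn a1 (2 * X + 1) := by
    have hCC : brC l w h X Y = (2 * X + 1) + ((a : ℤ) - 1) * h := by
      unfold brC; rw [← haA]
    rw [hCC] at h1 ⊢
    rw [eq_yn_of_isSquare a1 (by omega) (by omega) hx h1]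
    congr 2
  obtain ⟨C, hC⟩ : ∃ C, C = brC l w h X Y := ⟨_, rfl⟩
  obtain ⟨K, hK⟩ : ∃ K, K = brK l w k X Y := ⟨_, rfl⟩
  have hkK : (c : ℤ) - 1 ∣ K - (X + 1) := ⟨k, by rw [hK]; unfold brK; rw [← hcc]; ring⟩
  unfold brT at h3
  rw [← hC] at h3 h4 hCy
  rw [← hK] at h2 h4
  have hlY : (1 : ℤ) ≤ |l * Y| := by
    apply Int.one_le_abs
    have : (Y : ℤ) ≠ 0 := by omega
    exact mul_ne_zero hl this
  have hC0 : 0 ≤ C := by rw [hCy]; positivity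
  have hKC : |K| ≤ 2 * C := by
    have h5 : |l * Y * K| ≤ |C| + |C - l * Y * K| := by
      have := abs_sub C (C - l * Y * K)
      rwa [sub_sub_cancel] at this
    rw [abs_mul, abs_of_nonneg hC0] at h5
    have h6 : 1 * |K| ≤ |l * Y| * |K| := mul_le_mul_of_nonneg_right hlY (abs_nonneg K)
    omega
  have hKy := eq_yn_of_le a1 c1 hac (by omega) hCy hKC h2 hkK
  have hVpos : 0 < V := by omega
  obtain ⟨hKpos, hratio⟩ := ratio_bound (X := X) a1 c1 hUa hUc (by omega) (by omega) hVpos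
  obtain ⟨hJ1, hJ2⟩ := binRho_bounds hVpos (by omega : 0 < X)
  have hJV := pow_le_binJ V X
  have hJVr : (V : ℝ) ^ X ≤ binJ V X := by exact_mod_cast hJV
  have hVr : (512 : ℝ) ≤ V := by exact_mod_cast hV512
  have hVX1 : (1 : ℝ) ≤ (V : ℝ) ^ X := one_le_pow₀ (by linarith)
  have hLr : (L : ℝ) ^ 2 = (l : ℝ) ^ 2 := by exact_mod_cast hLl
  have h4r : 2 * |(yn a1 (2 * X + 1) : ℝ) - l * Y * (yn c1 (X + 1) : ℝ)| < (yn c1 (X + 1) : ℝ) := by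
    rw [hKy, hCy, Nat.abs_cast] at h4
    exact_mod_cast h4
  obtain ⟨hlpos, happ⟩ := rho_approx (by omega) hY hl hV512 (by rw [ha, ← hLr]; push_cast; ring)
    hKpos (by linarith) hratio h4r
  obtain ⟨happ1, happ2⟩ := abs_lt.1 happ
  -- `l Y` is so large that the congruence determines `2 b w²`
  have hlYbig : V ^ X ≤ L * Y + 1 := by
    have h5 : (V : ℝ) ^ X < l * Y + 1 := by linarith
    have h6 : (V : ℤ) ^ X < l * Y + 1 := by exact_mod_cast h5
    have h7 : (L : ℤ) = l := by
      rcases sq_eq_sq_iff_eq_or_eq_neg.1 hLl with h | h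
      · exact h
      · omega
    rw [← h7] at h6
    exact_mod_cast h6.le
  have hq : 2 * (V : ℤ) ^ (2 * X) < 4 * (a : ℤ) - 5 := by
    refine modulus_bound hL hY hlYbig ?_
    rw [ha]
    have h8 : 8 * Y ≤ V := by
      rw [hV2]; gcongr; omega
    calc 24 * (L * Y) ^ 2 = L ^ 2 * 3 * Y * (8 * Y) := by ring
      _ ≤ L ^ 2 * X * Y * (V + 1) := by gcongr; omega
  have hW := eq_two_pow_of_dvd (W := 2 * b * w.natAbs ^ 2) (V := V) (C := C) hX hV512
    (by linarith) hq
    (by push_cast; rw [sq_abs]; exact h3) (by rw [hCy]; exact_mod_cast (yn_two_pow_congr a1 (2 * X + 1)).1)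
  refine ⟨⟨2 * w.natAbs ^ 2, by rw [← hW]; ring⟩, ?_⟩
  -- now the fractional part is small and `l Y` is the polynomial part
  have hV4 : 8 * 4 ^ X ≤ V := by
    have : w.natAbs ^ 2 * b = 4 ^ X := by
      have h5 : (2 : ℕ) ^ (2 * X + 1) = 2 * 4 ^ X := by rw [pow_succ, pow_mul]; norm_num; ring
      rw [h5] at hW; linarith
    rwa [this] at hVb
  have hfrac : (4 : ℝ) ^ X / V ≤ 1 / 8 := by
    rw [div_le_iff₀ (by linarith)]
    have : (8 : ℝ) * 4 ^ X ≤ V := by exact_mod_cast hV4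
    linarith
  have hJeq : (binJ V X : ℤ) = l * Y := by
    have h5 : (binJ V X : ℝ) < l * Y + 1 := by linarith
    have h6 : (l : ℝ) * Y < binJ V X + 1 := by linarith
    have h5' : (binJ V X : ℤ) < l * Y + 1 := by exact_mod_cast h5
    have h6' : (l : ℤ) * Y < binJ V X + 1 := by exact_mod_cast h6
    omega
  have hYJ : Y ∣ binJ V X := by
    have : (Y : ℤ) ∣ binJ V X := ⟨l, by rw [hJeq]; ring⟩
    exact_mod_cast this
  have hYV : Y ∣ V := ⟨8 * w.natAbs ^ 2, by rw [hV2]; ring⟩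
  exact ((binJ_modEq V X).dvd_iff hYV).1 hYJ

/-- If `l Y` is very near `ρ` and `C / K` has relative distance at most `2 X / a` from `ρ`, then
`l Y` is within `1 / (2 μ)` of `C / K`. -/
lemma quotient_close {X Y V a μ : ℕ} {l : ℤ} {C K ρ : ℝ} (hX : 0 < X) (hY : 1 ≤ Y) (hl : 0 < l)
    (hμ : 1 ≤ μ) (hV : 32 * μ ≤ V)
    (ha : (a : ℝ) = l ^ 2 * X * Y * (V + 1)) (hK : 0 < K)
    (hr : |C - ρ * K| ≤ 2 * (X / a) * (ρ * K)) (hρ1 : (l : ℝ) * Y ≤ ρ)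
    (hρ2 : 32 * μ * (ρ - l * Y) ≤ 1) : 2 * μ * |C - l * Y * K| < K := by
  have hX' : (0 : ℝ) < X := by exact_mod_cast hX
  have hY' : (1 : ℝ) ≤ Y := by exact_mod_cast hY
  have hμ' : (1 : ℝ) ≤ μ := by exact_mod_cast hμ
  have hV' : 32 * (μ : ℝ) ≤ V := by exact_mod_cast hV
  have hl1 : (1 : ℝ) ≤ l := by exact_mod_cast hl
  obtain ⟨e, he⟩ : ∃ e : ℝ, e = (X : ℝ) / a := ⟨_, rfl⟩
  have he1 : e * ((l : ℝ) ^ 2 * Y * (V + 1)) = 1 := by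
    rw [he, ha]; field_simp
  have he0 : 0 ≤ e := by rw [he]; positivity
  rw [← he] at hr
  have hlY : (1 : ℝ) * 1 ≤ l * Y := by gcongr
  have h1 : ρ ≤ 2 * (l * Y) := by nlinarith
  have h2 : e * (l * Y) * (32 * μ) ≤ 1 := by
    have h0 : 32 * (μ : ℝ) ≤ l * (V + 1) := by
      calc 32 * (μ : ℝ) ≤ 1 * (V + 1) := by linarith
        _ ≤ l * (V + 1) := by gcongr
    calc e * (l * Y) * (32 * μ) ≤ e * (l * Y) * (l * (V + 1)) :=
          mul_le_mul_of_nonneg_left h0 (by positivity)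
      _ = 1 := by linear_combination he1
  have h3 : |C - ρ * K| * (8 * μ) ≤ K := by
    calc |C - ρ * K| * (8 * μ) ≤ 2 * e * (2 * (l * Y) * K) * (8 * μ) := by
          gcongr
          exact hr.trans (by gcongr)
      _ = e * (l * Y) * (32 * μ) * K := by ring
      _ ≤ 1 * K := by gcongr
      _ = K := one_mul K
  have h4 : |C - l * Y * K| ≤ |C - ρ * K| + (ρ - l * Y) * K := by
    have h5 : C - l * Y * K = (C - ρ * K) + (ρ - l * Y) * K := by ring
    rw [h5]
    refine (abs_add_le _ _).trans ?_
    rw [abs_of_nonneg (a := (ρ - l * Y) * K)]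
    exact mul_nonneg (by linarith) hK.le
  have h6 : 32 * μ * (ρ - l * Y) * K ≤ 1 * K := by gcongr
  have h7 : 2 * μ * |C - l * Y * K| ≤ 2 * μ * (|C - ρ * K| + (ρ - l * Y) * K) := by gcongr
  linarith

open Pell in
/-- The converse of `bridge_backward`: with `2 b w² = 2^(2X+1)` and `l Y` the polynomial part of
`(V + 1)^(2X) / V^X`, the numbers `C` and `K` are the Lucas numbers themselves. The precision `μ`
of the quotient can be prescribed as long as `4 b μ ≤ Y`. -/
lemma bridge_forward {X Y b μ e : ℕ} (hX : 3 ≤ X) (hY : 64 ≤ Y) (hb : b = 4 ^ e) (heX : e ≤ X)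
    (hμ : 1 ≤ μ) (hYbμ : 4 * b * μ ≤ Y) (hch : Y ∣ (2 * X).choose X) :
    ∃ l w h k x y : ℤ, l ≠ 0 ∧ x ≠ 0 ∧
      IsSquare (pDFI (brA l w X Y) (2 * X + 1) (brC l w h X Y) x y) ∧
      IsSquare ((brc l w X Y ^ 2 - 1) * brK l w k X Y ^ 2 + 1) ∧
      4 * brA l w X Y - 5 ∣ brT (b : ℤ) l w h X Y ∧
      2 * μ * |brC l w h X Y - l * Y * brK l w k X Y| < |brK l w k X Y| := by
  obtain ⟨w, hw⟩ : ∃ w : ℤ, w = 2 ^ (X - e) := ⟨_, rfl⟩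
  have hwn : w.natAbs = 2 ^ (X - e) := by rw [hw, Int.natAbs_pow]; rfl
  have hwb : w.natAbs ^ 2 * b = 4 ^ X := by
    rw [hwn, hb, ← pow_mul, mul_comm (X - e), pow_mul, show (2 : ℕ) ^ 2 = 4 from rfl, ← Nat.pow_add]
    congr 1; omega
  have hw1 : 1 ≤ w.natAbs ^ 2 := by rw [hwn]; exact Nat.one_le_pow _ _ (by positivity)
  have hVY : 8 * w.natAbs ^ 2 * Y ≠ 0 := by positivity
  have hYJ : Y ∣ binJ (8 * w.natAbs ^ 2 * Y) X :=
    ((binJ_modEq _ X).dvd_iff (dvd_mul_left _ _)).2 hch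
  obtain ⟨l', hl'⟩ := hYJ
  obtain ⟨l, hl⟩ : ∃ l : ℤ, l = l' := ⟨_, rfl⟩
  obtain ⟨L, V, a, c, U, -, hV, hV2, hLl, ha, hc, haA, hcc, hUa, hUc, hU⟩ := brA_cast (l := l)
    (w := w) X Y
  rw [← hV2] at hl' hVY
  have hVpos : 0 < V := Nat.pos_of_ne_zero hVY
  have hJpos : 0 < binJ V X := (Nat.pow_pos hVpos).trans_le (pow_le_binJ V X)
  have hlpos : 0 < l := by
    rw [hl]; rw [hl'] at hJpos
    exact_mod_cast Nat.pos_of_mul_pos_left hJpos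
  have hLL : L = l' := by
    rw [hl] at hLl
    have : L ^ 2 = l' ^ 2 := by exact_mod_cast hLl
    exact Nat.pow_left_injective two_ne_zero this
  have hL : 1 ≤ L := by omega
  have hL2 : 1 ≤ L ^ 2 := Nat.one_le_pow _ _ hL
  have hXY : 192 ≤ L ^ 2 * X * Y := by
    calc 192 = 1 * 3 * 64 := by norm_num
      _ ≤ L ^ 2 * X * Y := by gcongr
  have hV512 : 512 ≤ V := by
    rw [hV2]
    calc 512 = 8 * 1 * 64 := by norm_num
      _ ≤ 8 * w.natAbs ^ 2 * Y := by gcongr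
  have hb1 : 1 ≤ b := by rw [hb]; exact Nat.one_le_pow _ _ (by norm_num)
  have hVμ : 32 * μ ≤ V := by
    rw [hV2]
    calc 32 * μ = 8 * 1 * (4 * 1 * μ) := by ring
      _ ≤ 8 * w.natAbs ^ 2 * (4 * b * μ) := by gcongr
      _ ≤ _ := by gcongr
  have haX : 64 * X * (V + 1) ≤ a := by
    rw [ha]
    have : 1 * X * 64 ≤ L ^ 2 * X * Y := by gcongr
    calc 64 * X * (V + 1) = 1 * X * 64 * (V + 1) := by ring
      _ ≤ _ := by gcongr
  have haX2 : 64 * X * 513 ≤ a := le_trans (by gcongr; omega) haX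
  have a1 : 1 < a := by omega
  have hU384 : 384 ≤ U := by rw [hU]; linarith
  have hac : 2 * a + 1 ≤ 2 * c := by
    rw [hUa, hUc, sq, mul_assoc]
    have : 384 * V ≤ U * V := by gcongr
    have h6 : U * (V + 2) ≤ U * (U * V) := by gcongr; omega
    nlinarith
  have c1 : 1 < c := by omega
  obtain ⟨hKpos, hratio⟩ := ratio_bound (X := X) a1 c1 hUa hUc (by omega) (by omega) hVpos
  obtain ⟨hJ1, hJ2⟩ := binRho_bounds hVpos (by omega : 0 < X)
  obtain ⟨h, hh⟩ := yn_modEq_sub_one a1 (2 * X + 1)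
  obtain ⟨k, hk⟩ := yn_modEq_sub_one c1 (X + 1)
  obtain ⟨x, y, hx, hxy⟩ := exists_isSquare_pDFI a1 (by omega : 0 < 2 * X + 1)
  have hC : brC l w h X Y = yn a1 (2 * X + 1) := by
    unfold brC; rw [← haA]; push_cast at hh; linarith
  have hK : brK l w k X Y = yn c1 (X + 1) := by
    unfold brK; rw [← hcc]; push_cast at hk; linarith
  refine ⟨l, w, h, k, x, y, hlpos.ne', hx, ?_, ?_, ?_, ?_⟩
  · rw [hC, ← haA]; exact_mod_cast hxy
  · rw [hK, ← hcc, ← xn_sq]; exact ⟨_, sq _⟩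
  · unfold brT
    rw [hC, ← haA]
    have h1 := (yn_two_pow_congr a1 (2 * X + 1)).1
    have h2 : (2 : ℤ) * b * w ^ 2 = 2 ^ (2 * X + 1) := by
      have h3 : ((w.natAbs ^ 2 * b : ℕ) : ℤ) = 4 ^ X := by rw [hwb]; push_cast; rfl
      push_cast at h3
      rw [sq_abs] at h3
      have h5 : (2 : ℤ) ^ (2 * X + 1) = 4 ^ X * 2 := by rw [pow_succ, pow_mul]; norm_num
      rw [h5]; linarith
    rw [h2]; exact h1
  · rw [hC, hK, Nat.abs_cast]
    have hLr : (L : ℝ) ^ 2 = (l : ℝ) ^ 2 := by exact_mod_cast hLl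
    have hJl : (binJ V X : ℝ) = l * Y := by
      rw [hl', hl]; push_cast; ring
    rw [hJl] at hJ1 hJ2
    have hfrac : 32 * μ * ((4 : ℝ) ^ X / V) ≤ 1 := by
      have h1 : 32 * μ * 4 ^ X ≤ V := by
        rw [← hwb, hV2]
        calc 32 * μ * (w.natAbs ^ 2 * b) = 8 * w.natAbs ^ 2 * (4 * b * μ) := by ring
          _ ≤ _ := by gcongr
      rw [mul_div_assoc', div_le_one (by positivity)]
      exact_mod_cast h1
    have := quotient_close (a := a) (μ := μ) (by omega) (by omega : 1 ≤ Y) hlpos hμ hVμ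
      (by rw [ha, ← hLr]; push_cast; ring) hKpos hratio hJ1
      (le_trans (mul_le_mul_of_nonneg_left (by linarith) (by positivity)) hfrac)
    exact_mod_cast this

/-! ### Binary carries and the central binomial coefficient -/

/-- The number of ones in the binary expansion of `n`. -/
def popcount (n : ℕ) : ℕ := (Nat.digits 2 n).sum

lemma popcount_zero : popcount 0 = 0 := by simp [popcount]

lemma popcount_two_mul (n : ℕ) : popcount (2 * n) = popcount n := by
  rcases Nat.eq_zero_or_pos n with rfl | hn
  · simp
  · unfold popcount
    rw [Nat.digits_def' (by norm_num) (by omega)]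
    simp

lemma popcount_two_mul_add_one (n : ℕ) : popcount (2 * n + 1) = popcount n + 1 := by
  unfold popcount
  rw [Nat.digits_def' (by norm_num) (by omega)]
  have h1 : (2 * n + 1) % 2 = 1 := by omega
  have h2 : (2 * n + 1) / 2 = n := by omega
  rw [h1, h2]
  simp [add_comm]

lemma popcount_succ_le (n : ℕ) : popcount (n + 1) ≤ popcount n + 1 := by
  induction n using Nat.strong_induction_on with
  | _ n ih =>
    rcases Nat.even_or_odd' n with ⟨m, rfl | rfl⟩
    · rw [popcount_two_mul_add_one, popcount_two_mul]
    · have : 2 * m + 1 + 1 = 2 * (m + 1) := by ring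
      rw [this, popcount_two_mul, popcount_two_mul_add_one]
      have := ih m (by omega)
      omega

lemma land_eq_zero_iff_half (a b : ℕ) :
    a &&& b = 0 ↔ (a / 2 &&& b / 2) = 0 ∧ ¬ (a % 2 = 1 ∧ b % 2 = 1) := by
  have h1 := Nat.and_div_two (a := a) (b := b)
  have h2 := Nat.and_mod_two_eq_one (a := a) (b := b)
  rw [← h1, ← h2]
  omega

/-- Adding two numbers preserves the total number of binary ones exactly when no carry occurs. -/
lemma popcount_add (a b : ℕ) :
    popcount (a + b) ≤ popcount a + popcount b ∧
      (popcount (a + b) = popcount a + popcount b ↔ a &&& b = 0) := by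
  induction a using Nat.strong_induction_on generalizing b with
  | _ a ih =>
    rcases Nat.eq_zero_or_pos a with rfl | ha
    · simp [popcount_zero]
    rw [land_eq_zero_iff_half]
    rcases Nat.even_or_odd' a with ⟨m, rfl | rfl⟩ <;>
    rcases Nat.even_or_odd' b with ⟨n, rfl | rfl⟩
    · have e : 2 * m + 2 * n = 2 * (m + n) := by ring
      have := ih m (by omega) n
      rw [e]
      simp only [popcount_two_mul]
      rw [show 2 * m / 2 = m by omega, show 2 * n / 2 = n by omega, ← this.2]
      omega
    · have e : 2 * m + (2 * n + 1) = 2 * (m + n) + 1 := by ring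
      have := ih m (by omega) n
      rw [e]
      simp only [popcount_two_mul, popcount_two_mul_add_one]
      rw [show 2 * m / 2 = m by omega, show (2 * n + 1) / 2 = n by omega, ← this.2]
      omega
    · have e : 2 * m + 1 + 2 * n = 2 * (m + n) + 1 := by ring
      have := ih m (by omega) n
      rw [e]
      simp only [popcount_two_mul, popcount_two_mul_add_one]
      rw [show (2 * m + 1) / 2 = m by omega, show 2 * n / 2 = n by omega, ← this.2]
      omega
    · have e : 2 * m + 1 + (2 * n + 1) = 2 * (m + n + 1) := by ring
      have := ih m (by omega) n
      have h3 := popcount_succ_le (m + n)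
      rw [e]
      simp only [popcount_two_mul, popcount_two_mul_add_one]
      omega

lemma popcount_mul_two_pow_add (k a b : ℕ) (hb : b < 2 ^ k) :
    popcount (a * 2 ^ k + b) = popcount a + popcount b := by
  induction k generalizing b with
  | zero =>
    have : b = 0 := by simpa using hb
    subst this; simp [popcount_zero]
  | succ k ih =>
    rcases Nat.even_or_odd' b with ⟨m, rfl | rfl⟩
    · have e : a * 2 ^ (k + 1) + 2 * m = 2 * (a * 2 ^ k + m) := by ring
      rw [e, popcount_two_mul, popcount_two_mul, ih m (by rw [pow_succ] at hb; omega)]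
    · have e : a * 2 ^ (k + 1) + (2 * m + 1) = 2 * (a * 2 ^ k + m) + 1 := by ring
      rw [e, popcount_two_mul_add_one, popcount_two_mul_add_one,
        ih m (by rw [pow_succ] at hb; omega)]
      ring

/-- Complementation of `k` binary places. -/
lemma popcount_compl (k a : ℕ) (ha : a < 2 ^ k) :
    popcount (2 ^ k - 1 - a) + popcount a = k := by
  induction k generalizing a with
  | zero =>
    have : a = 0 := by simpa using ha
    subst this; simp [popcount_zero]
  | succ k ih =>
    have hp : 2 ^ (k + 1) = 2 * 2 ^ k := by ring
    rcases Nat.even_or_odd' a with ⟨m, rfl | rfl⟩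
    · have hm : m < 2 ^ k := by omega
      have e : 2 ^ (k + 1) - 1 - 2 * m = 2 * (2 ^ k - 1 - m) + 1 := by omega
      rw [e, popcount_two_mul, popcount_two_mul_add_one]
      have := ih m hm
      omega
    · have hm : m < 2 ^ k := by omega
      have e : 2 ^ (k + 1) - 1 - (2 * m + 1) = 2 * (2 ^ k - 1 - m) := by omega
      rw [e, popcount_two_mul, popcount_two_mul_add_one]
      have := ih m hm
      omega

/-- Kummer's theorem for the central binomial coefficient. -/
lemma padicValNat_two_central (n : ℕ) : padicValNat 2 ((2 * n).choose n) = popcount n := by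
  have h := sub_one_mul_padicValNat_choose_eq_sub_sum_digits' (p := 2) (k := n) (n := n)
  have e : n + n = 2 * n := by ring
  rw [e] at h
  have h2 : (Nat.digits 2 (2 * n)).sum = popcount n := popcount_two_mul n
  rw [h2] at h
  have h3 : (Nat.digits 2 n).sum = popcount n := rfl
  rw [h3] at h
  omega

/-- Disjointness of the binary supports of `S` and `T` is equivalent to a divisibility of one
central binomial coefficient. -/
lemma dvd_central_iff_land {k N S T : ℕ} (hN : N = 2 ^ k) (hS : S < N) (hT : T < N) :
    N ^ 2 ∣ (2 * ((N - 1) * ((S + T + 1) * N + T + 1))).choose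
      ((N - 1) * ((S + T + 1) * N + T + 1)) ↔ S &&& T = 0 := by
  have hN1 : 1 ≤ N := by omega
  have hX : (N - 1) * ((S + T + 1) * N + T + 1)
      = ((S + T) * 2 ^ k + (2 ^ k - 1 - S)) * 2 ^ k + (2 ^ k - 1 - T) := by
    rw [← hN]
    zify [hN1, (by omega : S ≤ N - 1), (by omega : T ≤ N - 1)]
    ring
  have hdvd : ∀ n, N ^ 2 ∣ (2 * n).choose n ↔ 2 * k ≤ popcount n := by
    intro n
    have hne : (2 * n).choose n ≠ 0 := (Nat.choose_pos (by omega)).ne'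
    rw [hN, ← pow_mul, mul_comm k 2, padicValNat_dvd_iff_le hne, padicValNat_two_central]
  subst hN
  rw [hdvd, hX, popcount_mul_two_pow_add _ _ _ (by omega),
    popcount_mul_two_pow_add _ _ _ (by omega)]
  have h1 := popcount_compl k S hS
  have h2 := popcount_compl k T hT
  have h3 := popcount_add S T
  rw [← h3.2]
  omega

/-! ### Binary disjointness of numbers written in base `2^k` -/

lemma land_block {k d m x y : ℕ} (hd : d < 2 ^ k) (hm : m < 2 ^ k) :
    (d + 2 ^ k * x) &&& (m + 2 ^ k * y) = 0 ↔ d &&& m = 0 ∧ x &&& y = 0 := by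
  have h1 := Nat.and_div_two_pow (a := d + 2 ^ k * x) (b := m + 2 ^ k * y) (n := k)
  have h2 := Nat.and_mod_two_pow (a := d + 2 ^ k * x) (b := m + 2 ^ k * y) (n := k)
  have hk : 0 < 2 ^ k := by positivity
  rw [Nat.add_mul_div_left _ _ hk, Nat.add_mul_div_left _ _ hk, Nat.div_eq_of_lt hd,
    Nat.div_eq_of_lt hm, zero_add, zero_add] at h1
  rw [Nat.add_mul_mod_self_left, Nat.add_mul_mod_self_left, Nat.mod_eq_of_lt hd,
    Nat.mod_eq_of_lt hm] at h2
  rw [← h1, ← h2]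
  constructor
  · intro h; simp [h]
  · rintro ⟨ha, hb⟩
    rw [← Nat.div_add_mod (d + 2 ^ k * x &&& m + 2 ^ k * y) (2 ^ k), ha, hb]
    simp

/-- For a mask given by its base-`2^k` digits, binary disjointness is tested digit by digit. -/
lemma land_digits {k : ℕ} (n : ℕ) (S : ℕ) (m : ℕ → ℕ) (hm : ∀ j, m j < 2 ^ k) :
    S &&& (∑ j ∈ Finset.range n, m j * (2 ^ k) ^ j) = 0 ↔
      ∀ j < n, (S / (2 ^ k) ^ j % 2 ^ k) &&& m j = 0 := by
  induction n generalizing S m with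
  | zero => simp
  | succ n ih =>
    have hk : 0 < 2 ^ k := by positivity
    have e : (∑ j ∈ Finset.range (n + 1), m j * (2 ^ k) ^ j)
        = m 0 + 2 ^ k * (∑ j ∈ Finset.range n, m (j + 1) * (2 ^ k) ^ j) := by
      rw [Finset.sum_range_succ', Finset.mul_sum, add_comm]
      simp only [pow_zero, mul_one]
      congr 1
      exact Finset.sum_congr rfl fun j _ => by rw [pow_succ (2 ^ k) j]; ring
    rw [e]
    conv_lhs => rw [← Nat.mod_add_div S (2 ^ k)]
    rw [land_block (Nat.mod_lt _ hk) (hm 0), ih _ (fun j => m (j + 1)) (fun j => hm _)]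
    have e2 : ∀ j, S / 2 ^ k / (2 ^ k) ^ j = S / (2 ^ k) ^ (j + 1) := by
      intro j; rw [Nat.div_div_eq_div_mul, pow_succ (2 ^ k) j, mul_comm]
    simp only [e2]
    constructor
    · rintro ⟨h0, h⟩ j hj
      rcases j with _ | j
      · simpa using h0
      · exact h j (by omega)
    · intro h
      exact ⟨by simpa using h 0 (by omega), fun j hj => h (j + 1) (by omega)⟩

lemma land_full {k d : ℕ} (hd : d < 2 ^ k) : d &&& (2 ^ k - 1) = 0 ↔ d = 0 := by
  rw [Nat.and_two_pow_sub_one_eq_mod, Nat.mod_eq_of_lt hd]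

/-- The mask `2^k - 2^e` tests whether a digit is smaller than `2^e`. -/
lemma land_high {k e d : ℕ} (he : e ≤ k) (hd : d < 2 ^ k) : d &&& (2 ^ k - 2 ^ e) = 0 ↔ d < 2 ^ e := by
  have hpos : 0 < 2 ^ e := by positivity
  have hk : 2 ^ k = 2 ^ e * 2 ^ (k - e) := by rw [← pow_add]; congr 1; omega
  have e1 : 2 ^ k - 2 ^ e = 0 + 2 ^ e * (2 ^ (k - e) - 1) := by
    rw [Nat.mul_sub, hk]; simp
  rw [e1]
  conv_lhs => rw [← Nat.mod_add_div d (2 ^ e)]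
  rw [land_block (Nat.mod_lt _ hpos) hpos, land_full (Nat.div_lt_of_lt_mul (hk ▸ hd))]
  simp [Nat.div_eq_zero_iff]

/-- The mask `2^k - 1` admits exactly the digits `0` and `2^k` below `2^(k+1)`. -/
lemma land_half {k d : ℕ} (hd : d < 2 ^ (k + 1)) :
    d &&& (2 ^ k - 1) = 0 ↔ d = 0 ∨ d = 2 ^ k := by
  rw [Nat.and_two_pow_sub_one_eq_mod, ← Nat.dvd_iff_mod_eq_zero]
  constructor
  · rintro ⟨c, rfl⟩
    have : c < 2 := by
      rw [pow_succ] at hd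
      exact Nat.lt_of_mul_lt_mul_left hd
    interval_cases c <;> simp
  · rintro (rfl | rfl) <;> simp

/-! ### Digits of integer combinations of powers of the base -/

lemma sum_digits_lt {β : ℕ} (n : ℕ) (d : ℕ → ℕ) (hd : ∀ j < n, d j < β) :
    ∑ j ∈ Finset.range n, d j * β ^ j < β ^ n := by
  induction n with
  | zero => simp
  | succ n ih =>
    rw [Finset.sum_range_succ, pow_succ]
    have h1 := ih fun j hj => hd j (by omega)
    have h2 : (d n + 1) * β ^ n ≤ β * β ^ n := Nat.mul_le_mul_right _ (hd n (by omega))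
    nlinarith

lemma digit_sum {β : ℕ} (hβ : 0 < β) (n : ℕ) (d : ℕ → ℕ) (hd : ∀ j < n, d j < β) (i : ℕ)
    (hi : i < n) : (∑ j ∈ Finset.range n, d j * β ^ j) / β ^ i % β = d i := by
  induction n generalizing d i with
  | zero => omega
  | succ n ih =>
    have e : (∑ j ∈ Finset.range (n + 1), d j * β ^ j)
        = d 0 + β * (∑ j ∈ Finset.range n, d (j + 1) * β ^ j) := by
      rw [Finset.sum_range_succ', Finset.mul_sum, add_comm]
      simp only [pow_zero, mul_one]
      congr 1
      exact Finset.sum_congr rfl fun j _ => by rw [pow_succ β j]; ring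
    rw [e]
    rcases i with _ | i
    · simp [Nat.mod_eq_of_lt (hd 0 (by omega))]
    · rw [pow_succ', ← Nat.div_div_eq_div_mul, Nat.add_mul_div_left _ _ hβ,
        Nat.div_eq_of_lt (hd 0 (by omega)), zero_add]
      exact ih (fun j => d (j + 1)) (fun j hj => hd _ (by omega)) i (by omega)

lemma eq_sum_digits {β : ℕ} (n g : ℕ) (hg : g < β ^ n) :
    g = ∑ j ∈ Finset.range n, (g / β ^ j % β) * β ^ j := by
  induction n generalizing g with
  | zero => simpa using hg
  | succ n ih =>
    have h := ih (g / β) (Nat.div_lt_of_lt_mul (by rwa [pow_succ'] at hg))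
    rw [Finset.sum_range_succ']
    have e : ∑ j ∈ Finset.range n, (g / β ^ (j + 1) % β) * β ^ (j + 1) = β * (g / β) := by
      conv_rhs => rw [h]
      rw [Finset.mul_sum]
      refine Finset.sum_congr rfl fun j _ => ?_
      rw [Nat.div_div_eq_div_mul, pow_succ']; ring
    rw [e]
    simp [Nat.div_add_mod]

/-- Adding `h` in every place makes the base-`2h` digits of an integer combination of powers with
small coefficients visible: each digit is `h` plus the collected coefficient. -/
lemma digit_shifted {ι : Type*} (s : Finset ι) (c : ι → ℤ) (e : ι → ℕ) (n h K : ℕ)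
    (he : ∀ i ∈ s, e i < n) (hc : ∑ i ∈ s, |c i| < h)
    (hK : (K : ℤ) = ∑ i ∈ s, c i * (2 * h : ℤ) ^ e i
      + h * ∑ j ∈ Finset.range n, (2 * h : ℤ) ^ j) (j : ℕ) (hj : j < n) :
    0 < K / (2 * h) ^ j % (2 * h) ∧
    ((K / (2 * h) ^ j % (2 * h) : ℕ) : ℤ) = (∑ i ∈ s with e i = j, c i) + h := by
  have hh : 0 < h := by
    have : 0 ≤ ∑ i ∈ s, |c i| := Finset.sum_nonneg fun _ _ => abs_nonneg _
    omega
  have hfib : ∀ j, |∑ i ∈ s with e i = j, c i| < h := by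
    intro j
    refine lt_of_le_of_lt (Finset.abs_sum_le_sum_abs _ _) (lt_of_le_of_lt ?_ hc)
    exact Finset.sum_le_sum_of_subset_of_nonneg (Finset.filter_subset _ _)
      fun _ _ _ => abs_nonneg _
  obtain ⟨d, hd⟩ : ∃ d : ℕ → ℕ, ∀ j, (d j : ℤ) = (∑ i ∈ s with e i = j, c i) + h := by
    refine ⟨fun j => ((∑ i ∈ s with e i = j, c i) + h).toNat, fun j => ?_⟩
    have := abs_lt.mp (hfib j)
    exact Int.toNat_of_nonneg (by omega)
  have hdlt : ∀ j, 0 < d j ∧ d j < 2 * h := by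
    intro j
    have h1 := abs_lt.mp (hfib j)
    have h2 := hd j
    constructor <;> omega
  have hsum : K = ∑ j ∈ Finset.range n, d j * (2 * h) ^ j := by
    zify
    rw [hK]
    simp only [hd, add_mul, Finset.sum_add_distrib, Finset.mul_sum, Finset.sum_mul]
    congr 1
    rw [← Finset.sum_fiberwise_of_maps_to (s := s) (t := Finset.range n) (g := e)
      (fun i hi => Finset.mem_range.mpr (he i hi))]
    refine Finset.sum_congr rfl fun j _ => Finset.sum_congr rfl fun i hi => ?_
    rw [(Finset.mem_filter.mp hi).2]
  have hdig : K / (2 * h) ^ j % (2 * h) = d j := by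
    rw [hsum]
    exact digit_sum (by omega) n d (fun j _ => (hdlt j).2) j hj
  rw [hdig]
  exact ⟨(hdlt j).1, hd j⟩

/-- Uniqueness of base-`(δ+1)` expansions. -/
lemma base_injective {ν δ : ℕ} {k m : Fin (ν + 1) → ℕ} (hk : ∀ i, k i ≤ δ) (hm : ∀ i, m i ≤ δ)
    (h : ∑ i, k i * (δ + 1) ^ (i : ℕ) = ∑ i, m i * (δ + 1) ^ (i : ℕ)) : k = m := by
  have hinj := (finFunctionFinEquiv (m := δ + 1) (n := ν + 1)).injective
    (a₁ := fun i => ⟨k i, by have := hk i; omega⟩) (a₂ := fun i => ⟨m i, by have := hm i; omega⟩)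
  have h2 := hinj (by
    apply Fin.ext
    rw [finFunctionFinEquiv_apply, finFunctionFinEquiv_apply]
    exact h)
  funext i
  have := congrFun h2 i
  simpa using this

lemma base_lt {ν δ : ℕ} {m : Fin (ν + 1) → ℕ} (hm : ∀ i, m i ≤ δ) :
    ∑ i, m i * (δ + 1) ^ (i : ℕ) < (δ + 1) ^ (ν + 1) := by
  have h := (finFunctionFinEquiv (m := δ + 1) (n := ν + 1)
    (fun i => ⟨m i, by have := hm i; omega⟩)).isLt
  rwa [finFunctionFinEquiv_apply] at h

/-! ### The encoded polynomial -/

open scoped Nat in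
/-- The coefficient of `m` in `P`, weighted so that a multinomial coefficient times it is
`δ!` times the original coefficient. -/
noncomputable def cdW {ν : ℕ} (δ : ℕ) (P : MvPolynomial (Fin (ν + 1)) ℤ) (m : Fin (ν + 1) →₀ ℕ) :
    ℤ :=
  (((∏ i, (m i)!) * (δ - ∑ i, m i)! : ℕ) : ℤ) * coeff m P

/-- The position `∑ mᵢ (δ+1)^i` encoding the exponent vector `m`. -/
def cdPos {ν : ℕ} (δ : ℕ) (m : Fin (ν + 1) → ℕ) : ℕ := ∑ i, m i * (δ + 1) ^ (i : ℕ)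

/-- The weighted coefficients of `P`, placed at the positions `(δ+1)^(ν+1) - cdPos δ m` in
base `β`. -/
noncomputable def cdD {R : Type*} [CommRing R] {ν : ℕ} (δ : ℕ) (P : MvPolynomial (Fin (ν + 1)) ℤ)
    (β : R) : R :=
  ∑ m ∈ P.support, (cdW δ P m : R) * β ^ ((δ + 1) ^ (ν + 1) - cdPos δ m)

/-- Index set of the terms in the expansion of the product of `(1 + ∑ uᵢ β^((δ+1)^i))^δ` with
`cdD`. -/
noncomputable def cdIdx {ν : ℕ} (δ : ℕ) (P : MvPolynomial (Fin (ν + 1)) ℤ) :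
    Finset ((Option (Fin (ν + 1)) → ℕ) × (Fin (ν + 1) →₀ ℕ)) :=
  Finset.piAntidiag Finset.univ δ ×ˢ P.support

/-- Coefficient of a term of the expansion. -/
noncomputable def cdCf {ν : ℕ} (δ : ℕ) (P : MvPolynomial (Fin (ν + 1)) ℤ) (u : Fin (ν + 1) → ℤ)
    (x : (Option (Fin (ν + 1)) → ℕ) × (Fin (ν + 1) →₀ ℕ)) : ℤ :=
  (Nat.multinomial Finset.univ x.1 * ∏ o, (o.elim 1 u : ℤ) ^ x.1 o) * cdW δ P x.2

/-- Exponent of `β` in a term of the expansion. -/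
def cdEx {ν : ℕ} (δ : ℕ) (x : (Option (Fin (ν + 1)) → ℕ) × (Fin (ν + 1) →₀ ℕ)) : ℕ :=
  cdPos δ (fun i => x.1 (some i)) + ((δ + 1) ^ (ν + 1) - cdPos δ x.2)

/-- The multinomial expansion of the product of the `δ`-th power of the code with the encoded
polynomial. -/
lemma cd_expand {ν : ℕ} (δ : ℕ) (P : MvPolynomial (Fin (ν + 1)) ℤ) (u : Fin (ν + 1) → ℤ) (β : ℤ) :
    (1 + ∑ i, u i * β ^ ((δ + 1) ^ (i : ℕ))) ^ δ * cdD δ P β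
      = ∑ x ∈ cdIdx δ P, cdCf δ P u x * β ^ cdEx δ x := by
  have h1 : (1 + ∑ i, u i * β ^ ((δ + 1) ^ (i : ℕ)))
      = ∑ o : Option (Fin (ν + 1)), (o.elim 1 u : ℤ) * o.elim 1 (fun i => β ^ ((δ + 1) ^ (i : ℕ))) := by
    rw [Fintype.sum_option]; simp
  rw [h1, Finset.sum_pow_eq_sum_piAntidiag, cdD, Finset.sum_mul_sum, ← Finset.sum_product']
  refine Finset.sum_congr rfl fun x _ => ?_
  have h2 : ∏ o : Option (Fin (ν + 1)), ((o.elim 1 u : ℤ) * o.elim 1 (fun i => β ^ ((δ + 1) ^ (i : ℕ)))) ^ x.1 o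
      = (∏ o, (o.elim 1 u : ℤ) ^ x.1 o) * β ^ cdPos δ (fun i => x.1 (some i)) := by
    simp only [mul_pow, Finset.prod_mul_distrib]
    congr 1
    rw [Fintype.prod_option]
    simp only [Option.elim, one_pow, one_mul, cdPos, ← pow_mul, Finset.prod_pow_eq_pow_sum]
    congr 1
    exact Finset.sum_congr rfl fun i _ => mul_comm _ _
  rw [h2, cdCf, cdEx, pow_add]
  push_cast
  ring

lemma cd_deg_le {ν δ : ℕ} {P : MvPolynomial (Fin (ν + 1)) ℤ} (hP : P.totalDegree ≤ δ)
    {m : Fin (ν + 1) →₀ ℕ} (hm : m ∈ P.support) : ∑ i, m i ≤ δ := by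
  refine le_trans ?_ hP
  have := le_totalDegree hm
  rwa [Finsupp.sum_fintype _ _ (fun _ => rfl)] at this

lemma cd_le_of_sum {ν δ : ℕ} {m : Fin (ν + 1) → ℕ} (hm : ∑ i, m i ≤ δ) (i) : m i ≤ δ :=
  le_trans (Finset.single_le_sum (fun _ _ => Nat.zero_le _) (Finset.mem_univ i)) hm

lemma cd_some_sum {ν δ : ℕ} {k : Option (Fin (ν + 1)) → ℕ}
    (hk : k ∈ Finset.piAntidiag Finset.univ δ) : k none + ∑ i, k (some i) = δ := by
  rw [Finset.mem_piAntidiag] at hk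
  rw [← hk.1, Fintype.sum_option]

open scoped Nat in
/-- The coefficient of `β^((δ+1)^(ν+1))` in the expansion is `δ! · P(u)`. -/
lemma cd_fiber {ν δ : ℕ} {P : MvPolynomial (Fin (ν + 1)) ℤ} (hP : P.totalDegree ≤ δ)
    (u : Fin (ν + 1) → ℤ) :
    ∑ x ∈ cdIdx δ P with cdEx δ x = (δ + 1) ^ (ν + 1), cdCf δ P u x = δ ! * eval u P := by
  rw [Finset.sum_filter, cdIdx, Finset.sum_product_right, eval_eq', Finset.mul_sum]
  refine Finset.sum_congr rfl fun m hm => ?_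
  have hdeg := cd_deg_le hP hm
  obtain ⟨k₀, hk₀⟩ : ∃ k₀ : Option (Fin (ν + 1)) → ℕ, k₀ = fun o => o.elim (δ - ∑ i, m i) m :=
    ⟨_, rfl⟩
  have hlt : cdPos δ m < (δ + 1) ^ (ν + 1) := base_lt (cd_le_of_sum hdeg)
  have hk₀mem : k₀ ∈ Finset.piAntidiag Finset.univ δ := by
    rw [Finset.mem_piAntidiag]
    refine ⟨?_, fun _ _ => Finset.mem_univ _⟩
    rw [Fintype.sum_option, hk₀]
    simp only [Option.elim]
    omega
  rw [Finset.sum_eq_single k₀]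
  · rw [if_pos]
    · have hsp := Nat.multinomial_spec (s := Finset.univ) (f := k₀)
      rw [(Finset.mem_piAntidiag.mp hk₀mem).1, Fintype.prod_option] at hsp
      have hcf : cdCf δ P u (k₀, m) = ((((k₀ none)! * ∏ i, (k₀ (some i))!) *
          Nat.multinomial Finset.univ k₀ : ℕ) : ℤ) * (coeff m P * ∏ i, u i ^ m i) := by
        simp only [cdCf, cdW, Fintype.prod_option, hk₀, Option.elim, one_pow, one_mul]
        push_cast
        ring
      rw [hcf, hsp]
    · simp only [cdEx, hk₀, Option.elim]
      change cdPos δ m + _ = _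
      omega
  · intro k hk hne
    rw [if_neg]
    intro he
    apply hne
    have hks := cd_some_sum hk
    have hpos : cdPos δ (fun i => k (some i)) = cdPos δ m := by
      simp only [cdEx] at he
      omega
    have hinj := base_injective (cd_le_of_sum (by omega)) (cd_le_of_sum hdeg) hpos
    funext o
    rw [hk₀]
    rcases o with _ | i
    · have : ∑ i, k (some i) = ∑ i, m i := Finset.sum_congr rfl fun i _ => congrFun hinj i
      simp only [Option.elim]
      omega
    · exact congrFun hinj i
  · intro h; exact absurd hk₀mem h

/-- Sum of the absolute values of the weighted coefficients. -/
noncomputable def cdL {ν : ℕ} (δ : ℕ) (P : MvPolynomial (Fin (ν + 1)) ℤ) : ℤ :=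
  ∑ m ∈ P.support, |cdW δ P m|

lemma cdL_nonneg {ν : ℕ} (δ : ℕ) (P : MvPolynomial (Fin (ν + 1)) ℤ) : 0 ≤ cdL δ P :=
  Finset.sum_nonneg fun _ _ => abs_nonneg _

/-- The coefficients of the expansion are small compared with `2^t b^δ` when `2^t` exceeds
`(ν + 2)^δ * cdL δ P`. -/
lemma cd_sum_abs {ν δ : ℕ} {P : MvPolynomial (Fin (ν + 1)) ℤ} (u : Fin (ν + 1) → ℤ) (b : ℤ)
    (hb : 1 ≤ b) (hu : ∀ i, 0 ≤ u i) (hub : ∀ i, u i ≤ b) :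
    ∑ x ∈ cdIdx δ P, |cdCf δ P u x| ≤ ((ν + 2) * b) ^ δ * cdL δ P := by
  have h0 : ∀ o : Option (Fin (ν + 1)), 0 ≤ (o.elim 1 u : ℤ) := by
    intro o; rcases o with _ | i
    · simp
    · exact hu i
  have h1 : ∑ x ∈ cdIdx δ P, |cdCf δ P u x|
      = (∑ o : Option (Fin (ν + 1)), (o.elim 1 u : ℤ)) ^ δ * cdL δ P := by
    rw [Finset.sum_pow_eq_sum_piAntidiag, cdL, Finset.sum_mul_sum, ← Finset.sum_product']
    refine Finset.sum_congr rfl fun x _ => ?_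
    rw [cdCf, abs_mul, abs_of_nonneg]
    exact mul_nonneg (Nat.cast_nonneg _) (Finset.prod_nonneg fun o _ => pow_nonneg (h0 o) _)
  rw [h1]
  refine mul_le_mul_of_nonneg_right (pow_le_pow_left₀ (Finset.sum_nonneg fun o _ => h0 o) ?_ _)
    (cdL_nonneg δ P)
  calc (∑ o : Option (Fin (ν + 1)), (o.elim 1 u : ℤ)) ≤ ∑ o : Option (Fin (ν + 1)), b := by
        refine Finset.sum_le_sum fun o _ => ?_
        rcases o with _ | i
        · simpa using hb
        · exact hub i
    _ = (ν + 2) * b := by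
        simp only [Finset.sum_const, Finset.card_univ, Fintype.card_option, Fintype.card_fin,
          nsmul_eq_mul]
        push_cast; ring

lemma cdEx_lt {ν δ : ℕ} {P : MvPolynomial (Fin (ν + 1)) ℤ}
    {x : (Option (Fin (ν + 1)) → ℕ) × (Fin (ν + 1) →₀ ℕ)} (hx : x ∈ cdIdx δ P) :
    cdEx δ x ≤ δ * (δ + 1) ^ ν + (δ + 1) ^ (ν + 1) := by
  have hs := cd_some_sum (Finset.mem_product.mp hx).1
  have h : cdPos δ (fun i => x.1 (some i)) ≤ (∑ i, x.1 (some i)) * (δ + 1) ^ ν := by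
    rw [cdPos, Finset.sum_mul]
    refine Finset.sum_le_sum fun i _ => Nat.mul_le_mul_left _ ?_
    exact Nat.pow_le_pow_right (by omega) (by omega)
  have h2 : (∑ i, x.1 (some i)) * (δ + 1) ^ ν ≤ δ * (δ + 1) ^ ν := Nat.mul_le_mul_right _ (by omega)
  unfold cdEx
  omega

lemma cdD_abs_le {ν δ : ℕ} (P : MvPolynomial (Fin (ν + 1)) ℤ) {β : ℤ} (hβ : 1 ≤ β) :
    |cdD δ P β| ≤ cdL δ P * β ^ ((δ + 1) ^ (ν + 1)) := by
  rw [cdD, cdL, Finset.sum_mul]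
  refine le_trans (Finset.abs_sum_le_sum_abs _ _) (Finset.sum_le_sum fun m _ => ?_)
  rw [abs_mul, abs_of_nonneg (pow_nonneg (by omega : (0 : ℤ) ≤ β) _)]
  exact mul_le_mul_of_nonneg_left (pow_le_pow_right₀ hβ (by omega)) (abs_nonneg _)

/-! ### The numbers of the disjointness test -/

/-- Length, in base `β`, of the block that holds the code of the unknowns. -/
def cdN0 (ν δ : ℕ) : ℕ := (δ + 1) ^ ν + 1

/-- Length, in base `β`, of the block that holds the encoded value of the polynomial. -/
def cdN1 (ν δ : ℕ) : ℕ := δ * (cdN0 ν δ + 1) + (δ + 1) ^ (ν + 1) + 3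

/-- The encoded value of the polynomial, with every base-`2h` digit shifted by `h`. -/
noncomputable def cdK {R : Type*} [CommRing R] {ν : ℕ} (δ : ℕ) (P : MvPolynomial (Fin (ν + 1)) ℤ)
    (a h g : R) : R :=
  (1 + a * (2 * h) + g) ^ δ * cdD δ P (2 * h) + h * ∑ j ∈ Finset.range (cdN1 ν δ), (2 * h) ^ j

/-- The first number of the binary-disjointness test: the code `g` and the encoded value of the
polynomial, side by side in base `2h`. -/
noncomputable def cdS {R : Type*} [CommRing R] {ν : ℕ} (δ : ℕ) (P : MvPolynomial (Fin (ν + 1)) ℤ)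
    (a h g : R) : R :=
  g + (2 * h) ^ cdN0 ν δ * cdK δ P a h g

open scoped Classical in
/-- The mask that, for `b` and `2h` powers of two, is binary-disjoint from exactly those codes
whose digits are smaller than `b` at the places `(δ+1)^(i+1)` and zero elsewhere. -/
noncomputable def cdMask {R : Type*} [CommRing R] (ν δ : ℕ) (b h : R) : R :=
  ∑ j ∈ Finset.range (cdN0 ν δ),
    (2 * h - if ∃ i : Fin ν, j = (δ + 1) ^ ((i : ℕ) + 1) then b else 1) * (2 * h) ^ j

/-- The second number of the binary-disjointness test. -/
noncomputable def cdT {R : Type*} [CommRing R] (ν δ : ℕ) (b h : R) : R :=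
  cdMask ν δ b h + (2 * h) ^ cdN0 ν δ * ((h - 1) * (2 * h) ^ ((δ + 1) ^ (ν + 1)))

/-- Adding `h` at every place makes a small integer natural without producing an overflow. -/
lemma cd_shift_bounds {h E : ℤ} (hh : 2 ≤ h) (m : ℕ) (hE : |E| ≤ (2 * h) ^ (m + 1)) :
    0 ≤ E + h * ∑ j ∈ Finset.range (m + 3), (2 * h) ^ j ∧
      E + h * ∑ j ∈ Finset.range (m + 3), (2 * h) ^ j < (2 * h) ^ (m + 3) := by
  have hg := geom_sum_mul (2 * h) (m + 3)
  have hS : (2 * h) ^ (m + 1) ≤ ∑ j ∈ Finset.range (m + 3), (2 * h) ^ j := by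
    refine Finset.single_le_sum (f := fun j => (2 * h) ^ j) (fun j _ => by positivity) ?_
    exact Finset.mem_range.mpr (by omega)
  obtain ⟨s₀, hs₀⟩ : ∃ s, s = ∑ j ∈ Finset.range (m + 3), (2 * h) ^ j := ⟨_, rfl⟩
  rw [← hs₀] at hg hS ⊢
  have hp : 0 ≤ (2 * h) ^ (m + 1) := by positivity
  have hab := abs_le.mp hE
  have h1 : 2 * s₀ ≤ h * s₀ := mul_le_mul_of_nonneg_right hh (by omega)
  constructor
  · linarith
  · nlinarith

/-- The mask is disjoint from exactly those `g` whose digits are below `2^e` at the places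
`(δ+1)^(i+1)` and vanish elsewhere. -/
lemma land_mask {ν δ k e g : ℕ} (hδ : 0 < δ) (he : e ≤ k) (hg : g < (2 ^ k) ^ cdN0 ν δ)
    {T : ℕ} (m : ℕ → ℕ) (hm1 : ∀ i : Fin ν, m ((δ + 1) ^ ((i : ℕ) + 1)) = 2 ^ k - 2 ^ e)
    (hm2 : ∀ j, (¬ ∃ i : Fin ν, j = (δ + 1) ^ ((i : ℕ) + 1)) → m j = 2 ^ k - 1)
    (hT : T = ∑ j ∈ Finset.range (cdN0 ν δ), m j * (2 ^ k) ^ j) :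
    g &&& T = 0 ↔ ∃ z : Fin ν → ℕ, (∀ i, z i < 2 ^ e) ∧
      g = ∑ i, z i * (2 ^ k) ^ ((δ + 1) ^ ((i : ℕ) + 1)) := by
  classical
  have hk : 0 < 2 ^ k := by positivity
  have hek : 2 ^ e ≤ 2 ^ k := Nat.pow_le_pow_right (by norm_num) he
  have hepos : 0 < 2 ^ e := by positivity
  have hinj : Function.Injective (fun i : Fin ν => (δ + 1) ^ ((i : ℕ) + 1)) := by
    intro i j hij
    have := Nat.pow_right_injective (by omega : 2 ≤ δ + 1) hij
    exact Fin.ext (by omega)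
  have hlt : ∀ i : Fin ν, (δ + 1) ^ ((i : ℕ) + 1) < cdN0 ν δ := by
    intro i
    have := Nat.pow_le_pow_right (by omega : 0 < δ + 1) (by omega : (i : ℕ) + 1 ≤ ν)
    unfold cdN0; omega
  have hm : ∀ j, m j < 2 ^ k := by
    intro j
    by_cases hj : ∃ i : Fin ν, j = (δ + 1) ^ ((i : ℕ) + 1)
    · obtain ⟨i, rfl⟩ := hj
      rw [hm1]; omega
    · rw [hm2 j hj]; omega
  rw [hT, land_digits _ _ _ hm]
  constructor
  · intro h
    refine ⟨fun i => g / (2 ^ k) ^ ((δ + 1) ^ ((i : ℕ) + 1)) % 2 ^ k, fun i => ?_, ?_⟩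
    · have := h _ (hlt i)
      rwa [hm1, land_high he (Nat.mod_lt _ hk)] at this
    · conv_lhs => rw [eq_sum_digits _ _ hg]
      have himg := Finset.sum_image (s := Finset.univ)
        (f := fun j => g / (2 ^ k) ^ j % 2 ^ k * (2 ^ k) ^ j)
        (g := fun i : Fin ν => (δ + 1) ^ ((i : ℕ) + 1)) (fun i _ j _ hij => hinj hij)
      rw [← himg]
      symm
      refine Finset.sum_subset ?_ ?_
      · intro j hj
        obtain ⟨i, -, rfl⟩ := Finset.mem_image.mp hj
        exact Finset.mem_range.mpr (hlt i)
      · intro j hj hj2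
        have hne : ¬ ∃ i : Fin ν, j = (δ + 1) ^ ((i : ℕ) + 1) := by
          rintro ⟨i, rfl⟩
          exact hj2 (Finset.mem_image_of_mem _ (Finset.mem_univ i))
        have := h j (Finset.mem_range.mp hj)
        rw [hm2 j hne, land_full (Nat.mod_lt _ hk)] at this
        rw [this, zero_mul]
  · rintro ⟨z, hz, hgz⟩
    obtain ⟨d, hd⟩ : ∃ d : ℕ → ℕ, d = fun j => ∑ i with (δ + 1) ^ ((i : Fin ν).val + 1) = j, z i :=
      ⟨_, rfl⟩
    have hd1 : ∀ i : Fin ν, d ((δ + 1) ^ ((i : ℕ) + 1)) = z i := by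
      intro i
      rw [hd]
      have : (Finset.univ.filter fun i' : Fin ν =>
          (δ + 1) ^ (i'.val + 1) = (δ + 1) ^ ((i : ℕ) + 1)) = {i} := by
        ext i'
        simp only [Finset.mem_filter, Finset.mem_univ, true_and, Finset.mem_singleton]
        exact ⟨fun h => hinj h, fun h => by rw [h]⟩
      simp only [this, Finset.sum_singleton]
    have hd2 : ∀ j, (¬ ∃ i : Fin ν, j = (δ + 1) ^ ((i : ℕ) + 1)) → d j = 0 := by
      intro j hj
      rw [hd]
      refine Finset.sum_eq_zero fun i hi => ?_
      exact absurd ⟨i, (Finset.mem_filter.mp hi).2.symm⟩ hj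
    have hdlt : ∀ j, d j < 2 ^ k := by
      intro j
      by_cases hj : ∃ i : Fin ν, j = (δ + 1) ^ ((i : ℕ) + 1)
      · obtain ⟨i, rfl⟩ := hj
        rw [hd1]; exact lt_of_lt_of_le (hz i) hek
      · rw [hd2 j hj]; exact hk
    have hsum : g = ∑ j ∈ Finset.range (cdN0 ν δ), d j * (2 ^ k) ^ j := by
      rw [hgz, ← Finset.sum_fiberwise_of_maps_to (s := Finset.univ)
        (t := Finset.range (cdN0 ν δ)) (g := fun i : Fin ν => (δ + 1) ^ ((i : ℕ) + 1))
        (fun i _ => Finset.mem_range.mpr (hlt i))]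
      refine Finset.sum_congr rfl fun j _ => ?_
      rw [hd, Finset.sum_mul]
      refine Finset.sum_congr rfl fun i hi => ?_
      rw [(Finset.mem_filter.mp hi).2]
    intro j hj
    rw [hsum, digit_sum hk _ _ (fun j _ => hdlt j) j hj]
    by_cases hj : ∃ i : Fin ν, j = (δ + 1) ^ ((i : ℕ) + 1)
    · obtain ⟨i, rfl⟩ := hj
      rw [hm1, hd1, land_high he (lt_of_lt_of_le (hz i) hek)]
      exact hz i
    · rw [hd2 j hj]; simp

/-! ### Zeros of the polynomial as binary disjointness -/

/-- A mask `2^k - 1` at the single place `M` tests whether the base-`2^(k+1)` digit there is `0` or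
`2^k`. -/
lemma land_place {k n M K : ℕ} (hM : M < n) {T : ℕ} (hT : T = (2 ^ k - 1) * (2 ^ (k + 1)) ^ M) :
    K &&& T = 0 ↔ K / (2 ^ (k + 1)) ^ M % 2 ^ (k + 1) = 0 ∨
      K / (2 ^ (k + 1)) ^ M % 2 ^ (k + 1) = 2 ^ k := by
  have hk : 2 ^ k < 2 ^ (k + 1) := Nat.pow_lt_pow_right (by norm_num) (by omega)
  have hT' : T = ∑ j ∈ Finset.range n, (if j = M then 2 ^ k - 1 else 0) * (2 ^ (k + 1)) ^ j := by
    rw [hT, Finset.sum_eq_single M]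
    · simp
    · intro j _ hj; simp [hj]
    · intro h; exact absurd (Finset.mem_range.mpr hM) h
  rw [hT', land_digits _ _ _ (by intro j; split_ifs <;> omega)]
  rw [← land_half (Nat.mod_lt _ (by positivity))]
  constructor
  · intro h
    simpa using h M hM
  · intro h j _
    by_cases hj : j = M
    · subst hj; simpa using h
    · simp [hj]

lemma cd_const_bound {ν δ : ℕ} (hδ : 0 < δ) {a β g : ℤ} (ha : 0 ≤ a) (hg : 0 ≤ g) (hβ : 2 ≤ β)
    (haβ : a < β) (hgβ : g < β ^ cdN0 ν δ) : |1 + a * β + g| ≤ β ^ (cdN0 ν δ + 1) := by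
  have hn : 2 ≤ cdN0 ν δ := by
    have : 0 < (δ + 1) ^ ν := by positivity
    unfold cdN0; omega
  rw [abs_of_nonneg (by positivity)]
  have h1 : β ^ 2 ≤ β ^ cdN0 ν δ := pow_le_pow_right₀ (by omega) hn
  have h2 : a * β ≤ (β - 1) * β := mul_le_mul_of_nonneg_right (by omega) (by omega)
  have h3 : 2 * β ^ cdN0 ν δ ≤ β * β ^ cdN0 ν δ :=
    mul_le_mul_of_nonneg_right hβ (by positivity)
  rw [pow_succ]
  nlinarith

lemma cd_code_lt {ν δ β : ℕ} (hδ : 0 < δ) (hβ : 0 < β) (z : Fin ν → ℕ) (hz : ∀ i, z i < β) :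
    ∑ i, z i * β ^ ((δ + 1) ^ ((i : ℕ) + 1)) < β ^ cdN0 ν δ := by
  induction ν with
  | zero => simp [cdN0, hβ]
  | succ ν ih =>
    rw [Fin.sum_univ_castSucc]
    have h1 := ih (fun i => z i.castSucc) fun i => hz _
    have h2 : β ^ cdN0 ν δ ≤ β ^ ((δ + 1) ^ (ν + 1)) := by
      refine Nat.pow_le_pow_right hβ ?_
      have : 0 < (δ + 1) ^ ν := by positivity
      unfold cdN0
      rw [pow_succ]
      nlinarith
    have h3 : (z (Fin.last ν) + 1) * β ^ ((δ + 1) ^ (ν + 1)) ≤ β * β ^ ((δ + 1) ^ (ν + 1)) :=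
      Nat.mul_le_mul_right _ (hz _)
    have h4 : β ^ cdN0 (ν + 1) δ = β * β ^ ((δ + 1) ^ (ν + 1)) := by
      unfold cdN0; rw [pow_succ']
    rw [h4]
    simp only [Fin.val_castSucc, Fin.val_last]
    nlinarith

/-- A sufficient size for the constant power of two in the base exists. -/
lemma exists_cd_shift {ν : ℕ} (δ : ℕ) (P : MvPolynomial (Fin (ν + 1)) ℤ) :
    ∃ t : ℕ, 1 ≤ t ∧ ((ν : ℤ) + 2) ^ δ * cdL δ P < 2 ^ t := by
  have hL0 := cdL_nonneg δ P
  refine ⟨(((ν : ℤ) + 2) ^ δ * cdL δ P).toNat + 1, by omega, ?_⟩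
  have h1 : ((((ν : ℤ) + 2) ^ δ * cdL δ P).toNat : ℤ) = ((ν : ℤ) + 2) ^ δ * cdL δ P :=
    Int.toNat_of_nonneg (by positivity)
  have h2 : (((ν : ℤ) + 2) ^ δ * cdL δ P).toNat + 1
      < 2 ^ ((((ν : ℤ) + 2) ^ δ * cdL δ P).toNat + 1) := Nat.lt_two_pow_self
  zify at h2
  omega

lemma cd_h_bounds {δ t b h : ℕ} (hδ : 0 < δ) (ht1 : 1 ≤ t) (hb1 : 1 ≤ b)
    (hh : h = 2 ^ t * b ^ δ) : 2 ≤ h ∧ b ≤ h := by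
  have h1 : 2 ≤ 2 ^ t := by
    calc 2 = 2 ^ 1 := rfl
      _ ≤ _ := Nat.pow_le_pow_right (by norm_num) ht1
  have h2 : b ≤ b ^ δ := Nat.le_self_pow (by omega) b
  rw [hh]
  constructor <;> nlinarith

/-- The encoded value of the polynomial is a natural number with at most `cdN1` digits. -/
lemma cdK_bounds {ν δ : ℕ} (hδ : 0 < δ) (P : MvPolynomial (Fin (ν + 1)) ℤ) {t : ℕ} (ht1 : 1 ≤ t)
    (ht : ((ν : ℤ) + 2) ^ δ * cdL δ P < 2 ^ t) {a b g h : ℕ} (hab : a < b)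
    (hh : h = 2 ^ t * b ^ δ) (hg : g < (2 * h) ^ cdN0 ν δ) :
    0 ≤ cdK δ P (a : ℤ) (h : ℤ) (g : ℤ) ∧
      cdK δ P (a : ℤ) (h : ℤ) (g : ℤ) < (2 * h : ℤ) ^ cdN1 ν δ := by
  have hL0 := cdL_nonneg δ P
  obtain ⟨hh2, hbh⟩ := cd_h_bounds hδ ht1 (by omega) hh
  have hLh : cdL δ P ≤ 2 * h := by
    have h1 : cdL δ P ≤ ((ν : ℤ) + 2) ^ δ * cdL δ P := by
      have : (1 : ℤ) ≤ ((ν : ℤ) + 2) ^ δ := one_le_pow₀ (by omega)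
      nlinarith
    have h2 : (2 : ℤ) ^ t * 1 ≤ 2 ^ t * (b : ℤ) ^ δ := by
      refine mul_le_mul_of_nonneg_left (one_le_pow₀ (by omega)) (by positivity)
    have h3 : (2 : ℤ) ^ t * (b : ℤ) ^ δ = h := by rw [hh]; push_cast; ring
    omega
  have hE : |(1 + (a : ℤ) * (2 * h) + g) ^ δ * cdD δ P (2 * h : ℤ)|
      ≤ (2 * (h : ℤ)) ^ (δ * (cdN0 ν δ + 1) + (δ + 1) ^ (ν + 1) + 1) := by
    rw [abs_mul, abs_pow]
    have h1 := cd_const_bound (ν := ν) hδ (a := a) (β := 2 * h) (g := g) (by omega) (by omega)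
      (by omega) (by omega) (by exact_mod_cast hg)
    have h2 := cdD_abs_le (δ := δ) P (β := 2 * h) (by omega)
    calc |1 + (a : ℤ) * (2 * h) + g| ^ δ * |cdD δ P (2 * h : ℤ)|
        ≤ ((2 * (h : ℤ)) ^ (cdN0 ν δ + 1)) ^ δ
            * (2 * h * (2 * (h : ℤ)) ^ ((δ + 1) ^ (ν + 1))) := by
          refine mul_le_mul (pow_le_pow_left₀ (abs_nonneg _) h1 _) (h2.trans ?_) (abs_nonneg _)
            (by positivity)
          exact mul_le_mul_of_nonneg_right hLh (by positivity)
      _ = _ := by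
          rw [← pow_mul, mul_comm (cdN0 ν δ + 1) δ, pow_succ _ (δ * _ + _),
            pow_add _ (δ * (cdN0 ν δ + 1))]
          ring
  exact cd_shift_bounds (h := h) (by exact_mod_cast hh2) _ hE

lemma cdS_nonneg {ν δ : ℕ} (hδ : 0 < δ) (P : MvPolynomial (Fin (ν + 1)) ℤ) {t : ℕ} (ht1 : 1 ≤ t)
    (ht : ((ν : ℤ) + 2) ^ δ * cdL δ P < 2 ^ t) {a b g h : ℕ} (hab : a < b)
    (hh : h = 2 ^ t * b ^ δ) (hg : g < (2 * h) ^ cdN0 ν δ) :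
    0 ≤ cdS δ P (a : ℤ) (h : ℤ) (g : ℤ) := by
  have h1 := (cdK_bounds hδ P ht1 ht hab hh hg).1
  unfold cdS
  positivity

lemma cdT_nonneg {ν δ b h : ℕ} (hb : b ≤ h) (hh : 1 ≤ h) : 0 ≤ cdT ν δ (b : ℤ) (h : ℤ) := by
  unfold cdT cdMask
  have h1 : (0 : ℤ) ≤ (h : ℤ) - 1 := by omega
  refine add_nonneg (Finset.sum_nonneg fun j _ => mul_nonneg ?_ (by positivity)) (by positivity)
  split_ifs <;> omega

/-- The existence of natural zeros of `P(a, ·)` smaller than `b = 2^e` is expressed by the binary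
disjointness of two numbers built polynomially from `a`, `b` and the code `g`. -/
theorem coding {ν δ : ℕ} (hδ : 0 < δ) (P : MvPolynomial (Fin (ν + 1)) ℤ)
    (hP : P.totalDegree ≤ δ) {t : ℕ} (ht1 : 1 ≤ t)
    (ht : ((ν : ℤ) + 2) ^ δ * cdL δ P < 2 ^ t) {a e g h : ℕ} (hae : a < 2 ^ e)
    (hh : h = 2 ^ t * (2 ^ e) ^ δ) (hg : g < (2 * h) ^ cdN0 ν δ) :
    ∃ S T : ℕ, (S : ℤ) = cdS δ P (a : ℤ) (h : ℤ) (g : ℤ) ∧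
        (T : ℤ) = cdT ν δ ((2 ^ e : ℕ) : ℤ) (h : ℤ) ∧
        S < (2 * h) ^ cdN0 ν δ * (2 * h) ^ cdN1 ν δ ∧
        T < (2 * h) ^ cdN0 ν δ * (2 * h) ^ cdN1 ν δ ∧
        (S &&& T = 0 ↔ ∃ z : Fin ν → ℕ, (∀ i, z i < 2 ^ e) ∧
          g = ∑ i, z i * (2 * h) ^ ((δ + 1) ^ ((i : ℕ) + 1)) ∧
          eval (Fin.cases (a : ℤ) (fun i => (z i : ℤ)) : Fin (ν + 1) → ℤ) P = 0) := by
  classical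
  -- all quantities are powers of two
  obtain ⟨k, hk⟩ : ∃ k, k = t + e * δ := ⟨_, rfl⟩
  have hhk : h = 2 ^ k := by rw [hh, hk, pow_add, pow_mul]
  have hβk : 2 * h = 2 ^ (k + 1) := by rw [hhk]; ring
  have hk1 : 1 ≤ k := by omega
  have hh2 : 2 ≤ h := by
    rw [hhk]; calc 2 = 2 ^ 1 := rfl
      _ ≤ _ := Nat.pow_le_pow_right (by norm_num) hk1
  have hek : e ≤ k + 1 := by nlinarith
  have hbh : 2 ^ e ≤ 2 * h := by rw [hβk]; exact Nat.pow_le_pow_right (by norm_num) hek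
  have hb1 : 1 ≤ 2 ^ e := Nat.one_le_two_pow
  have hth : (2 : ℤ) ^ t * ((2 ^ e : ℕ) : ℤ) ^ δ = h := by rw [hh]; push_cast; ring
  have hKb := cdK_bounds hδ P ht1 ht hae hh hg
  obtain ⟨K, hK⟩ := Int.eq_ofNat_of_zero_le hKb.1
  replace hK : (K : ℤ) = cdK δ P (a : ℤ) (h : ℤ) (g : ℤ) := hK.symm
  have hKlt : K < (2 * h) ^ cdN1 ν δ := by
    have h1 : (K : ℤ) < (2 * h : ℤ) ^ cdN1 ν δ := by rw [hK]; exact hKb.2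
    exact_mod_cast h1
  -- `T₁` acts on the digits of the code, `T₂` on the single decisive place of the encoded value
  obtain ⟨m, hm⟩ : ∃ m : ℕ → ℕ, m = fun j => 2 * h -
    if ∃ i : Fin ν, j = (δ + 1) ^ ((i : ℕ) + 1) then 2 ^ e else 1 := ⟨_, rfl⟩
  obtain ⟨T₁, hT₁⟩ : ∃ T₁, T₁ = ∑ j ∈ Finset.range (cdN0 ν δ), m j * (2 * h) ^ j := ⟨_, rfl⟩
  obtain ⟨T₂, hT₂⟩ : ∃ T₂, T₂ = (h - 1) * (2 * h) ^ ((δ + 1) ^ (ν + 1)) := ⟨_, rfl⟩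
  have hmlt : ∀ j, m j < 2 * h := by
    intro j; rw [hm]; simp only; split_ifs <;> omega
  have hT₁lt : T₁ < (2 * h) ^ cdN0 ν δ := by
    rw [hT₁]; exact sum_digits_lt _ _ fun j _ => hmlt j
  have hMlt : (δ + 1) ^ (ν + 1) < cdN1 ν δ := by unfold cdN1; omega
  have hT₂lt : T₂ < (2 * h) ^ cdN1 ν δ := by
    have h1 : (2 * h) ^ ((δ + 1) ^ (ν + 1) + 1) ≤ (2 * h) ^ cdN1 ν δ :=
      Nat.pow_le_pow_right (by omega) hMlt
    refine lt_of_lt_of_le ?_ h1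
    rw [hT₂, pow_succ, mul_comm]
    exact Nat.mul_lt_mul_of_pos_left (by omega) (by positivity)
  have hT₁c : (T₁ : ℤ) = cdMask ν δ ((2 ^ e : ℕ) : ℤ) (h : ℤ) := by
    rw [hT₁, cdMask]
    push_cast
    refine Finset.sum_congr rfl fun j _ => ?_
    congr 1
    rw [hm]
    simp only
    split_ifs <;> push_cast [hbh, (by omega : 1 ≤ 2 * h)] <;> rfl
  have hT₂c : (T₂ : ℤ) = (h - 1) * (2 * h) ^ ((δ + 1) ^ (ν + 1)) := by
    rw [hT₂]; push_cast [(by omega : 1 ≤ h)]; ring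
  have hblock : ∀ x y : ℕ, x < (2 * h) ^ cdN0 ν δ → y < (2 * h) ^ cdN1 ν δ →
      x + (2 * h) ^ cdN0 ν δ * y < (2 * h) ^ cdN0 ν δ * (2 * h) ^ cdN1 ν δ := by
    intro x y hx hy
    have := Nat.mul_le_mul_left ((2 * h) ^ cdN0 ν δ) hy
    rw [Nat.mul_succ] at this
    omega
  refine ⟨g + (2 * h) ^ cdN0 ν δ * K, T₁ + (2 * h) ^ cdN0 ν δ * T₂, ?_, ?_, hblock _ _ hg hKlt,
    hblock _ _ hT₁lt hT₂lt, ?_⟩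
  · rw [cdS, ← hK]; push_cast; ring
  · rw [cdT, ← hT₁c, ← hT₂c]; push_cast; ring
  have hN0 : (2 * h) ^ cdN0 ν δ = 2 ^ ((k + 1) * cdN0 ν δ) := by rw [hβk, pow_mul]
  have hsplit : (g + (2 * h) ^ cdN0 ν δ * K) &&& (T₁ + (2 * h) ^ cdN0 ν δ * T₂) = 0 ↔
      g &&& T₁ = 0 ∧ K &&& T₂ = 0 := by
    rw [hN0] at hg hT₁lt ⊢
    exact land_block hg hT₁lt
  have hmask : g &&& T₁ = 0 ↔ ∃ z : Fin ν → ℕ, (∀ i, z i < 2 ^ e) ∧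
      g = ∑ i, z i * (2 * h) ^ ((δ + 1) ^ ((i : ℕ) + 1)) := by
    rw [hβk] at hg hT₁ hm ⊢
    refine land_mask hδ hek hg m ?_ ?_ hT₁
    · intro i; rw [hm]; simp only
      rw [if_pos ⟨i, rfl⟩]
    · intro j hj; rw [hm]; simp only
      rw [if_neg hj]
  have hplace : K &&& T₂ = 0 ↔ K / (2 * h) ^ ((δ + 1) ^ (ν + 1)) % (2 * h) = 0 ∨
      K / (2 * h) ^ ((δ + 1) ^ (ν + 1)) % (2 * h) = h := by
    rw [hβk, hhk]
    refine land_place hMlt ?_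
    rw [hT₂, hβk, hhk]
  -- for a genuine code, the decisive digit is `h + δ! * P(a, z)`
  have hdigit : ∀ z : Fin ν → ℕ, (∀ i, z i < 2 ^ e) →
      g = ∑ i, z i * (2 * h) ^ ((δ + 1) ^ ((i : ℕ) + 1)) →
      (K &&& T₂ = 0 ↔
        eval (Fin.cases (a : ℤ) (fun i => (z i : ℤ)) : Fin (ν + 1) → ℤ) P = 0) := by
    intro z hz hgz
    obtain ⟨u, hu⟩ : ∃ u : Fin (ν + 1) → ℤ, u = Fin.cases (a : ℤ) (fun i => (z i : ℤ)) :=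
      ⟨_, rfl⟩
    have hu0 : ∀ i, 0 ≤ u i := by
      intro i; rw [hu]
      refine Fin.cases ?_ (fun i => ?_) i <;> simp
    have hub : ∀ i, u i ≤ ((2 ^ e : ℕ) : ℤ) := by
      intro i; rw [hu]
      refine Fin.cases ?_ (fun i => ?_) i
      · simp only [Fin.cases_zero]; exact_mod_cast hae.le
      · simp only [Fin.cases_succ]; exact_mod_cast (hz i).le
    have hcode : (1 + (a : ℤ) * (2 * h) + g) = 1 + ∑ i, u i * (2 * (h : ℤ)) ^ ((δ + 1) ^ (i : ℕ)) := by
      rw [Fin.sum_univ_succ, hgz, hu]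
      simp only [Fin.cases_zero, Fin.cases_succ, Fin.val_zero, pow_zero, pow_one, Fin.val_succ]
      push_cast
      ring
    have habs : ∑ x ∈ cdIdx δ P, |cdCf δ P u x| < (h : ℤ) := by
      refine lt_of_le_of_lt (cd_sum_abs u _ (by exact_mod_cast hb1) hu0 hub) ?_
      rw [mul_pow, ← hth]
      have hpos : (0 : ℤ) < ((2 ^ e : ℕ) : ℤ) ^ δ := by positivity
      calc ((ν : ℤ) + 2) ^ δ * ((2 ^ e : ℕ) : ℤ) ^ δ * cdL δ P
          = (((ν : ℤ) + 2) ^ δ * cdL δ P) * ((2 ^ e : ℕ) : ℤ) ^ δ := by ring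
        _ < _ := mul_lt_mul_of_pos_right ht hpos
    have hKs : (K : ℤ) = ∑ x ∈ cdIdx δ P, cdCf δ P u x * (2 * h : ℤ) ^ cdEx δ x
        + h * ∑ j ∈ Finset.range (cdN1 ν δ), (2 * h : ℤ) ^ j := by
      rw [hK, cdK, hcode, cd_expand]
    have hex : ∀ x ∈ cdIdx δ P, cdEx δ x < cdN1 ν δ := by
      intro x hx
      have h1 := cdEx_lt hx
      have h2 : δ * (δ + 1) ^ ν ≤ δ * (cdN0 ν δ + 1) :=
        Nat.mul_le_mul_left _ (by unfold cdN0; omega)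
      unfold cdN1; omega
    have hdig := digit_shifted _ _ _ _ h K hex habs hKs _ hMlt
    rw [cd_fiber hP] at hdig
    rw [hplace, ← hu]
    have hfac : ((Nat.factorial δ : ℕ) : ℤ) ≠ 0 := by exact_mod_cast Nat.factorial_ne_zero δ
    constructor
    · rintro (h0 | h0)
      · omega
      · rw [h0] at hdig
        have := hdig.2
        have h3 : ((Nat.factorial δ : ℕ) : ℤ) * eval u P = 0 := by linarith
        exact (mul_eq_zero.mp h3).resolve_left hfac
    · intro h0
      right
      rw [h0, mul_zero, zero_add] at hdig
      exact_mod_cast hdig.2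
  rw [hsplit, hmask]
  constructor
  · rintro ⟨⟨z, hz, hgz⟩, h2⟩
    exact ⟨z, hz, hgz, (hdigit z hz hgz).mp h2⟩
  · rintro ⟨z, hz, hgz, h2⟩
    exact ⟨⟨z, hz, hgz⟩, (hdigit z hz hgz).mpr h2⟩

/-! ### The final polynomial and its zeros -/

/-- A square which exceeds `a` as soon as `f ≠ 0`, and which represents arbitrarily large powers
of four. -/
def mB {R : Type*} [CommRing R] (a f : R) : R := (1 + 3 * (2 * a + 1) * f) ^ 2

/-- Half of the base of the positional code. -/
def mH {R : Type*} [CommRing R] (t δ : ℕ) (a f : R) : R := 2 ^ t * mB a f ^ δ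

/-- A strict upper bound for the two numbers of the disjointness test, a power of the base. -/
def mN {R : Type*} [CommRing R] (ν δ : ℕ) (h : R) : R := (2 * h) ^ cdN0 ν δ * (2 * h) ^ cdN1 ν δ

/-- The number `X` for which `N ^ 2 ∣ (2 X).choose X` expresses the binary disjointness of `S`
and `T`. -/
def mX {R : Type*} [CommRing R] (N S T : R) : R := (N - 1) * ((S + T + 1) * N + T + 1)

/-- Positivity forces `f`, `l`, `x` to be nonzero, `0 ≤ g < M` and `2 |C - Z| < |K|`; it is implied
by these conditions with the stronger inequality `2 M |C - Z| < |K|`. -/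
def mPos {R : Type*} [CommRing R] (f g l x M C K Z : R) : R :=
  f ^ 2 * l ^ 2 * x ^ 2 * ((g + 1) * (M - g) * K ^ 2 - 4 * M ^ 2 * (C - Z) ^ 2)

/-- The combination of all conditions for given `X`, `Y`, `b`, and `M`. -/
def mComb {R : Type*} [CommRing R] (X Y b M f g v k l w x y n : R) : R :=
  combine (pDFI (brA l w X Y) (2 * X + 1) (brC l w v X Y) x y)
    ((brc l w X Y ^ 2 - 1) * brK l w k X Y ^ 2 + 1)
    (4 * brA l w X Y - 5) (brT b l w v X Y)
    (mPos f g l x M (brC l w v X Y) (brK l w k X Y) (l * Y * brK l w k X Y)) n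

/-- The final polynomial expression, with one natural unknown `n`. -/
noncomputable def master {R : Type*} [CommRing R] {ν : ℕ} (t δ : ℕ)
    (P : MvPolynomial (Fin (ν + 1)) ℤ) (a f g v k l w x y n : R) : R :=
  mComb (mX (mN ν δ (mH t δ a f)) (cdS δ P a (mH t δ a f) g) (cdT ν δ (mB a f) (mH t δ a f)))
    (mN ν δ (mH t δ a f) ^ 2) (mB a f) ((2 * mH t δ a f) ^ cdN0 ν δ) f g v k l w x y n

/-- The product `(g + 1) (M - g)` is positive only for `0 ≤ g < M`, and then it is at most `M²`. -/
lemma mPos_pos {f g l x M C K Z : ℤ} (hM : 1 ≤ M) (h : 0 < mPos f g l x M C K Z) :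
    f ≠ 0 ∧ l ≠ 0 ∧ x ≠ 0 ∧ 0 ≤ g ∧ g < M ∧ 2 * |C - Z| < |K| := by
  unfold mPos at h
  have hf : f ≠ 0 := by rintro rfl; simp at h
  have hl : l ≠ 0 := by rintro rfl; simp at h
  have hx : x ≠ 0 := by rintro rfl; simp at h
  have h1 : 0 < (g + 1) * (M - g) * K ^ 2 - 4 * M ^ 2 * (C - Z) ^ 2 :=
    pos_of_mul_pos_right h (by positivity)
  have h2 : 0 < (g + 1) * (M - g) * K ^ 2 := by
    have : 0 ≤ 4 * M ^ 2 * (C - Z) ^ 2 := by positivity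
    linarith
  have h3 : 0 < (g + 1) * (M - g) := pos_of_mul_pos_left h2 (sq_nonneg K)
  obtain ⟨hg0, hgM⟩ : 0 ≤ g ∧ g < M := by
    rcases mul_pos_iff.mp h3 with ⟨p, q⟩ | ⟨p, q⟩ <;> omega
  refine ⟨hf, hl, hx, hg0, hgM, ?_⟩
  have h4 : (g + 1) * (M - g) ≤ M ^ 2 := by
    rw [sq]; exact mul_le_mul (by omega) (by omega) (by omega) (by omega)
  have h5 : (g + 1) * (M - g) * K ^ 2 ≤ M ^ 2 * K ^ 2 :=
    mul_le_mul_of_nonneg_right h4 (sq_nonneg K)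
  have h6 : M ^ 2 * (2 * (C - Z)) ^ 2 < M ^ 2 * K ^ 2 := by nlinarith
  have h7 : (2 * (C - Z)) ^ 2 < K ^ 2 := lt_of_mul_lt_mul_left h6 (sq_nonneg M)
  have h8 := sq_lt_sq.mp h7
  rwa [abs_mul, abs_of_pos (by norm_num : (0 : ℤ) < 2)] at h8

/-- Here `(g + 1) (M - g)` is only known to be at least `1`, so that the quotient `C / K` has to be
approximated with the higher precision `1 / (2 M)`. -/
lemma mPos_of {f g l x M C K Z : ℤ} (hf : f ≠ 0) (hl : l ≠ 0) (hx : x ≠ 0) (hg : 0 ≤ g)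
    (hgM : g < M) (h : 2 * M * |C - Z| < |K|) : 0 < mPos f g l x M C K Z := by
  have h1 : (2 * M * (C - Z)) ^ 2 < K ^ 2 := by
    rw [sq_lt_sq, abs_mul, abs_of_nonneg (by omega : 0 ≤ 2 * M)]
    exact h
  have h2 : 1 ≤ (g + 1) * (M - g) := by
    have := mul_pos (by omega : 0 < g + 1) (by omega : 0 < M - g)
    omega
  have h3 : K ^ 2 ≤ (g + 1) * (M - g) * K ^ 2 := le_mul_of_one_le_left (sq_nonneg K) h2
  unfold mPos
  refine mul_pos (by positivity) ?_
  nlinarith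

/-- The divisor `4 brA - 5` is odd, hence nonzero. -/
lemma mComb_iff (X Y b M f g v k l w x y : ℤ) :
    (∃ n : ℕ, mComb X Y b M f g v k l w x y (n : ℤ) = 0) ↔
      IsSquare (pDFI (brA l w X Y) (2 * X + 1) (brC l w v X Y) x y) ∧
      IsSquare ((brc l w X Y ^ 2 - 1) * brK l w k X Y ^ 2 + 1) ∧
      4 * brA l w X Y - 5 ∣ brT b l w v X Y ∧
      0 < mPos f g l x M (brC l w v X Y) (brK l w k X Y) (l * Y * brK l w k X Y) :=
  combine_iff (by omega)

lemma mB_bounds {a : ℕ} {f : ℤ} (hf : f ≠ 0) :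
    ∃ b : ℕ, (b : ℤ) = mB (a : ℤ) f ∧ a < b ∧ 4 ≤ b := by
  refine ⟨(mB (a : ℤ) f).toNat, Int.toNat_of_nonneg (sq_nonneg _), ?_⟩
  have h0 : ((mB (a : ℤ) f).toNat : ℤ) = mB (a : ℤ) f := Int.toNat_of_nonneg (sq_nonneg _)
  have h1 : ((a : ℤ) + 2) ^ 2 ≤ mB (a : ℤ) f := by
    unfold mB
    apply sq_le_sq.mpr
    rw [abs_of_nonneg (by positivity)]
    rcases lt_or_gt_of_ne hf with h | h
    · rw [abs_of_nonpos] <;> nlinarith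
    · rw [abs_of_nonneg] <;> nlinarith
  have ha : (0 : ℤ) ≤ a := by positivity
  constructor <;> zify <;> nlinarith

/-- Arbitrarily large powers of four are values of `mB a`. -/
lemma exists_mB (a m : ℕ) : ∃ (f : ℤ) (e : ℕ), f ≠ 0 ∧ mB (a : ℤ) f = 4 ^ e ∧ m < 4 ^ e := by
  have hcop : Nat.Coprime 2 (3 * (2 * a + 1)) := by
    rw [Nat.coprime_two_left, Nat.odd_iff]; omega
  obtain ⟨e, he⟩ : ∃ e, e = Nat.totient (3 * (2 * a + 1)) * (m + 1) := ⟨_, rfl⟩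
  have htot : 0 < Nat.totient (3 * (2 * a + 1)) := Nat.totient_pos.mpr (by omega)
  have hme : m + 1 ≤ e := by rw [he]; exact Nat.le_mul_of_pos_left _ htot
  have hmod : 1 ≡ 2 ^ e [MOD 3 * (2 * a + 1)] := by
    have := (Nat.ModEq.pow_totient hcop).pow (m + 1)
    rw [one_pow, ← pow_mul, ← he] at this
    exact this.symm
  obtain ⟨f, hf⟩ := (Nat.modEq_iff_dvd.mp hmod)
  have h2e : m + 1 < 2 ^ e := lt_of_le_of_lt hme Nat.lt_two_pow_self
  push_cast at hf
  refine ⟨f, e, ?_, ?_, ?_⟩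
  · rintro rfl
    zify at h2e
    rw [mul_zero] at hf
    omega
  · have h1 : 1 + 3 * (2 * (a : ℤ) + 1) * f = 2 ^ e := by linarith
    rw [mB, h1, ← pow_mul, mul_comm e 2, pow_mul]; norm_num
  · have : 2 ^ e ≤ 4 ^ e := Nat.pow_le_pow_left (by norm_num) e
    omega

lemma base_pow_bounds {ν δ h : ℕ} (hh : 2 ≤ h) :
    4 * h ≤ (2 * h) ^ cdN1 ν δ ∧ 1 ≤ (2 * h) ^ cdN0 ν δ := by
  refine ⟨?_, Nat.one_le_pow _ _ (by omega)⟩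
  have h1 : (2 * h) ^ 2 ≤ (2 * h) ^ cdN1 ν δ :=
    Nat.pow_le_pow_right (by omega) (by unfold cdN1; omega)
  nlinarith

lemma mX_cast {N S T : ℕ} (hN : 1 ≤ N) :
    (((N - 1) * ((S + T + 1) * N + T + 1) : ℕ) : ℤ) = mX (N : ℤ) (S : ℤ) (T : ℤ) := by
  unfold mX; push_cast [hN]; ring

lemma mX_ge {N S T : ℕ} (hN : 8 ≤ N) : N ≤ (N - 1) * ((S + T + 1) * N + T + 1) := by
  have h1 : 1 * N ≤ (S + T + 1) * N := Nat.mul_le_mul_right _ (by omega)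
  have h2 : 1 * N ≤ (N - 1) * ((S + T + 1) * N + T + 1) := Nat.mul_le_mul (by omega) (by omega)
  omega

/-- A zero of the final polynomial yields a natural zero of `P(a, ·)`. The divisor `b ∣ 2^(2X+1)` is
a power of two, so the base `2h` and the bound `N` are powers of two as well, and
`dvd_central_iff_land` and `coding` apply. -/
theorem master_backward {ν δ : ℕ} (hδ : 0 < δ) (P : MvPolynomial (Fin (ν + 1)) ℤ)
    (hP : P.totalDegree ≤ δ) {t : ℕ} (ht1 : 1 ≤ t)
    (ht : ((ν : ℤ) + 2) ^ δ * cdL δ P < 2 ^ t) (a : ℕ) {f g v k l w x y : ℤ}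
    (hn : ∃ n : ℕ, master t δ P (a : ℤ) f g v k l w x y (n : ℤ) = 0) :
    ∃ z : Fin ν → ℕ, eval (Fin.cases (a : ℤ) (fun i => (z i : ℤ)) : Fin (ν + 1) → ℤ) P = 0 := by
  unfold master at hn
  rw [mComb_iff] at hn
  obtain ⟨hA₁, hA₂, hdvd, hpos⟩ := hn
  have hf : f ≠ 0 := by rintro rfl; simp [mPos] at hpos
  obtain ⟨b, hb, hab, hb4⟩ := mB_bounds (a := a) hf
  obtain ⟨h, hh⟩ : ∃ h : ℕ, h = 2 ^ t * b ^ δ := ⟨_, rfl⟩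
  have hhc : (h : ℤ) = mH t δ (a : ℤ) f := by rw [hh, mH, ← hb]; push_cast; ring
  obtain ⟨hh2, hbh⟩ := cd_h_bounds hδ ht1 (by omega) hh
  obtain ⟨hs1, hs0⟩ := base_pow_bounds (ν := ν) (δ := δ) hh2
  rw [← hhc, ← hb] at hA₁ hA₂ hdvd hpos
  obtain ⟨-, hl, hx, hg0, hgM, hCK⟩ := mPos_pos (by exact_mod_cast hs0) hpos
  obtain ⟨g, rfl⟩ := Int.eq_ofNat_of_zero_le hg0
  have hg : g < (2 * h) ^ cdN0 ν δ := by exact_mod_cast hgM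
  obtain ⟨S, hS⟩ := Int.eq_ofNat_of_zero_le (cdS_nonneg hδ P ht1 ht hab hh hg)
  obtain ⟨T, hT⟩ := Int.eq_ofNat_of_zero_le (cdT_nonneg (ν := ν) (δ := δ) hbh (by omega))
  obtain ⟨N, hN⟩ : ∃ N : ℕ, N = (2 * h) ^ cdN0 ν δ * (2 * h) ^ cdN1 ν δ := ⟨_, rfl⟩
  have hNc : (N : ℤ) = mN ν δ (h : ℤ) := by rw [hN, mN]; push_cast; ring
  have hNh : 4 * h ≤ N := by
    rw [hN]; exact le_trans hs1 (Nat.le_mul_of_pos_left _ hs0)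
  have hXN := mX_ge (N := N) (S := S) (T := T) (by omega)
  have hXc := mX_cast (N := N) (S := S) (T := T) (by omega)
  have hNN : 8 * N ≤ N ^ 2 := by rw [sq]; exact Nat.mul_le_mul_right _ (by omega)
  rw [hS, hT, ← hNc, ← hXc, ← Nat.cast_pow] at hA₁ hA₂ hdvd hCK
  obtain ⟨hbp, hch⟩ := bridge_backward (by omega) (by omega) (by omega) hl hx hA₁ hA₂ hdvd hCK
  obtain ⟨e, -, rfl⟩ := (Nat.dvd_prime_pow Nat.prime_two).mp hbp
  obtain ⟨S', T', hS', hT', hSlt, hTlt, hiff⟩ := coding hδ P hP ht1 ht hab hh hg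
  rw [hS, Nat.cast_inj] at hS'
  rw [hT, Nat.cast_inj] at hT'
  subst hS' hT'
  have hN2 : N = 2 ^ ((t + e * δ + 1) * (cdN0 ν δ + cdN1 ν δ)) := by
    have : 2 * h = 2 ^ (t + e * δ + 1) := by rw [hh]; ring
    rw [hN, this, ← pow_add, ← pow_mul]
  rw [← hN] at hSlt hTlt
  rw [dvd_central_iff_land hN2 hSlt hTlt] at hch
  obtain ⟨z, -, -, hz⟩ := hiff.mp hch
  exact ⟨z, hz⟩

/-- A natural zero `z` of `P(a, ·)` yields a zero of the final polynomial: choose `b` a power of four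
exceeding `a` and all `z i`, let `g` be the code of `z`, and take the remaining unknowns from
`bridge_forward`. -/
theorem master_forward {ν δ : ℕ} (hδ : 0 < δ) (P : MvPolynomial (Fin (ν + 1)) ℤ)
    (hP : P.totalDegree ≤ δ) {t : ℕ} (ht1 : 1 ≤ t)
    (ht : ((ν : ℤ) + 2) ^ δ * cdL δ P < 2 ^ t) (a : ℕ) (z : Fin ν → ℕ)
    (hz : eval (Fin.cases (a : ℤ) (fun i => (z i : ℤ)) : Fin (ν + 1) → ℤ) P = 0) :
    ∃ f g v k l w x y : ℤ, ∃ n : ℕ, master t δ P (a : ℤ) f g v k l w x y (n : ℤ) = 0 := by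
  obtain ⟨f, e, hf, hbf, hbig⟩ := exists_mB a (a + ∑ i, z i)
  have hzb : ∀ i, z i < 4 ^ e := by
    intro i
    have := Finset.single_le_sum (f := z) (fun _ _ => Nat.zero_le _) (Finset.mem_univ i)
    omega
  have h42 : (4 : ℕ) ^ e = 2 ^ (2 * e) := by rw [pow_mul]; norm_num
  obtain ⟨h, hh⟩ : ∃ h : ℕ, h = 2 ^ t * (2 ^ (2 * e)) ^ δ := ⟨_, rfl⟩
  obtain ⟨hh2, hbh⟩ := cd_h_bounds hδ ht1 (Nat.one_le_two_pow) hh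
  obtain ⟨hs1, hs0⟩ := base_pow_bounds (ν := ν) (δ := δ) hh2
  have hb : ((2 ^ (2 * e) : ℕ) : ℤ) = mB (a : ℤ) f := by rw [hbf, ← h42]; push_cast; rfl
  have hhc : (h : ℤ) = mH t δ (a : ℤ) f := by rw [hh, mH, ← hb]; push_cast; ring
  obtain ⟨g, hgd⟩ : ∃ g, g = ∑ i, z i * (2 * h) ^ ((δ + 1) ^ ((i : ℕ) + 1)) := ⟨_, rfl⟩
  have hg : g < (2 * h) ^ cdN0 ν δ := by
    rw [hgd]
    exact cd_code_lt hδ (by omega) z fun i => by have := hzb i; omega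
  obtain ⟨S, T, hS, hT, hSlt, hTlt, hiff⟩ := coding hδ P hP ht1 ht
    (show a < 2 ^ (2 * e) by omega) hh hg
  have hST : S &&& T = 0 := hiff.mpr ⟨z, fun i => by have := hzb i; omega, hgd, hz⟩
  obtain ⟨N, hN⟩ : ∃ N : ℕ, N = (2 * h) ^ cdN0 ν δ * (2 * h) ^ cdN1 ν δ := ⟨_, rfl⟩
  have hNc : (N : ℤ) = mN ν δ (h : ℤ) := by rw [hN, mN]; push_cast; ring
  have hNh : 4 * h ≤ N := by
    rw [hN]; exact le_trans hs1 (Nat.le_mul_of_pos_left _ hs0)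
  have hN2 : N = 2 ^ ((t + 2 * e * δ + 1) * (cdN0 ν δ + cdN1 ν δ)) := by
    have : 2 * h = 2 ^ (t + 2 * e * δ + 1) := by rw [hh]; ring
    rw [hN, this, ← pow_add, ← pow_mul]
  rw [← hN] at hSlt hTlt
  have hch := (dvd_central_iff_land hN2 hSlt hTlt).mpr hST
  have hXN := mX_ge (N := N) (S := S) (T := T) (by omega)
  have hXc := mX_cast (N := N) (S := S) (T := T) (by omega)
  have hNN : 8 * N ≤ N ^ 2 := by rw [sq]; exact Nat.mul_le_mul_right _ (by omega)
  have hYM : 4 * 2 ^ (2 * e) * (2 * h) ^ cdN0 ν δ ≤ N ^ 2 := by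
    have h1 : 4 * 2 ^ (2 * e) * (2 * h) ^ cdN0 ν δ ≤ N := by
      rw [hN, mul_comm]
      exact Nat.mul_le_mul_left _ (by omega)
    omega
  have heb : e < 4 ^ e := Nat.lt_pow_self (by norm_num)
  obtain ⟨l, w, v, k, x, y, hl, hx, hA₁, hA₂, hdvd, hCK⟩ := bridge_forward
    (X := (N - 1) * ((S + T + 1) * N + T + 1)) (Y := N ^ 2) (e := e) (by omega) (by omega)
    h42.symm (by omega) hs0 hYM hch
  refine ⟨f, g, v, k, l, w, x, y, ?_⟩
  unfold master
  rw [mComb_iff, ← hhc, ← hb, ← hS, ← hT, ← hNc, ← hXc, ← Nat.cast_pow]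
  refine ⟨hA₁, hA₂, hdvd, mPos_of hf hl hx (by omega) (by exact_mod_cast hg) ?_⟩
  push_cast at hCK ⊢
  exact hCK

/-! ### Naturality of the construction -/

section Naturality

variable {R S : Type*} [CommRing R] [CommRing S] (φ : R →+* S)

lemma map_pDFI (a B C x y : R) : φ (pDFI a B C x y) = pDFI (φ a) (φ B) (φ C) (φ x) (φ y) := by
  have hD : ∀ a C, φ (pD a C) = pD (φ a) (φ C) := fun a C => by simp [pD]
  have hE : ∀ a C x, φ (pE a C x) = pE (φ a) (φ C) (φ x) := fun a C x => by simp [map_ofNat, pE, hD]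
  have hF : ∀ a C x, φ (pF a C x) = pF (φ a) (φ C) (φ x) := fun a C x => by simp [pF, hE]
  have hG : ∀ a C x, φ (pG a C x) = pG (φ a) (φ C) (φ x) := fun a C x => by simp [map_ofNat, pG, hD, hF]
  have hH : ∀ a B C x y, φ (pH a B C x y) = pH (φ a) (φ B) (φ C) (φ x) (φ y) :=
    fun a B C x y => by simp [map_ofNat, pH, hF]
  simp [pDFI, pI, hD, hF, hG, hH]

lemma map_combine (A₁ A₂ S' T P n : R) :
    φ (combine A₁ A₂ S' T P n) = combine (φ A₁) (φ A₂) (φ S') (φ T) (φ P) (φ n) := by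
  simp only [combine, map_add, map_sub, map_mul, map_pow, map_one, map_ofNat]

lemma map_brA (l w X Y : R) : φ (brA l w X Y) = brA (φ l) (φ w) (φ X) (φ Y) := by simp [map_ofNat, brA]

lemma map_brc (l w X Y : R) : φ (brc l w X Y) = brc (φ l) (φ w) (φ X) (φ Y) := by simp [map_ofNat, brc]

lemma map_brC (l w h X Y : R) : φ (brC l w h X Y) = brC (φ l) (φ w) (φ h) (φ X) (φ Y) := by
  simp [map_ofNat, brC, map_brA]

lemma map_brK (l w k X Y : R) : φ (brK l w k X Y) = brK (φ l) (φ w) (φ k) (φ X) (φ Y) := by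
  simp [brK, map_brc]

lemma map_brT (b l w h X Y : R) :
    φ (brT b l w h X Y) = brT (φ b) (φ l) (φ w) (φ h) (φ X) (φ Y) := by
  simp [map_ofNat, brT, map_brC]

lemma map_mComb (X Y b M f g v k l w x y n : R) : φ (mComb X Y b M f g v k l w x y n) =
    mComb (φ X) (φ Y) (φ b) (φ M) (φ f) (φ g) (φ v) (φ k) (φ l) (φ w) (φ x) (φ y) (φ n) := by
  simp only [mComb, map_combine, map_pDFI, map_brA, map_brc, map_brC, map_brK, map_brT, mPos,
    map_add, map_sub, map_mul, map_pow, map_one, map_ofNat]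

lemma map_mN (ν δ : ℕ) (h : R) : φ (mN ν δ h) = mN ν δ (φ h) := by simp [map_ofNat, mN]

lemma map_mB (a f : R) : φ (mB a f) = mB (φ a) (φ f) := by simp [map_ofNat, mB]

lemma map_mH (t δ : ℕ) (a f : R) : φ (mH t δ a f) = mH t δ (φ a) (φ f) := by simp [map_ofNat, mH, map_mB]

lemma map_cdS {ν : ℕ} (δ : ℕ) (P : MvPolynomial (Fin (ν + 1)) ℤ) (a h g : R) :
    φ (cdS δ P a h g) = cdS δ P (φ a) (φ h) (φ g) := by
  simp [map_ofNat, cdS, cdK, cdD]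

lemma map_cdT (ν δ : ℕ) (b h : R) : φ (cdT ν δ b h) = cdT ν δ (φ b) (φ h) := by
  simp only [cdT, cdMask, map_add, map_sub, map_mul, map_pow, map_one, map_ofNat, map_sum,
    apply_ite φ]

lemma map_mX (N S' T : R) : φ (mX N S' T) = mX (φ N) (φ S') (φ T) := by simp [mX]

lemma map_master {ν : ℕ} (t δ : ℕ) (P : MvPolynomial (Fin (ν + 1)) ℤ)
    (a f g v k l w x y n : R) : φ (master t δ P a f g v k l w x y n) =
      master t δ P (φ a) (φ f) (φ g) (φ v) (φ k) (φ l) (φ w) (φ x) (φ y) (φ n) := by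
  simp only [master, map_mComb, map_mX, map_mN, map_cdS, map_cdT, map_mB, map_mH, map_mul,
    map_pow, map_ofNat]

end Naturality

/-! ### Degree bounds -/

section Degree

variable {σ : Type*}

lemma deg_add {p q : MvPolynomial σ ℤ} {m n : ℕ} (hp : p.totalDegree ≤ m) (hq : q.totalDegree ≤ n) :
    (p + q).totalDegree ≤ max m n :=
  (totalDegree_add p q).trans (max_le_max hp hq)

lemma deg_sub {p q : MvPolynomial σ ℤ} {m n : ℕ} (hp : p.totalDegree ≤ m) (hq : q.totalDegree ≤ n) :
    (p - q).totalDegree ≤ max m n :=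
  (totalDegree_sub p q).trans (max_le_max hp hq)

lemma deg_mul {p q : MvPolynomial σ ℤ} {m n : ℕ} (hp : p.totalDegree ≤ m) (hq : q.totalDegree ≤ n) :
    (p * q).totalDegree ≤ m + n :=
  (totalDegree_mul p q).trans (Nat.add_le_add hp hq)

lemma deg_pow {p : MvPolynomial σ ℤ} {m : ℕ} (hp : p.totalDegree ≤ m) (k : ℕ) :
    (p ^ k).totalDegree ≤ k * m :=
  (totalDegree_pow p k).trans (Nat.mul_le_mul_left k hp)

lemma deg_num (n : ℕ) [n.AtLeastTwo] : (OfNat.ofNat n : MvPolynomial σ ℤ).totalDegree ≤ 0 := by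
  rw [← map_ofNat (C : ℤ →+* MvPolynomial σ ℤ), totalDegree_C]

lemma deg_one : (1 : MvPolynomial σ ℤ).totalDegree ≤ 0 := by rw [totalDegree_one]

lemma deg_int (n : ℤ) : ((n : ℤ) : MvPolynomial σ ℤ).totalDegree ≤ 0 := by
  rw [← map_intCast (C : ℤ →+* MvPolynomial σ ℤ), totalDegree_C]

lemma deg_sum {ι : Type*} (s : Finset ι) (p : ι → MvPolynomial σ ℤ) (d : ℕ)
    (h : ∀ i ∈ s, (p i).totalDegree ≤ d) : (∑ i ∈ s, p i).totalDegree ≤ d :=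
  totalDegree_finsetSum_le h

lemma deg_pDFI {a B C x y : MvPolynomial σ ℤ} {α : ℕ} (ha : a.totalDegree ≤ α) (hB : B.totalDegree ≤ α + 1)
    (hC : C.totalDegree ≤ α + 1) (hx : x.totalDegree ≤ 1) (hy : y.totalDegree ≤ 1) :
    (pDFI a B C x y).totalDegree ≤ 88 * α + 64 := by
  have hD : (pD a C).totalDegree ≤ 4 * α + 2 :=
    (deg_add (deg_mul (deg_sub (deg_pow ha 2) deg_one) (deg_pow hC 2)) deg_one).trans (by omega)
  have hE : (pE a C x).totalDegree ≤ 6 * α + 5 :=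
    (deg_mul (deg_mul (deg_mul (deg_num 2) (deg_pow hC 2)) hD) hx).trans (by omega)
  have hF : (pF a C x).totalDegree ≤ 14 * α + 10 :=
    (deg_add (deg_mul (deg_sub (deg_pow ha 2) deg_one) (deg_pow hE 2)) deg_one).trans (by omega)
  have hG : (pG a C x).totalDegree ≤ 20 * α + 14 :=
    (deg_add ha (deg_mul hF (deg_sub (deg_add (deg_mul (deg_mul (deg_num 2) (deg_pow hC 2)) hD)
      deg_one) ha))).trans (by omega)
  have hH : (pH a B C x y).totalDegree ≤ 15 * α + 12 :=
    (deg_add hC (deg_mul (deg_add hB (deg_mul (deg_sub (deg_mul (deg_num 2) hy) deg_one) hC))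
      hF)).trans (by omega)
  have hI : (pI a B C x y).totalDegree ≤ 70 * α + 52 :=
    (deg_add (deg_mul (deg_sub (deg_pow hG 2) deg_one) (deg_pow hH 2)) deg_one).trans (by omega)
  exact (deg_mul (deg_mul hD hF) hI).trans (by omega)

lemma deg_combine {A₁ A₂ S T P n : MvPolynomial σ ℤ} {d s p : ℕ} (hA₁ : A₁.totalDegree ≤ d)
    (hA₂ : A₂.totalDegree ≤ d) (hS : S.totalDegree ≤ s) (hT : T.totalDegree ≤ s + 7)
    (hP : P.totalDegree ≤ p) (hn : n.totalDegree ≤ 2) (hd : 2 * s + 14 ≤ 4 * d) :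
    (combine A₁ A₂ S T P n).totalDegree ≤ 4 * (2 * s + p + 4 * d) := by
  have hX : ((1 + A₁ ^ 2 + A₂ ^ 2) ^ 2).totalDegree ≤ 4 * d :=
    (deg_pow (deg_add (deg_add deg_one (deg_pow hA₁ 2)) (deg_pow hA₂ 2)) 2).trans (by omega)
  have hW : (S ^ 2 * (2 * P - 1)).totalDegree ≤ 2 * s + p :=
    (deg_mul (deg_pow hS 2) (deg_sub (deg_mul (deg_num 2) hP) deg_one)).trans (by omega)
  have hV : (S ^ 2 * n + T ^ 2
      - S ^ 2 * (2 * P - 1) * (T ^ 2 + (1 + A₁ ^ 2 + A₂ ^ 2) ^ 2)).totalDegree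
      ≤ 2 * s + p + 4 * d :=
    (deg_sub (deg_add (deg_mul (deg_pow hS 2) hn) (deg_pow hT 2))
      (deg_mul hW (deg_add (deg_pow hT 2) hX))).trans (by omega)
  have h1 : ((S ^ 2 * (2 * P - 1)) ^ 2 * A₁).totalDegree ≤ 4 * s + 2 * p + d :=
    (deg_mul (deg_pow hW 2) hA₁).trans (by omega)
  have h2 : ((S ^ 2 * (2 * P - 1)) ^ 2 * A₂ * (1 + A₁ ^ 2 + A₂ ^ 2) ^ 2).totalDegree
      ≤ 4 * s + 2 * p + 5 * d :=
    (deg_mul (deg_mul (deg_pow hW 2) hA₂) hX).trans (by omega)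
  exact (deg_add (deg_sub (deg_pow hV 4) (deg_mul (deg_mul (deg_num 2) (deg_add h1 h2))
    (deg_pow hV 2))) (deg_pow (deg_sub h1 h2) 2)).trans (by omega)

lemma deg_mComb {X Y b M f g v k l w x y n : MvPolynomial σ ℤ} {α c N : ℕ} (hα : α = 4 + 7 * N) (hN : 4 ≤ N)
    (hX : X.totalDegree ≤ 3 * N) (hY : Y.totalDegree ≤ 2 * N) (hb : b.totalDegree ≤ 4)
    (hM : M.totalDegree ≤ c) (hf : f.totalDegree ≤ 1) (hg : g.totalDegree ≤ 1)
    (hv : v.totalDegree ≤ 1) (hk : k.totalDegree ≤ 1) (hl : l.totalDegree ≤ 1)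
    (hw : w.totalDegree ≤ 1) (hx : x.totalDegree ≤ 1) (hy : y.totalDegree ≤ 1)
    (hn : n.totalDegree ≤ 2) (hc : 1 ≤ c) :
    (mComb X Y b M f g v k l w x y n).totalDegree ≤ 4 * (358 * α + 2 * c + 262) := by
  have hA : (brA l w X Y).totalDegree ≤ α :=
    (deg_mul (deg_mul (deg_mul (deg_pow hl 2) hX) hY) (deg_add (deg_mul (deg_mul (deg_num 8)
      (deg_pow hw 2)) hY) deg_one)).trans (by omega)
  have hB : (2 * X + 1).totalDegree ≤ α + 1 :=
    (deg_add (deg_mul (deg_num 2) hX) deg_one).trans (by omega)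
  have hC : (brC l w v X Y).totalDegree ≤ α + 1 :=
    (deg_add (deg_add (deg_mul (deg_num 2) hX) deg_one) (deg_mul (deg_sub hA deg_one)
      hv)).trans (by omega)
  have hc' : (brc l w X Y).totalDegree ≤ 6 + 12 * N :=
    (deg_mul (deg_mul (deg_mul (deg_mul (deg_num 2) (deg_pow hl 4)) (deg_pow hX 2)) (deg_pow hY 2))
      (deg_mul (deg_mul (deg_num 8) (deg_pow hw 2)) hY)).trans (by omega)
  have hK : (brK l w k X Y).totalDegree ≤ 7 + 12 * N :=
    (deg_add (deg_add hX deg_one) (deg_mul (deg_sub hc' deg_one) hk)).trans (by omega)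
  have hu : (2 * b * w ^ 2).totalDegree ≤ 6 :=
    (deg_mul (deg_mul (deg_num 2) hb) (deg_pow hw 2)).trans (by omega)
  have hT : (brT b l w v X Y).totalDegree ≤ α + 7 :=
    (deg_sub (deg_mul (deg_mul (deg_num 3) hu) hC) (deg_mul (deg_num 2)
      (deg_sub (deg_pow hu 2) deg_one))).trans (by omega)
  have hS : (4 * brA l w X Y - 5).totalDegree ≤ α :=
    (deg_sub (deg_mul (deg_num 4) hA) (deg_num 5)).trans (by omega)
  have hP : (mPos f g l x M (brC l w v X Y) (brK l w k X Y) (l * Y * brK l w k X Y)).totalDegree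
      ≤ 6 + 2 * c + 4 * α :=
    (deg_mul (deg_mul (deg_mul (deg_pow hf 2) (deg_pow hl 2)) (deg_pow hx 2))
      (deg_sub (deg_mul (deg_mul (deg_add hg deg_one) (deg_sub hM hg)) (deg_pow hK 2))
        (deg_mul (deg_mul (deg_num 4) (deg_pow hM 2))
          (deg_pow (deg_sub hC (deg_mul (deg_mul hl hY) hK)) 2)))).trans (by omega)
  have hA₂ : ((brc l w X Y ^ 2 - 1) * brK l w k X Y ^ 2 + 1).totalDegree ≤ 88 * α + 64 :=
    (deg_add (deg_mul (deg_sub (deg_pow hc' 2) deg_one) (deg_pow hK 2)) deg_one).trans (by omega)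
  exact (deg_combine (deg_pDFI hA hB hC hx hy) hA₂ hS hT hP hn (by omega)).trans (by omega)

lemma deg_cdS {ν δ d : ℕ} (P : MvPolynomial (Fin (ν + 1)) ℤ) {a h g : MvPolynomial σ ℤ} (hd : 1 ≤ d)
    (ha : a.totalDegree ≤ 1) (hh : h.totalDegree ≤ d) (hg : g.totalDegree ≤ 1) :
    (cdS δ P a h g).totalDegree ≤ (cdN0 ν δ + cdN1 ν δ) * d := by
  have hβ : (2 * h).totalDegree ≤ d := (deg_mul (deg_num 2) hh).trans (by omega)
  have hc : ((1 + a * (2 * h) + g) ^ δ).totalDegree ≤ δ * (cdN0 ν δ + 1) * d := by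
    have h1 : (1 + a * (2 * h) + g).totalDegree ≤ 2 * d :=
      (deg_add (deg_add deg_one (deg_mul ha hβ)) hg).trans (by omega)
    have h2 : 2 * d ≤ (cdN0 ν δ + 1) * d := Nat.mul_le_mul_right _ (by unfold cdN0; omega)
    rw [mul_assoc]
    exact deg_pow (h1.trans h2) δ
  have hD : (cdD δ P (2 * h)).totalDegree ≤ (δ + 1) ^ (ν + 1) * d := by
    refine deg_sum _ _ _ fun m _ => ?_
    refine (deg_mul (deg_int _) (deg_pow hβ _)).trans ?_
    rw [zero_add]
    exact Nat.mul_le_mul_right _ (by omega)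
  have hG : (∑ j ∈ Finset.range (cdN1 ν δ), (2 * h) ^ j).totalDegree ≤ (cdN1 ν δ - 1) * d := by
    refine deg_sum _ _ _ fun j hj => (deg_pow hβ j).trans (Nat.mul_le_mul_right _ ?_)
    have := Finset.mem_range.mp hj
    omega
  have hK : (cdK δ P a h g).totalDegree ≤ cdN1 ν δ * d := by
    refine (deg_add (deg_mul hc hD) (deg_mul hh hG)).trans (max_le ?_ ?_)
    · rw [← add_mul]
      exact Nat.mul_le_mul_right _ (by unfold cdN1; omega)
    · have : cdN1 ν δ = 1 + (cdN1 ν δ - 1) := by unfold cdN1; omega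
      conv_rhs => rw [this, add_mul, one_mul]
  refine (deg_add hg (deg_mul (deg_pow hβ _) hK)).trans (max_le ?_ ?_)
  · exact hd.trans (Nat.le_mul_of_pos_left _ (by unfold cdN0; omega))
  · rw [add_mul]

lemma deg_cdT {ν δ d : ℕ} {b h : MvPolynomial σ ℤ} (hb : b.totalDegree ≤ d) (hh : h.totalDegree ≤ d) :
    (cdT ν δ b h).totalDegree ≤ (cdN0 ν δ + cdN1 ν δ) * d := by
  have hβ : (2 * h).totalDegree ≤ d := (deg_mul (deg_num 2) hh).trans (by omega)
  have hm : (cdMask ν δ b h).totalDegree ≤ cdN0 ν δ * d := by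
    refine deg_sum _ _ _ fun j hj => ?_
    have h1 : (j + 1) * d ≤ cdN0 ν δ * d := Nat.mul_le_mul_right _ (Finset.mem_range.mp hj)
    refine (deg_mul (m := d) ?_ (deg_pow hβ j)).trans (by linarith)
    split_ifs
    · exact (deg_sub hβ hb).trans (by omega)
    · exact (deg_sub hβ deg_one).trans (by omega)
  refine (deg_add hm (deg_mul (deg_pow hβ _) (deg_mul (deg_sub hh deg_one)
    (deg_pow hβ _)))).trans (max_le ?_ ?_)
  · exact Nat.mul_le_mul_right _ (by omega)
  · have h1 : (cdN0 ν δ + (1 + (δ + 1) ^ (ν + 1))) * d ≤ (cdN0 ν δ + cdN1 ν δ) * d :=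
      Nat.mul_le_mul_right _ (by unfold cdN1; omega)
    refine le_trans (le_of_eq ?_) h1
    rw [max_eq_left (Nat.zero_le d)]
    ring

/-- The degree of the final polynomial. The base `2h` has degree at most `4 δ`, so `N`, `S` and `T`
have degree at most `D = 4 δ (cdN0 + cdN1)`; everything else is a polynomial in these. -/
lemma deg_master {ν δ t : ℕ} (hδ : 0 < δ) (P : MvPolynomial (Fin (ν + 1)) ℤ)
    {a f g v k l w x y n : MvPolynomial σ ℤ} (ha : a.totalDegree ≤ 1) (hf : f.totalDegree ≤ 1)
    (hg : g.totalDegree ≤ 1) (hv : v.totalDegree ≤ 1) (hk : k.totalDegree ≤ 1)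
    (hl : l.totalDegree ≤ 1) (hw : w.totalDegree ≤ 1) (hx : x.totalDegree ≤ 1)
    (hy : y.totalDegree ≤ 1) (hn : n.totalDegree ≤ 2) :
    (master t δ P a f g v k l w x y n).totalDegree
      ≤ 6776 + 40128 * δ * (cdN0 ν δ + cdN1 ν δ) := by
  have hb : (mB a f).totalDegree ≤ 4 :=
    (deg_pow (deg_add deg_one (deg_mul (deg_mul (deg_num 3) (deg_add (deg_mul (deg_num 2) ha)
      deg_one)) hf)) 2).trans (by omega)
  have hh : (mH t δ a f).totalDegree ≤ 4 * δ := by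
    have h1 := deg_mul (deg_pow (deg_num (σ := σ) 2) t) (deg_pow hb δ)
    exact h1.trans (by rw [mul_zero, zero_add, mul_comm])
  have hβ : (2 * mH t δ a f).totalDegree ≤ 4 * δ := (deg_mul (deg_num 2) hh).trans (by omega)
  obtain ⟨D, hD⟩ : ∃ D, D = (cdN0 ν δ + cdN1 ν δ) * (4 * δ) := ⟨_, rfl⟩
  have hN : (mN ν δ (mH t δ a f)).totalDegree ≤ D := by
    rw [hD, add_mul]
    exact deg_mul (deg_pow hβ _) (deg_pow hβ _)
  have hS : (cdS δ P a (mH t δ a f) g).totalDegree ≤ D := by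
    rw [hD]; exact deg_cdS P (by omega) ha hh hg
  have hT : (cdT ν δ (mB a f) (mH t δ a f)).totalDegree ≤ D := by
    rw [hD]; exact deg_cdT (hb.trans (by omega)) hh
  have hX : (mX (mN ν δ (mH t δ a f)) (cdS δ P a (mH t δ a f) g)
      (cdT ν δ (mB a f) (mH t δ a f))).totalDegree ≤ 3 * D :=
    (deg_mul (deg_sub hN deg_one) (deg_add (deg_add (deg_mul (deg_add (deg_add hS hT) deg_one) hN)
      hT) deg_one)).trans (by omega)
  have hM : ((2 * mH t δ a f) ^ cdN0 ν δ).totalDegree ≤ D := by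
    refine (deg_pow hβ _).trans ?_
    rw [hD]
    exact Nat.mul_le_mul_right _ (by omega)
  have hD4 : 4 ≤ D := by
    rw [hD]
    have : 1 * 4 ≤ (cdN0 ν δ + cdN1 ν δ) * (4 * δ) :=
      Nat.mul_le_mul (by unfold cdN0; omega) (by omega)
    omega
  have h1 := deg_mComb rfl hD4 hX (deg_pow hN 2) hb hM hf hg hv hk hl hw hx hy hn (by omega)
  refine le_trans (le_of_le_of_eq h1 ?_) (le_refl (6776 + 10032 * D)) |>.trans (le_of_eq ?_)
  · ring
  · rw [hD]; ring

end Degree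

/-! ### The eleven unknowns -/

/-- Comparison with the stated bound: `cdN0 + cdN1 = 2 (δ+1)^(ν+1) + 2 δ + 4`. -/
lemma le_eta (ν δ : ℕ) : 6776 + 40128 * δ * (cdN0 ν δ + cdN1 ν δ) ≤ eta ν δ := by
  have h1 : cdN0 ν δ + cdN1 ν δ = 2 * (δ + 1) ^ (ν + 1) + 2 * δ + 4 := by
    unfold cdN1 cdN0; ring
  have h2 : (δ + 1) ^ (ν + 1) ≤ (2 * δ + 1) ^ (ν + 1) := Nat.pow_le_pow_left (by omega) _
  have h3 : 1 ≤ (2 * δ + 1) ^ (ν + 1) := Nat.one_le_pow _ _ (by omega)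
  rw [h1, eta]
  have h4 : δ * (δ + 1) ^ (ν + 1) ≤ δ * (2 * δ + 1) ^ (ν + 1) := Nat.mul_le_mul_left _ h2
  have h5 : δ ^ 2 * 1 ≤ δ ^ 2 * (2 * δ + 1) ^ (ν + 1) := Nat.mul_le_mul_left _ h3
  nlinarith

theorem eleven_unknowns_degree_bound (ν δ : ℕ) (hδ : 0 < δ)
    (P : MvPolynomial (Fin (ν + 1)) ℤ) (hP : P.totalDegree ≤ δ) :
    ∃ Q : MvPolynomial (Fin 12) ℤ, Q.totalDegree ≤ eta ν δ ∧ ∀ a : ℕ,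
      (∃ z : Fin ν → ℕ,
          eval (Fin.cases (a : ℤ) (fun i => (z i : ℤ)) : Fin (ν + 1) → ℤ) P = 0) ↔
      (∃ z : Fin 11 → ℤ, eval (Fin.cases (a : ℤ) z : Fin 12 → ℤ) Q = 0) := by
  obtain ⟨t, ht1, ht⟩ := exists_cd_shift δ P
  -- the natural unknown of `master` is replaced by a quadratic form in the last three unknowns
  refine ⟨master t δ P (X 0) (X 1) (X 2) (X 3) (X 4) (X 5) (X 6) (X 7) (X 8)
    (X 9 ^ 2 + X 9 + X 10 ^ 2 + X 10 + X 11 ^ 2), ?_, fun a => ?_⟩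
  · have hX : ∀ i : Fin 12, (X i : MvPolynomial (Fin 12) ℤ).totalDegree ≤ 1 :=
      fun i => (totalDegree_X i).le
    refine le_trans (deg_master hδ P (hX _) (hX _) (hX _) (hX _) (hX _) (hX _) (hX _) (hX _)
      (hX _) ?_) (le_eta ν δ)
    exact (deg_add (deg_add (deg_add (deg_add (deg_pow (hX 9) 2) (hX 9)) (deg_pow (hX 10) 2))
      (hX 10)) (deg_pow (hX 11) 2)).trans (by omega)
  have heval : ∀ z : Fin 11 → ℤ, eval (Fin.cases (a : ℤ) z : Fin 12 → ℤ)
      (master t δ P (X 0) (X 1) (X 2) (X 3) (X 4) (X 5) (X 6) (X 7) (X 8)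
        (X 9 ^ 2 + X 9 + X 10 ^ 2 + X 10 + X 11 ^ 2)) =
      master t δ P (a : ℤ) (z 0) (z 1) (z 2) (z 3) (z 4) (z 5) (z 6) (z 7)
        (z 8 ^ 2 + z 8 + z 9 ^ 2 + z 9 + z 10 ^ 2) := by
    intro z
    rw [map_master]
    simp only [eval_X, map_add, map_pow]
    rfl
  constructor
  · rintro ⟨z, hz⟩
    obtain ⟨f, g, v, k, l, w, x, y, n, hn⟩ := master_forward hδ P hP ht1 ht a z hz
    obtain ⟨p, q, r, hpqr⟩ := exists_three_of_nat n
    refine ⟨![f, g, v, k, l, w, x, y, p, q, r], ?_⟩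
    rw [heval, ← hn, hpqr]
    rfl
  · rintro ⟨z, hz⟩
    rw [heval] at hz
    -- `u² + u` is never negative on the integers
    have hnn : 0 ≤ z 8 ^ 2 + z 8 + z 9 ^ 2 + z 9 + z 10 ^ 2 := by
      have h : ∀ u : ℤ, 0 ≤ u ^ 2 + u := fun u => by
        rcases le_or_gt 0 u with h | h <;> nlinarith
      have := h (z 8)
      have := h (z 9)
      nlinarith [sq_nonneg (z 10)]
    obtain ⟨n, hn⟩ := Int.eq_ofNat_of_zero_le hnn
    rw [hn] at hz
    exact master_backward hδ P hP ht1 ht a ⟨n, hz⟩
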